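/- arXiv:2403.16589 — 5 statements merged into one kernel-verified Lean document; each statement's English description precedes it below -/
import Mathlib

section
/- There exists N₀ such that for every finite abelian group G of order N ≥ N₀, the number of subsets S ⊆ G that can be expressed as a union of two sumsets (i.e., S = (A+A) ∪ (B+B) for some A, B ⊆ G) is at most 2^(N − N/200). -/
open Pointwise

lemma two_sumsets_card_small (G : Type) [Fintype G] [DecidableEq G] (a : ℕ) :
    (((Finset.univ : Finset (Finset G)).filter
      (fun A => (A.card : ℝ) ≤ (Fintype.card G : ℝ) / 2 ^ a)).card : ℝ) ≤
      2 ^ (((a : ℝ) + 2) / 2 ^ a * (Fintype.card G : ℝ)) := by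
  set N : ℝ := (Fintype.card G : ℝ) with hN
  have hsum : ∑ A : Finset G, ((1 / 2 ^ a : ℝ)) ^ A.card = (1 / 2 ^ a + 1) ^ (Fintype.card G) := by
    have := Fintype.sum_pow_mul_eq_add_pow G (1 / 2 ^ a : ℝ) 1
    simpa using this
  have hK : (0 : ℝ) < 2 ^ a := by positivity
  have hlow : ∀ A ∈ (Finset.univ : Finset (Finset G)).filter
      (fun A => (A.card : ℝ) ≤ N / 2 ^ a),
      (2 : ℝ) ^ (-(a * (N / 2 ^ a))) ≤ ((1 / 2 ^ a : ℝ)) ^ A.card := by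
    intro A hA
    have hA' : (A.card : ℝ) ≤ N / 2 ^ a := (Finset.mem_filter.1 hA).2
    have : ((1 / 2 ^ a : ℝ)) ^ A.card = (2 : ℝ) ^ (-((a : ℝ) * A.card)) := by
      rw [Real.rpow_neg (by norm_num), Real.rpow_mul (by norm_num), Real.rpow_natCast,
        Real.rpow_natCast, one_div, inv_pow]
    rw [this]
    apply Real.rpow_le_rpow_of_exponent_le (by norm_num)
    have : (a : ℝ) * A.card ≤ a * (N / 2 ^ a) := by gcongr
    linarith
  have h1 := Finset.card_nsmul_le_sum _ _ _ hlow
  have h2 : ∑ A ∈ (Finset.univ : Finset (Finset G)).filter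
      (fun A => (A.card : ℝ) ≤ N / 2 ^ a), ((1 / 2 ^ a : ℝ)) ^ A.card ≤
      (1 / 2 ^ a + 1) ^ (Fintype.card G) := by
    rw [← hsum]
    apply Finset.sum_le_sum_of_subset_of_nonneg (Finset.subset_univ _)
    intros; positivity
  have h3 : ((1 / 2 ^ a + 1 : ℝ)) ^ (Fintype.card G) ≤ 2 ^ (2 / 2 ^ a * N) := by
    have e1 : (1 / 2 ^ a + 1 : ℝ) ≤ 2 ^ ((2 : ℝ) / 2 ^ a) := by
      calc (1 / 2 ^ a + 1 : ℝ) ≤ Real.exp (1 / 2 ^ a) := Real.add_one_le_exp _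
        _ = Real.exp 1 ^ ((1 : ℝ) / 2 ^ a) := by rw [← Real.exp_mul]; simp
        _ ≤ (2 ^ (2 : ℝ)) ^ ((1 : ℝ) / 2 ^ a) := by
            apply Real.rpow_le_rpow (Real.exp_pos _).le _ (by positivity)
            have := Real.exp_one_lt_d9
            norm_num
            linarith
        _ = _ := by rw [← Real.rpow_mul (by norm_num)]; congr 1; ring
    rw [Real.rpow_mul (by norm_num), hN, Real.rpow_natCast]
    gcongr
  rw [nsmul_eq_mul] at h1
  have h4 := (h1.trans h2).trans h3
  rw [Real.rpow_neg (by norm_num), ← div_eq_mul_inv, div_le_iff₀ (by positivity),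
    ← Real.rpow_add (by norm_num)] at h4
  have e : ((a : ℝ) + 2) / 2 ^ a * N = 2 / 2 ^ a * N + a * (N / 2 ^ a) := by ring
  rw [e]
  exact h4

lemma two_sumsets_greedy {G : Type} [AddCommGroup G] [DecidableEq G] (A X : Finset G)
    (hA : A.Nonempty) (n : ℕ) :
    ∃ F ⊆ A, F.card ≤ n ∧ (A.card ≤ 2 * (F + X).card ∨ n * X.card ≤ 2 * (F + X).card) := by
  induction n with
  | zero => exact ⟨∅, by simp, by simp, by simp⟩
  | succ n ih =>
    obtain ⟨F, hFA, hFn, h⟩ := ih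
    by_cases hU : A.card ≤ 2 * (F + X).card
    · exact ⟨F, hFA, by omega, Or.inl hU⟩
    have h := h.resolve_left hU
    push Not at hU
    set U := F + X with hUdef
    have key : ∃ f ∈ A, 2 * (({f} + X) ∩ U).card ≤ X.card := by
      by_contra! hcon
      have hs : ∑ f ∈ A, (({f} + X) ∩ U).card ≤ X.card * U.card := by
        calc ∑ f ∈ A, (({f} + X) ∩ U).card
            ≤ ∑ f ∈ A, (X.filter (fun x => f + x ∈ U)).card := by
              apply Finset.sum_le_sum
              intro f _
              have : ({f} + X) ∩ U ⊆ (X.filter (fun x => f + x ∈ U)).image (fun x => f + x) := by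
                intro y hy
                simp only [Finset.mem_inter, Finset.mem_add, Finset.mem_singleton] at hy
                obtain ⟨⟨b, rfl, x, hx, rfl⟩, hy⟩ := hy
                exact Finset.mem_image.2 ⟨x, Finset.mem_filter.2 ⟨hx, hy⟩, rfl⟩
              exact (Finset.card_le_card this).trans Finset.card_image_le
          _ = ∑ x ∈ X, (A.filter (fun f => f + x ∈ U)).card := by
              simp only [Finset.card_filter]
              exact Finset.sum_comm
          _ ≤ ∑ x ∈ X, U.card := by
              apply Finset.sum_le_sum
              intro x _
              apply Finset.card_le_card_of_injOn (fun f => f + x)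
              · intro f hf
                simpa using (Finset.mem_filter.1 hf).2
              · intro f _ g _ hfg
                simpa using hfg
          _ = X.card * U.card := by simp
      have hs2 : A.card * (X.card + 1) ≤ ∑ f ∈ A, 2 * (({f} + X) ∩ U).card := by
        rw [← smul_eq_mul]
        exact Finset.card_nsmul_le_sum _ _ _ (fun f hf => hcon f hf)
      rw [← Finset.mul_sum] at hs2
      have := hA.card_pos
      nlinarith
    obtain ⟨f, hf, hfX⟩ := key
    refine ⟨insert f F, Finset.insert_subset hf hFA, (Finset.card_insert_le _ _).trans (by omega),
      Or.inr ?_⟩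
    have e : insert f F + X = ({f} + X) ∪ U := by
      rw [Finset.insert_eq, Finset.union_add]
    have c1 := Finset.card_union_add_card_inter ({f} + X) U
    have c2 : ({f} + X).card = X.card := by simp
    rw [e, add_mul]
    omega

lemma two_sumsets_fingerprint {G : Type} [AddCommGroup G] [Fintype G] [DecidableEq G]
    (hN : 2 ^ 24 ≤ Fintype.card G) (A : Finset G) (hA : Fintype.card G ≤ 16 * A.card) :
    ∃ D ⊆ A, 1024 * D.card ≤ Fintype.card G ∧ Fintype.card G ≤ 32 * (D + D).card := by
  obtain ⟨X, hXA, hX⟩ := Finset.exists_subset_card_eq (s := A) (n := 4096) (by omega)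
  obtain ⟨F, hFA, hFn, hF⟩ := two_sumsets_greedy A X
    (Finset.card_pos.1 (by omega)) (A.card / 4096 + 1)
  have hle := Finset.card_le_univ A
  have h1 : A.card ≤ 2 * (F + X).card := by
    rcases hF with h | h
    · exact h
    · rw [hX] at h; omega
  have h2 : (F + X).card ≤ ((F ∪ X) + (F ∪ X)).card :=
    Finset.card_le_card (Finset.add_subset_add Finset.subset_union_left Finset.subset_union_right)
  have h3 := Finset.card_union_le F X
  refine ⟨F ∪ X, Finset.union_subset hFA hXA, ?_, ?_⟩
  · omega
  · omega

/-- There exists `N₀` such that for every finite abelian group `G` of order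
`N ≥ N₀`, the number of subsets of `G` expressible as a union of two sumsets
is at most `2^(N − N/200)`. -/
theorem count_unions_of_two_sumsets :
    ∃ N₀ : ℕ, ∀ (G : Type) [AddCommGroup G] [Fintype G] [DecidableEq G],
      N₀ ≤ Fintype.card G →
      ({S : Finset G | ∃ A B : Finset G, S = (A + A) ∪ (B + B)}.ncard : ℝ) ≤
        2 ^ ((Fintype.card G : ℝ) - (Fintype.card G : ℝ) / 200) := by
  refine ⟨2 ^ 24, ?_⟩
  intro G _ _ _ hN
  set N : ℝ := (Fintype.card G : ℝ) with hNdef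
  have hN' : (2 : ℝ) ^ 24 ≤ N := by rw [hNdef]; exact_mod_cast hN
  set P := (Finset.univ : Finset (Finset G)).filter (fun A => (A.card : ℝ) ≤ N / 2 ^ 4) with hP
  set Q := (Finset.univ : Finset (Finset G)).filter (fun A => (A.card : ℝ) ≤ N / 2 ^ 10) with hQ
  set Q' := Q.filter (fun D => Fintype.card G ≤ 32 * (D + D).card) with hQ'
  set R1 := (P ×ˢ P).image (fun p => (p.1 + p.1) ∪ (p.2 + p.2)) with hR1
  set R2 := Q'.biUnion (fun D => Finset.Icc (D + D) Finset.univ) with hR2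
  have big : ∀ A S : Finset G, A ∉ P → A + A ⊆ S → S ∈ R2 := by
    intro A S hA hS
    have hA' : N / 2 ^ 4 < A.card := by
      by_contra! h
      exact hA (Finset.mem_filter.2 ⟨Finset.mem_univ _, h⟩)
    have hA2 : Fintype.card G ≤ 16 * A.card := by
      have : N ≤ 16 * A.card := by norm_num at hA'; linarith
      rw [hNdef] at this
      exact_mod_cast this
    obtain ⟨D, hDA, hD1, hD2⟩ := two_sumsets_fingerprint hN A hA2
    refine Finset.mem_biUnion.2 ⟨D, Finset.mem_filter.2 ⟨Finset.mem_filter.2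
      ⟨Finset.mem_univ _, ?_⟩, hD2⟩, Finset.mem_Icc.2 ⟨?_, Finset.subset_univ _⟩⟩
    · have : (1024 : ℝ) * D.card ≤ N := by rw [hNdef]; exact_mod_cast hD1
      norm_num
      linarith
    · exact (Finset.add_subset_add hDA hDA).trans hS
  have hsub : {S : Finset G | ∃ A B : Finset G, S = (A + A) ∪ (B + B)} ⊆
      ((R1 ∪ R2 : Finset (Finset G)) : Set (Finset G)) := by
    rintro S ⟨A, B, rfl⟩
    rw [Finset.mem_coe, Finset.mem_union]
    by_cases hA : A ∈ P
    · by_cases hB : B ∈ P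
      · left
        exact Finset.mem_image.2 ⟨(A, B), Finset.mem_product.2 ⟨hA, hB⟩, rfl⟩
      · right
        exact big B _ hB Finset.subset_union_right
    · right
      exact big A _ hA Finset.subset_union_left
  have hcard : ({S : Finset G | ∃ A B : Finset G, S = (A + A) ∪ (B + B)}.ncard : ℝ) ≤
      (R1.card : ℝ) + R2.card := by
    have h1 := Set.ncard_le_ncard hsub (Finset.finite_toSet _)
    rw [Set.ncard_coe_finset] at h1
    exact_mod_cast h1.trans (Finset.card_union_le _ _)
  have hPc := two_sumsets_card_small G 4
  have hQc := two_sumsets_card_small G 10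
  rw [← hNdef, ← hP] at hPc
  rw [← hNdef, ← hQ] at hQc
  have b1 : (R1.card : ℝ) ≤ 2 ^ (N - N / 100) := by
    have h1 : (R1.card : ℝ) ≤ P.card * P.card := by
      have := Finset.card_image_le (s := P ×ˢ P) (f := fun p => (p.1 + p.1) ∪ (p.2 + p.2))
      rw [Finset.card_product] at this
      exact_mod_cast this
    refine h1.trans ((mul_le_mul hPc hPc (by positivity) (by positivity)).trans ?_)
    rw [← Real.rpow_add (by norm_num)]
    apply Real.rpow_le_rpow_of_exponent_le (by norm_num)
    norm_num
    linarith
  have b2 : (R2.card : ℝ) ≤ 2 ^ (N - N / 100) := by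
    have h1 : (R2.card : ℝ) ≤ Q.card * 2 ^ (N - N / 32) := by
      have h2 : (R2.card : ℝ) ≤ ∑ D ∈ Q', ((Finset.Icc (D + D) Finset.univ).card : ℝ) := by
        exact_mod_cast Finset.card_biUnion_le
      refine h2.trans ?_
      have h3 : ∀ D ∈ Q', ((Finset.Icc (D + D) Finset.univ).card : ℝ) ≤ 2 ^ (N - N / 32) := by
        intro D hD
        have hD2 := (Finset.mem_filter.1 hD).2
        rw [Finset.card_Icc_finset (Finset.subset_univ _), Finset.card_univ]
        push_cast
        rw [← Real.rpow_natCast]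
        apply Real.rpow_le_rpow_of_exponent_le (by norm_num)
        rw [Nat.cast_sub (Finset.card_le_univ _)]
        have : N ≤ 32 * ((D + D).card : ℝ) := by rw [hNdef]; exact_mod_cast hD2
        linarith
      refine (Finset.sum_le_card_nsmul _ _ _ h3).trans ?_
      rw [nsmul_eq_mul]
      have : (Q'.card : ℝ) ≤ Q.card := by exact_mod_cast Finset.card_filter_le _ _
      gcongr
    refine h1.trans ((mul_le_mul_of_nonneg_right hQc (by positivity)).trans ?_)
    rw [← Real.rpow_add (by norm_num)]
    apply Real.rpow_le_rpow_of_exponent_le (by norm_num)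
    norm_num
    linarith
  calc _ ≤ (R1.card : ℝ) + R2.card := hcard
    _ ≤ 2 ^ (1 : ℝ) * 2 ^ (N - N / 100) := by rw [Real.rpow_one]; linarith
    _ = 2 ^ (1 + (N - N / 100)) := by rw [← Real.rpow_add (by norm_num)]
    _ ≤ _ := by
      apply Real.rpow_le_rpow_of_exponent_le (by norm_num)
      norm_num at hN'
      linarith
end

section
/- Let G be an abelian group and let A be a nonempty finite subset of G. Then there exists a subset A' ⊆ A with |A'|² ≥ |A| (i.e., |A'| ≥ √|A|) such that A' has many sums, namely |A'+A'| ≥ |A'|²/4. -/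
open Pointwise

theorem greedy_step {G : Type*} [AddCommGroup G] [DecidableEq G]
    (A S : Finset G) (hS : S ⊆ A) (k : ℕ) (hk : 1 ≤ k) (hc : S.card = k) (hn : k ^ 2 < A.card)
    (h : k ^ 2 ≤ 4 * (S + S).card) :
    ∃ T ⊆ A, T.card = k + 1 ∧ (k + 1) ^ 2 ≤ 4 * (T + T).card := by
  have hD : (A \ S).card + k = A.card := by
    rw [← hc]; exact Finset.card_sdiff_add_card_eq_card hS
  have hpos : 0 < (A \ S).card := by nlinarith
  have hne : (A \ S).Nonempty := Finset.card_pos.mp hpos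
  have hsum : ∑ x ∈ A \ S, (S.filter (fun s => x + s ∈ S + S)).card ≤ k * (S + S).card := by
    have := Finset.sum_card_bipartiteAbove_eq_sum_card_bipartiteBelow
      (s := A \ S) (t := S) (fun x s => x + s ∈ S + S)
    simp only [Finset.bipartiteAbove, Finset.bipartiteBelow] at this
    rw [this, ← hc, ← smul_eq_mul]
    apply Finset.sum_le_card_nsmul
    intro s _
    apply Finset.card_le_card_of_injOn (fun x => x + s)
    · intro x hx
      exact (Finset.mem_filter.mp hx).2
    · intro x _ y _ hxy
      exact add_right_cancel hxy
  obtain ⟨x, hx, hxc⟩ : ∃ x ∈ A \ S,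
      (A \ S).card * (S.filter (fun s => x + s ∈ S + S)).card ≤ k * (S + S).card := by
    by_contra! hcon
    have h1 := Finset.sum_lt_sum_of_nonempty hne hcon
    rw [Finset.sum_const, smul_eq_mul, ← Finset.mul_sum] at h1
    have := Nat.lt_of_mul_lt_mul_left h1
    omega
  rw [Finset.mem_sdiff] at hx
  refine ⟨insert x S, Finset.insert_subset hx.1 hS, by rw [Finset.card_insert_of_notMem hx.2, hc], ?_⟩
  have hnew : (S + S).card + (S.filter (fun s => ¬ x + s ∈ S + S)).card
      ≤ (insert x S + insert x S).card := by
    rw [← Finset.card_image_of_injective (S.filter (fun s => ¬ x + s ∈ S + S))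
      (add_right_injective x), ← Finset.card_union_of_disjoint]
    · apply Finset.card_le_card
      apply Finset.union_subset
      · exact Finset.add_subset_add (Finset.subset_insert _ _) (Finset.subset_insert _ _)
      · intro y hy
        obtain ⟨s, hs, rfl⟩ := Finset.mem_image.mp hy
        exact Finset.add_mem_add (Finset.mem_insert_self _ _)
          (Finset.mem_insert_of_mem (Finset.mem_filter.mp hs).1)
    · rw [Finset.disjoint_right]
      intro y hy
      obtain ⟨s, hs, rfl⟩ := Finset.mem_image.mp hy
      exact (Finset.mem_filter.mp hs).2
  have hsplit := Finset.card_filter_add_card_filter_not (s := S) (fun s => x + s ∈ S + S)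
  rw [hc] at hsplit
  generalize (S.filter (fun s => x + s ∈ S + S)).card = c at *
  generalize (S.filter (fun s => ¬ x + s ∈ S + S)).card = e at *
  generalize (insert x S + insert x S).card = f' at *
  generalize (S + S).card = f at *
  generalize (A \ S).card = D at *
  have hDk : k ^ 2 + 1 ≤ D + k := by omega
  clear hsum hn hD
  zify at *
  by_contra! hlt
  have h1 : (D:ℤ) * (4 * (f + (k - c))) < D * (k + 1) ^ 2 :=
    mul_lt_mul_of_pos_left (by linarith) hpos
  have h2 : (0:ℤ) ≤ D - k := by nlinarith [sq_nonneg ((k:ℤ) - 1)]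
  have h3 := mul_le_mul_of_nonneg_left h h2
  have h4 : (0:ℤ) ≤ (2 * k - 1) * (D + k - (k ^ 2 + 1)) :=
    mul_nonneg (by linarith) (by linarith)
  have h5 : (0:ℤ) ≤ (k - 1) ^ 3 := pow_nonneg (by linarith) 3
  nlinarith

theorem greedy {G : Type*} [AddCommGroup G] [DecidableEq G]
    (A : Finset G) (k : ℕ) (hn : k ^ 2 < A.card) :
    ∃ T ⊆ A, T.card = k + 1 ∧ (k + 1) ^ 2 ≤ 4 * (T + T).card := by
  induction k with
  | zero =>
    obtain ⟨a, ha⟩ : A.Nonempty := Finset.card_pos.mp (by omega)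
    exact ⟨{a}, by simpa using ha, by simp, by simp⟩
  | succ k ih =>
    obtain ⟨S, hS, hc, h⟩ := ih (lt_of_le_of_lt (Nat.pow_le_pow_left (Nat.le_succ k) 2) hn)
    exact greedy_step A S hS (k + 1) (by omega) hc hn h

/-- Every nonempty finite subset `A` of an abelian group contains a subset `A'`
with `|A'| ≥ √|A|` that has many sums: `|A' + A'| ≥ |A'|²/4`. -/
theorem exists_subset_with_many_sums
    {G : Type*} [AddCommGroup G] [DecidableEq G]
    (A : Finset G) (hA : A.Nonempty) :
    ∃ A' ⊆ A, A.card ≤ A'.card ^ 2 ∧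
      (A'.card ^ 2 : ℝ) / 4 ≤ ((A' + A').card : ℝ) := by
  have hpos := Finset.card_pos.mpr hA
  have h1 := Nat.sqrt_le' (A.card - 1)
  have h2 := Nat.lt_succ_sqrt' (A.card - 1)
  obtain ⟨T, hT, hc, h⟩ := greedy A (Nat.sqrt (A.card - 1)) (by omega)
  refine ⟨T, hT, ?_, ?_⟩
  · rw [hc]
    simp only [Nat.succ_eq_add_one] at h2
    omega
  · rw [← hc] at h
    have h' : ((T.card : ℝ)) ^ 2 ≤ 4 * ((T + T).card : ℝ) := by exact_mod_cast h
    linarith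
end

section
/- Let G be a finite abelian group of order N and let s be an integer with s ≥ 64·(log₂ N)². Then the number of subsets S ⊆ G for which there exists a set A ⊆ G of size |A| = s with A+A ⊆ S is at most 2^(N − s/8). Equivalently, a uniformly random subset S of G contains the sumset of some s-element set with probability at most 2^(−s/8). -/
open Pointwise

lemma css_step {G : Type} [AddCommGroup G] [DecidableEq G] (A F : Finset G)
    (hA : A.Nonempty) (h : 4 * (F + F).card < A.card) :
    ∃ a ∈ A, (F.Nonempty → a ∉ F) ∧
      4 * (F + F).card + 3 * F.card ≤ 4 * (insert a F + insert a F).card := by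
  set D := F + F with hD
  have hsum : ∑ a ∈ A, 4 * (F.filter (fun f => a + f ∈ D)).card ≤ ∑ a ∈ A, F.card := by
    rw [← Finset.mul_sum]
    have h1 : ∑ a ∈ A, (F.filter (fun f => a + f ∈ D)).card
        = ∑ f ∈ F, (A.filter (fun a => a + f ∈ D)).card := by
      simp only [Finset.card_filter]
      exact Finset.sum_comm
    have h2 : ∑ f ∈ F, (A.filter (fun a => a + f ∈ D)).card ≤ ∑ f ∈ F, D.card := by
      apply Finset.sum_le_sum
      intro f _
      apply Finset.card_le_card_of_injOn (fun a => a + f)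
      · intro a ha
        simp at ha
        simpa using ha.2
      · intro a _ b _ hab
        simpa using hab
    rw [h1]
    simp only [Finset.sum_const, smul_eq_mul] at h2 ⊢
    nlinarith [Nat.zero_le F.card]
  obtain ⟨a, haA, ha⟩ := Finset.exists_le_of_sum_le hA hsum
  refine ⟨a, haA, ?_, ?_⟩
  · intro hF haF
    have : F.filter (fun f => a + f ∈ D) = F := by
      apply Finset.filter_true_of_mem
      intro f hf
      exact Finset.add_mem_add haF hf
    rw [this] at ha
    have := hF.card_pos
    omega
  · have hsub : D ∪ (F.filter (fun f => ¬ (a + f ∈ D))).image (fun f => a + f)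
        ⊆ insert a F + insert a F := by
      apply Finset.union_subset
      · exact Finset.add_subset_add (Finset.subset_insert _ _) (Finset.subset_insert _ _)
      · intro x hx
        simp only [Finset.mem_image, Finset.mem_filter] at hx
        obtain ⟨f, ⟨hf, _⟩, rfl⟩ := hx
        exact Finset.add_mem_add (Finset.mem_insert_self _ _) (Finset.mem_insert_of_mem hf)
    have hdis : Disjoint D ((F.filter (fun f => ¬ (a + f ∈ D))).image (fun f => a + f)) := by
      rw [Finset.disjoint_right]
      intro x hx
      simp only [Finset.mem_image, Finset.mem_filter] at hx
      obtain ⟨f, ⟨_, hf⟩, rfl⟩ := hx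
      exact hf
    have hc := Finset.card_le_card hsub
    rw [Finset.card_union_of_disjoint hdis,
      Finset.card_image_of_injective _ (add_right_injective a)] at hc
    have := Finset.card_filter_add_card_filter_not (s := F) (fun f => a + f ∈ D)
    omega

lemma css_build {G : Type} [AddCommGroup G] [DecidableEq G] (A : Finset G)
    (hA : A.Nonempty) (i : ℕ) :
    ∃ F : Finset G, F ⊆ A ∧ F.card ≤ i ∧ (A.card ≤ 4 * (F + F).card ∨
      (F.card = i ∧ 3 * i ^ 2 ≤ 8 * (F + F).card + 3 * i)) := by
  induction i with
  | zero => exact ⟨∅, by simp⟩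
  | succ i ih =>
    obtain ⟨F, hFA, hFi, h⟩ := ih
    by_cases hc : A.card ≤ 4 * (F + F).card
    · exact ⟨F, hFA, by omega, Or.inl hc⟩
    · obtain ⟨hi, hq⟩ := h.resolve_left hc
      obtain ⟨a, haA, haF, hcard⟩ := css_step A F hA (by omega)
      have haF' : a ∉ F := by
        intro h
        exact haF ⟨a, h⟩ h
      have hins := Finset.card_insert_of_notMem haF'
      refine ⟨insert a F, Finset.insert_subset haA hFA, by omega, Or.inr ⟨by omega, ?_⟩⟩
      rw [hi] at hcard
      nlinarith

lemma css_finger {G : Type} [AddCommGroup G] [DecidableEq G] (A : Finset G)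
    (hA : 64 ≤ A.card) :
    ∃ f : Fin (Nat.sqrt A.card) → G, (Finset.univ.image f) ⊆ A ∧
      A.card ≤ 4 * (Finset.univ.image f + Finset.univ.image f).card := by
  have hne : A.Nonempty := Finset.card_pos.mp (by omega)
  obtain ⟨F, hFA, hFc, h⟩ := css_build A hne (Nat.sqrt A.card)
  have ht : 8 ≤ Nat.sqrt A.card := Nat.le_sqrt.mpr (by omega)
  have ht2 := Nat.sqrt_le_add A.card
  have hq : A.card ≤ 4 * (F + F).card := by
    rcases h with h | ⟨_, h⟩
    · exact h
    · nlinarith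
  have hFne : F.Nonempty := by
    rw [Finset.nonempty_iff_ne_empty]
    rintro rfl
    rw [Finset.empty_add, Finset.card_empty] at hq
    omega
  haveI : Nonempty F := hFne.to_subtype
  obtain ⟨e⟩ : Nonempty (F ↪ Fin (Nat.sqrt A.card)) :=
    Function.Embedding.nonempty_of_card_le (by simpa using hFc)
  have hsurj := Function.invFun_surjective e.injective
  have himg : Finset.univ.image (fun i => ((Function.invFun e i : F) : G)) = F := by
    ext x
    simp only [Finset.mem_image, Finset.mem_univ, true_and]
    constructor
    · rintro ⟨i, rfl⟩
      exact (Function.invFun e i).2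
    · intro hx
      obtain ⟨i, hi⟩ := hsurj ⟨x, hx⟩
      exact ⟨i, by rw [hi]⟩
  exact ⟨fun i => ((Function.invFun e i : F) : G), by rw [himg]; exact hFA, by rw [himg]; exact hq⟩

lemma css_count {G : Type} [AddCommGroup G] [Fintype G] [DecidableEq G] (s : ℕ) (hs : 64 ≤ s) :
    ({S : Finset G | ∃ A : Finset G, A.card = s ∧ A + A ⊆ S}.ncard : ℝ) ≤
      (Fintype.card G : ℝ) ^ (Nat.sqrt s) * 2 ^ ((Fintype.card G : ℝ) - s / 4) := by
  classical
  let I : Finset (Fin (Nat.sqrt s) → G) := Finset.univ.filter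
    (fun f => s ≤ 4 * (Finset.univ.image f + Finset.univ.image f).card)
  let U : Finset (Finset G) := I.biUnion
    (fun f => Finset.Icc (Finset.univ.image f + Finset.univ.image f) Finset.univ)
  have hsub : {S : Finset G | ∃ A : Finset G, A.card = s ∧ A + A ⊆ S} ⊆ (U : Set (Finset G)) := by
    rintro S ⟨A, rfl, hAS⟩
    obtain ⟨f, hf, hc⟩ := css_finger A hs
    simp only [U, I, Finset.coe_biUnion, Set.mem_iUnion, Finset.mem_coe, Finset.mem_Icc,
      Finset.mem_filter, Finset.mem_univ, true_and]
    exact ⟨f, hc, (Finset.add_subset_add hf hf).trans hAS, Finset.subset_univ _⟩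
  have h1 : {S : Finset G | ∃ A : Finset G, A.card = s ∧ A + A ⊆ S}.ncard ≤ U.card := by
    rw [← Set.ncard_coe_finset]
    exact Set.ncard_le_ncard hsub (Finset.finite_toSet _)
  have h2 : (U.card : ℝ) ≤ ∑ f ∈ I, (2:ℝ) ^ ((Fintype.card G : ℝ) - s / 4) := by
    refine le_trans (b := ((∑ f ∈ I, (Finset.Icc (Finset.univ.image f + Finset.univ.image f)
      (Finset.univ : Finset G)).card : ℕ) : ℝ)) (by exact_mod_cast Finset.card_biUnion_le) ?_
    push_cast
    apply Finset.sum_le_sum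
    intro f hf
    have hf' : s ≤ 4 * (Finset.univ.image f + Finset.univ.image f).card := by
      simpa [I] using hf
    rw [Finset.card_Icc_finset (Finset.subset_univ _)]
    push_cast
    rw [← Real.rpow_natCast]
    apply Real.rpow_le_rpow_of_exponent_le (by norm_num)
    rw [Finset.card_univ, Nat.cast_sub (Finset.card_le_univ _)]
    have : (s:ℝ) ≤ 4 * ((Finset.univ.image f + Finset.univ.image f).card : ℝ) := by
      exact_mod_cast hf'
    linarith
  rw [Finset.sum_const, nsmul_eq_mul] at h2
  have h3 : (I.card : ℝ) ≤ (Fintype.card G : ℝ) ^ (Nat.sqrt s) := by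
    have : I.card ≤ Fintype.card (Fin (Nat.sqrt s) → G) := Finset.card_le_univ _
    simp at this
    exact_mod_cast this
  calc _ ≤ (U.card : ℝ) := by exact_mod_cast h1
    _ ≤ _ := h2
    _ ≤ _ := by gcongr

/-- Let `G` be a finite abelian group of order `N` and let `s` be an integer with
`s ≥ 64·(log₂ N)²`. Then the number of subsets `S ⊆ G` containing the sumset of
some `s`-element set is at most `2^(N − s/8)`. -/
theorem count_sets_containing_sumset
    (G : Type) [AddCommGroup G] [Fintype G] [DecidableEq G]
    (N : ℕ) (hN : N = Fintype.card G)
    (s : ℕ) (hs : 64 * (Real.logb 2 N) ^ 2 ≤ (s : ℝ)) :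
    ({S : Finset G | ∃ A : Finset G, A.card = s ∧ A + A ⊆ S}.ncard : ℝ) ≤
      2 ^ ((N : ℝ) - s / 8) := by
  have hpos : 0 < N := hN ▸ Fintype.card_pos
  by_cases hN1 : N = 1
  · have hcG : Fintype.card G = 1 := by omega
    rcases Nat.eq_zero_or_pos s with rfl | hs0
    · have h : {S : Finset G | ∃ A : Finset G, A.card = 0 ∧ A + A ⊆ S}.ncard ≤ 2 := by
        refine (Set.ncard_le_card _).trans ?_
        simp [hcG]
      have h' : (({S : Finset G | ∃ A : Finset G, A.card = 0 ∧ A + A ⊆ S}.ncard : ℕ) : ℝ) ≤ 2 := by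
        exact_mod_cast h
      simpa [hN1] using h'
    · by_cases hs1 : s = 1
      · subst hs1
        haveI : Subsingleton G := Fintype.card_le_one_iff_subsingleton.mp hcG.le
        have h : {S : Finset G | ∃ A : Finset G, A.card = 1 ∧ A + A ⊆ S}.ncard ≤ 1 := by
          have hsub : {S : Finset G | ∃ A : Finset G, A.card = 1 ∧ A + A ⊆ S} ⊆ {Finset.univ} := by
            rintro S ⟨A, hA, hAS⟩
            have hne : A.Nonempty := Finset.card_pos.mp (by omega)
            obtain ⟨x, hx⟩ := (hne.add hne).mono hAS
            rw [Set.mem_singleton_iff, Finset.eq_univ_iff_forall]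
            intro y
            rwa [Subsingleton.elim y x]
          simpa using Set.ncard_le_ncard hsub
        calc _ ≤ (1:ℝ) := by exact_mod_cast h
          _ ≤ _ := Real.one_le_rpow (by norm_num) (by rw [hN1]; norm_num)
      · have h : {S : Finset G | ∃ A : Finset G, A.card = s ∧ A + A ⊆ S} = ∅ := by
          rw [Set.eq_empty_iff_forall_notMem]
          rintro S ⟨A, hA, _⟩
          have := Finset.card_le_univ A
          omega
        rw [h]
        simp
        positivity
  · have hN2 : (2:ℝ) ≤ N := by exact_mod_cast (by omega : 2 ≤ N)
    have hL : 1 ≤ Real.logb 2 N := by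
      rw [Real.le_logb_iff_rpow_le (by norm_num) (by linarith)]
      simpa using hN2
    have hs64 : 64 ≤ s := by
      have : (64:ℝ) ≤ s := by nlinarith
      exact_mod_cast this
    refine (css_count s hs64).trans ?_
    rw [← hN]
    have hNp : (N:ℝ) ^ (Nat.sqrt s) = 2 ^ (Real.logb 2 N * (Nat.sqrt s : ℝ)) := by
      rw [Real.rpow_mul (by norm_num), Real.rpow_logb (by norm_num) (by norm_num) (by linarith),
        Real.rpow_natCast]
    rw [hNp, ← Real.rpow_add (by norm_num)]
    apply Real.rpow_le_rpow_of_exponent_le (by norm_num)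
    have ht : (Nat.sqrt s : ℝ) ^ 2 ≤ s := by exact_mod_cast Nat.sqrt_le' s
    nlinarith [sq_nonneg (8 * Real.logb 2 N - (Nat.sqrt s : ℝ))]
end

section
/- Let k : ℕ → ℕ be any function with k(n) → ∞ as n → ∞. Then for every ε > 0 there exists n₀ such that for all n ≥ n₀, the number of independent sets I in the hypercube graph Qₙ with min{|I ∩ ℰ|, |I ∩ 𝒪|} > k(n) is at most ε · 2^(2^(n−1)). -/
/-- `V n` is the vector space `F₂ⁿ`. -/
abbrev V (n : ℕ) : Type := Fin n → ZMod 2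

/-- The hypercube graph `Qₙ`: `x` and `y` are adjacent iff `x + y` has Hamming
weight `1` (equivalently, the Hamming distance of `x` and `y` is `1`). -/
def Q (n : ℕ) : SimpleGraph (V n) :=
  SimpleGraph.fromRel (fun x y => hammingDist x y = 1)

/-- `ℰ`: the vectors of even Hamming weight. -/
def evens (n : ℕ) : Finset (V n) :=
  Finset.univ.filter (fun x => Even (hammingNorm x))

/-- `𝒪`: the vectors of odd Hamming weight. -/
def odds (n : ℕ) : Finset (V n) :=
  Finset.univ.filter (fun x => Odd (hammingNorm x))

namespace HC
open Finset

/-- unit vector -/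
def e {n : ℕ} (i : Fin n) : V n := Pi.single i 1

lemma add_self' {n : ℕ} (x : V n) : x + x = 0 := by
  ext i; exact CharTwo.add_self_eq_zero _

lemma add_e_e {n : ℕ} (x : V n) (i : Fin n) : x + e i + e i = x := by
  rw [add_assoc, add_self', add_zero]

/-- parity -/
def par {n : ℕ} (x : V n) : ZMod 2 := ∑ i, x i

lemma par_add_e {n : ℕ} (x : V n) (i : Fin n) : par (x + e i) = par x + 1 := by
  simp [par, e, Finset.sum_add_distrib]

lemma e_inj {n : ℕ} : Function.Injective (e : Fin n → V n) := by
  intro i j h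
  by_contra hne
  have := congrFun h i
  simp [e, hne] at this

/-- neighbourhood of a vertex -/
def nb {n : ℕ} (x : V n) : Finset (V n) := univ.image (fun i => x + e i)

lemma mem_nb {n : ℕ} {x y : V n} : y ∈ nb x ↔ ∃ i, x + e i = y := by
  simp [nb]

lemma nb_symm {n : ℕ} {x y : V n} : y ∈ nb x ↔ x ∈ nb y := by
  simp only [mem_nb]
  constructor
  · rintro ⟨i, rfl⟩; exact ⟨i, add_e_e x i⟩
  · rintro ⟨i, rfl⟩; exact ⟨i, add_e_e y i⟩

lemma card_nb {n : ℕ} (x : V n) : (nb x).card = n := by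
  unfold nb
  rw [card_image_of_injective]
  · simp
  · intro i j h; exact e_inj (add_left_cancel h)

/-- neighbourhood of a set -/
def N {n : ℕ} (A : Finset (V n)) : Finset (V n) := A.biUnion nb

lemma mem_N {n : ℕ} {A : Finset (V n)} {y : V n} : y ∈ N A ↔ ∃ x ∈ A, y ∈ nb x := by
  simp [N]

lemma N_mono {n : ℕ} {A B : Finset (V n)} (h : A ⊆ B) : N A ⊆ N B :=
  biUnion_subset_biUnion_of_subset_left _ h

/-- parity class -/
def P (n : ℕ) (b : ZMod 2) : Finset (V n) := univ.filter (fun x => par x = b)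

lemma mem_P {n : ℕ} {b : ZMod 2} {x : V n} : x ∈ P n b ↔ par x = b := by simp [P]

lemma nb_sub_P {n : ℕ} {b : ZMod 2} {x : V n} (hx : x ∈ P n b) : nb x ⊆ P n (b + 1) := by
  intro y hy
  obtain ⟨i, rfl⟩ := mem_nb.1 hy
  rw [mem_P] at *
  rw [par_add_e, hx]

lemma N_sub_P {n : ℕ} {b : ZMod 2} {A : Finset (V n)} (hA : A ⊆ P n b) : N A ⊆ P n (b + 1) := by
  intro y hy
  obtain ⟨x, hx, hy⟩ := mem_N.1 hy
  exact nb_sub_P (hA hx) hy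

lemma b11 (b : ZMod 2) : b + 1 + 1 = b := by revert b; decide
lemma bcase (b c : ZMod 2) : c = b ∨ c = b + 1 := by revert b c; decide
lemma bne (b : ZMod 2) : b + 1 ≠ b := by revert b; decide

/-- closure -/
def cl {n : ℕ} (b : ZMod 2) (A : Finset (V n)) : Finset (V n) :=
  (P n b).filter (fun x => nb x ⊆ N A)

lemma mem_cl {n : ℕ} {b : ZMod 2} {A : Finset (V n)} {x : V n} :
    x ∈ cl b A ↔ x ∈ P n b ∧ nb x ⊆ N A := by simp [cl]

lemma cl_sub_P {n : ℕ} {b : ZMod 2} {A : Finset (V n)} : cl b A ⊆ P n b := filter_subset _ _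

lemma sub_cl {n : ℕ} {b : ZMod 2} {A : Finset (V n)} (hA : A ⊆ P n b) : A ⊆ cl b A := by
  intro x hx
  exact mem_cl.2 ⟨hA hx, fun y hy => mem_N.2 ⟨x, hx, hy⟩⟩

lemma N_cl {n : ℕ} {b : ZMod 2} {A : Finset (V n)} (hA : A ⊆ P n b) : N (cl b A) = N A := by
  apply Subset.antisymm
  · intro y hy
    obtain ⟨x, hx, hy⟩ := mem_N.1 hy
    exact (mem_cl.1 hx).2 hy
  · exact N_mono (sub_cl hA)

lemma cl_mono {n : ℕ} {b : ZMod 2} {A B : Finset (V n)} (h : A ⊆ B) : cl b A ⊆ cl b B := by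
  intro x hx
  rw [mem_cl] at *
  exact ⟨hx.1, hx.2.trans (N_mono h)⟩

/-- double counting of edges -/
lemma edge_swap {n : ℕ} (S T : Finset (V n)) :
    ∑ x ∈ S, (nb x ∩ T).card = ∑ y ∈ T, (nb y ∩ S).card := by
  have h := sum_card_bipartiteAbove_eq_sum_card_bipartiteBelow (s := S) (t := T)
    (fun x y => y ∈ nb x)
  have h1 : ∀ x, nb x ∩ T = bipartiteAbove (fun x y => y ∈ nb x) T x := by
    intro x; ext y; simp [bipartiteAbove, and_comm]
  have h2 : ∀ y, nb y ∩ S = bipartiteBelow (fun x y => y ∈ nb x) S y := by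
    intro y; ext x; simp only [bipartiteBelow, mem_inter, mem_filter]
    rw [nb_symm, and_comm]
  simp only [h1, h2]
  exact h

lemma card_add_e {n : ℕ} (i : Fin n) (A : Finset (V n)) :
    (A.image (fun x => x + e i)).card = A.card :=
  card_image_of_injective _ (add_left_injective _)

lemma card_le_N {n : ℕ} (hn : 0 < n) (A : Finset (V n)) : A.card ≤ (N A).card := by
  rw [← card_add_e ⟨0, hn⟩ A]
  apply card_le_card
  intro y hy
  obtain ⟨x, hx, rfl⟩ := mem_image.1 hy
  exact mem_N.2 ⟨x, hx, mem_nb.2 ⟨_, rfl⟩⟩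

lemma card_P {n : ℕ} (hn : 0 < n) (b : ZMod 2) : (P n b).card = 2 ^ (n - 1) := by
  have h1 : ∀ b : ZMod 2, (P n b).card ≤ (P n (b + 1)).card := by
    intro b
    rw [← card_add_e ⟨0, hn⟩ (P n b)]
    apply card_le_card
    intro y hy
    obtain ⟨x, hx, rfl⟩ := mem_image.1 hy
    exact nb_sub_P hx (mem_nb.2 ⟨_, rfl⟩)
  have h2 : (P n b).card = (P n (b + 1)).card := by
    apply le_antisymm (h1 b)
    have := h1 (b + 1)
    rwa [b11] at this
  have h3 : (P n b).card + (P n (b + 1)).card = 2 ^ n := by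
    rw [← card_union_of_disjoint]
    · have : P n b ∪ P n (b + 1) = univ := by
        ext x
        simp only [mem_union, mem_P, mem_univ, iff_true]
        generalize par x = c
        exact bcase b c
      rw [this]; simp [V, ZMod.card]
    · rw [disjoint_left]
      intro x hx hy
      rw [mem_P] at hx hy
      exact bne b (hy.symm.trans hx)
  obtain ⟨m, rfl⟩ : ∃ m, n = m + 1 := ⟨n - 1, by omega⟩
  rw [pow_succ] at h3
  simp only [Nat.add_sub_cancel]
  omega

lemma hammingDist_add_e {n : ℕ} (x : V n) (i : Fin n) : hammingDist x (x + e i) = 1 := by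
  rw [hammingDist]
  rw [card_eq_one]
  refine ⟨i, ?_⟩
  ext j
  simp only [mem_filter, mem_univ, true_and, mem_singleton, Pi.add_apply, e, Pi.single_apply]
  by_cases h : j = i <;> simp [h]

lemma dist_nb {n : ℕ} {x y : V n} (h : y ∈ nb x) : hammingDist x y = 1 := by
  obtain ⟨i, rfl⟩ := mem_nb.1 h
  exact hammingDist_add_e x i

lemma dist_nb' {n : ℕ} {x y : V n} (h : y ∈ nb x) : hammingDist y x = 1 := by
  rw [hammingDist_comm]; exact dist_nb h

/-- two vertices sharing a neighbour are at distance at most 2 -/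
lemma dist_share {n : ℕ} {x y z : V n} (h : z ∈ nb x) (h' : z ∈ nb y) : hammingDist x y ≤ 2 := by
  have := hammingDist_triangle x z y
  rw [dist_nb h, dist_nb' h'] at this
  exact this

lemma par_eq_norm {n : ℕ} (x : V n) : par x = (hammingNorm x : ZMod 2) := by
  rw [hammingNorm, card_filter, Nat.cast_sum, par]
  apply sum_congr rfl
  intro i _
  generalize x i = c
  revert c; decide

lemma evens_eq (n : ℕ) : evens n = P n 0 := by
  ext x
  simp only [evens, mem_filter, mem_univ, true_and, mem_P, par_eq_norm]
  exact (ZMod.natCast_eq_zero_iff_even).symm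

lemma odds_eq (n : ℕ) : odds n = P n 1 := by
  ext x
  simp only [odds, mem_filter, mem_univ, true_and, mem_P, par_eq_norm]
  exact (ZMod.natCast_eq_one_iff_odd).symm

/-- common neighbours -/
lemma card_common {n : ℕ} {x y : V n} (h : x ≠ y) : (nb x ∩ nb y).card ≤ 2 := by
  by_cases h2 : ∃ z, z ∈ nb x ∩ nb y
  · obtain ⟨z, hz⟩ := h2
    rw [mem_inter] at hz
    obtain ⟨i, hi⟩ := mem_nb.1 hz.1
    obtain ⟨j, hj⟩ := mem_nb.1 hz.2
    have hy : y = x + e i + e j := by rw [hi, ← hj, add_e_e]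
    have hij : i ≠ j := by
      rintro rfl; apply h; rw [hy, add_e_e]
    calc (nb x ∩ nb y).card ≤ ({x + e i, x + e j} : Finset (V n)).card := by
          apply card_le_card
          intro w hw
          rw [mem_inter] at hw
          obtain ⟨k, hk⟩ := mem_nb.1 hw.1
          obtain ⟨l, hl⟩ := mem_nb.1 hw.2
          have h5 : e i + e j + e l = (e k : V n) := by
            have : x + (e i + e j + e l) = x + e k := by rw [hk, ← hl, hy]; abel
            exact add_left_cancel this
          by_cases hki : k = i
          · simp [← hk, hki]
          by_cases hkj : k = j
          · simp [← hk, hkj]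
          exfalso
          have a1 := congrFun h5 i
          have a2 := congrFun h5 j
          simp only [e, Pi.add_apply, Pi.single_apply] at a1 a2
          simp only [if_true, if_neg hij, if_neg (Ne.symm hij), if_neg (Ne.symm hki), if_neg (Ne.symm hkj)] at a1 a2
          by_cases hil : i = l
          · by_cases hjl : j = l
            · exact hij (hil.trans hjl.symm)
            · rw [if_neg hjl] at a2; revert a2; decide
          · rw [if_neg hil] at a1; revert a1; decide
      _ ≤ 2 := card_le_two
  · push Not at h2
    rw [eq_empty_of_forall_notMem h2]; simp

end HC

namespace HC
open Finset

/-- number of coordinates whose flip leaves S -/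
def hh {n : ℕ} (S : Finset (V n)) (x : V n) : ℕ := (univ.filter (fun i => x + e i ∉ S)).card

/-- slices -/
def slice {n : ℕ} (c : ZMod 2) (S : Finset (V (n+1))) : Finset (V n) :=
  univ.filter (fun x => (Fin.cons c x : V (n+1)) ∈ S)

lemma sum_cons {n : ℕ} (F : V (n+1) → ℝ) :
    ∑ x, F x = ∑ x : V n, F (Fin.cons 0 x : V (n+1)) + ∑ x : V n, F (Fin.cons 1 x : V (n+1)) := by
  have h := Fintype.sum_equiv (Fin.consEquiv (fun _ : Fin (n+1) => ZMod 2)).symm F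
    (fun p => F (Fin.cons p.1 p.2 : V (n+1))) (by intro x; simp [Fin.consEquiv, Fin.cons_self_tail])
  rw [h, Fintype.sum_prod_type]
  exact Fin.sum_univ_two (fun c : ZMod 2 => ∑ x : V n, F (Fin.cons c x : V (n+1)))

lemma cons_add_e_succ {n : ℕ} (c : ZMod 2) (x : V n) (i : Fin n) :
    (Fin.cons c x : V (n+1)) + e i.succ = (Fin.cons c (x + e i) : V (n+1)) := by
  ext j
  refine Fin.cases ?_ (fun j => ?_) j
  · simp [e, Fin.succ_ne_zero, eq_comm]
  · simp [e, Pi.single_apply]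

lemma cons_add_e_zero {n : ℕ} (c : ZMod 2) (x : V n) :
    (Fin.cons c x : V (n+1)) + e 0 = (Fin.cons (c + 1) x : V (n+1)) := by
  ext j
  refine Fin.cases ?_ (fun j => ?_) j
  · simp [e]
  · simp [e, Fin.succ_ne_zero]

lemma hh_cons {n : ℕ} (S : Finset (V (n+1))) (c : ZMod 2) (x : V n) :
    hh S (Fin.cons c x : V (n+1)) =
      hh (slice c S) x + (if x ∈ slice (c+1) S then 0 else 1) := by
  unfold hh
  rw [Fin.univ_succ, filter_cons]
  rw [cons_add_e_zero]
  have : (filter (fun i => (Fin.cons c x : V (n+1)) + e i ∉ S)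
      (map ⟨Fin.succ, Fin.succ_injective n⟩ univ)).card =
      (filter (fun i => x + e i ∉ slice c S) univ).card := by
    rw [filter_map, card_map]
    congr 1
    ext i
    simp [slice, cons_add_e_succ]
  by_cases h : (Fin.cons (c+1) x : V (n+1)) ∈ S
  · simp only [slice, mem_filter, mem_univ, true_and, h, not_true_eq_false, if_true, add_zero]
    simpa [slice] using this
  · simp only [slice, mem_filter, mem_univ, true_and, h, not_false_eq_true, if_false]
    rw [if_pos trivial, card_cons]
    simpa [slice] using this

/-- `∑ sqrt(a²+b²) ≥ sqrt((∑ a)² + (∑ b)²)` -/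
lemma minkowski {ι : Type*} (s : Finset ι) (a b : ι → ℝ) :
    Real.sqrt ((∑ i ∈ s, a i)^2 + (∑ i ∈ s, b i)^2) ≤ ∑ i ∈ s, Real.sqrt (a i ^2 + b i ^2) := by
  have h := norm_sum_le s (fun i => (⟨a i, b i⟩ : ℂ))
  have h1 : ∀ z : ℂ, ‖z‖ = Real.sqrt (z.re^2 + z.im^2) := by
    intro z; rw [Complex.norm_eq_sqrt_sq_add_sq]
  simp only [h1, Complex.re_sum, Complex.im_sum] at h
  exact h

lemma two_pt (p q u v : ℝ) (hp0 : 0 ≤ p) (hp1 : p ≤ 1) (hq0 : 0 ≤ q) (hq1 : q ≤ p)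
    (hu : p * (1-p) ≤ u) (hv : q * (1-q) ≤ v) :
    2 * (((p+q)/2) * (1 - (p+q)/2)) ≤ Real.sqrt (u^2 + (p-q)^2) + v := by
  have hJ : 0 ≤ p * (1-p) := mul_nonneg hp0 (by linarith)
  have h4 : p * (1-p) ≤ 1/4 := by nlinarith [sq_nonneg (p - 1/2)]
  have hd : (p-q)^2 ≤ 1 := by nlinarith
  have key : p * (1-p) + (p-q)^2/2 ≤ Real.sqrt (u^2 + (p-q)^2) := by
    apply Real.le_sqrt_of_sq_le
    have : (p*(1-p))^2 ≤ u^2 := by gcongr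
    have h5 : p*(1-p)*(p-q)^2 ≤ 1/4 * (p-q)^2 := by gcongr
    have h6 : (p-q)^2*(p-q)^2 ≤ 1 * (p-q)^2 := by gcongr
    nlinarith
  nlinarith

/-- Talagrand type boundary functional -/
noncomputable def bd {n : ℕ} (S : Finset (V n)) : ℝ := ∑ x ∈ S, Real.sqrt (hh S x)

lemma bd_nonneg {n : ℕ} (S : Finset (V n)) : 0 ≤ bd S := sum_nonneg (fun _ _ => Real.sqrt_nonneg _)

lemma half_bd {n : ℕ} (S T : Finset (V n)) :
    Real.sqrt ((bd S)^2 + ((S \ T).card : ℝ)^2) ≤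
      ∑ x ∈ S, Real.sqrt ((hh S x + (if x ∈ T then 0 else 1) : ℕ) : ℝ) := by
  have h := minkowski S (fun x => Real.sqrt (hh S x)) (fun x => if x ∈ T then 0 else 1)
  have h2 : ∑ x ∈ S, (if x ∈ T then (0:ℝ) else 1) = ((S \ T).card : ℝ) := by
    rw [card_eq_sum_ones, ← filter_notMem_eq_sdiff, sum_filter]
    push_cast
    apply sum_congr rfl
    intro x _
    by_cases hx : x ∈ T <;> simp [hx]
  rw [h2] at h
  refine h.trans (le_of_eq ?_)
  apply sum_congr rfl
  intro x _
  rw [Real.sq_sqrt (Nat.cast_nonneg _)]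
  by_cases hx : x ∈ T <;> simp [hx]

lemma bd_le_half {n : ℕ} (S T : Finset (V n)) :
    bd S ≤ ∑ x ∈ S, Real.sqrt ((hh S x + (if x ∈ T then 0 else 1) : ℕ) : ℝ) := by
  apply sum_le_sum
  intro x _
  apply Real.sqrt_le_sqrt
  push_cast
  have : (0:ℝ) ≤ if x ∈ T then 0 else 1 := by split_ifs <;> norm_num
  linarith

lemma sum_slice {n : ℕ} (S : Finset (V (n+1))) (F : V (n+1) → ℝ) :
    ∑ x ∈ S, F x = ∑ x ∈ slice 0 S, F (Fin.cons 0 x : V (n+1)) +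
      ∑ x ∈ slice 1 S, F (Fin.cons 1 x : V (n+1)) := by
  have h := sum_cons (fun x => if x ∈ S then F x else 0)
  simp only [← sum_filter] at h
  simpa [slice] using h

lemma card_slice {n : ℕ} (S : Finset (V (n+1))) :
    (S.card : ℝ) = (slice 0 S).card + (slice 1 S).card := by
  have := sum_slice S (fun _ => 1)
  simpa using this

lemma combine (M p q A B : ℝ) (hM : 0 < M) (hp : 0 ≤ p) (hpM : p ≤ M) (hq : 0 ≤ q) (hqp : q ≤ p)
    (u d : ℝ) (hu : p * (M - p) ≤ M * u) (hd : p - q ≤ d) (hA : Real.sqrt (u^2 + d^2) ≤ A)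
    (hB : q * (M - q) ≤ M * B) : (p + q) * (2 * M - (p + q)) ≤ 2 * M * (A + B) := by
  have h := two_pt (p/M) (q/M) (u/M) (B/M) (by positivity) ((div_le_one hM).2 hpM) (by positivity)
    (by gcongr) (by
      rw [le_div_iff₀ hM]; field_simp; linarith) (by
      rw [le_div_iff₀ hM]; field_simp; linarith)
  have h1 : Real.sqrt ((u/M)^2 + (p/M-q/M)^2) ≤ A / M := by
    rw [le_div_iff₀ hM]
    have : Real.sqrt ((u/M)^2 + (p/M-q/M)^2) * M = Real.sqrt (u^2 + (p-q)^2) := by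
      have h2 : (u/M)^2 + (p/M-q/M)^2 = (u^2 + (p-q)^2) / M^2 := by field_simp
      rw [h2, Real.sqrt_div' _ (by positivity), Real.sqrt_sq hM.le]
      field_simp
    rw [this]
    refine le_trans (Real.sqrt_le_sqrt ?_) hA
    have : (p-q)^2 ≤ d^2 := by apply pow_le_pow_left₀ (by linarith) hd
    linarith
  have h3 : 2 * (((p/M+q/M)/2) * (1 - (p/M+q/M)/2)) ≤ A/M + B/M := by linarith
  have h4 : 2 * (((p/M+q/M)/2) * (1 - (p/M+q/M)/2)) = (p+q)*(2*M-(p+q)) / (2 * M^2) := by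
    field_simp
  rw [h4, div_le_iff₀ (by positivity)] at h3
  have h5 : (A/M + B/M) * (2*M^2) = 2 * M * (A+B) := by field_simp
  linarith

theorem talagrand (n : ℕ) (S : Finset (V n)) :
    (S.card : ℝ) * (2^n - S.card) ≤ 2^n * bd S := by
  induction n with
  | zero =>
    have h1 : S.card ≤ 1 := by
      have := card_le_univ S
      simpa using this
    have h0 := bd_nonneg S
    interval_cases h : S.card
    · simpa using h0
    · simpa using h0
  | succ n ih =>
    have hS : bd S = ∑ x ∈ slice 0 S, Real.sqrt ((hh (slice 0 S) x + (if x ∈ slice 1 S then 0 else 1) : ℕ) : ℝ)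
       + ∑ x ∈ slice 1 S, Real.sqrt ((hh (slice 1 S) x + (if x ∈ slice 0 S then 0 else 1) : ℕ) : ℝ) := by
      unfold bd
      rw [sum_slice]
      congr 1
      · apply sum_congr rfl
        intro x _
        rw [hh_cons]; rfl
      · apply sum_congr rfl
        intro x _
        rw [hh_cons]; rfl
    have hc := card_slice S
    have hle : ∀ T : Finset (V n), (T.card : ℝ) ≤ 2^n := by
      intro T
      have := card_le_univ T
      have h2 : Fintype.card (V n) = 2^n := by simp [V, ZMod.card]
      rw [h2] at this
      exact_mod_cast this
    have hsd : ∀ T U : Finset (V n), (T.card : ℝ) - U.card ≤ ((T \ U).card : ℝ) := by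
      intro T U
      have := le_card_sdiff U T
      have h3 : T.card ≤ (T \ U).card + U.card := by omega
      have : (T.card : ℝ) ≤ (T \ U).card + U.card := by exact_mod_cast h3
      linarith
    rw [hS, hc, pow_succ]
    rcases le_total ((slice 1 S).card : ℝ) ((slice 0 S).card : ℝ) with h | h
    · have := combine (2^n) (slice 0 S).card (slice 1 S).card _ _ (by positivity) (by positivity)
        (hle _) (by positivity) h (bd (slice 0 S)) ((slice 0 S \ slice 1 S).card) (ih _) (hsd _ _)
        (half_bd _ _) ((ih (slice 1 S)).trans
          (mul_le_mul_of_nonneg_left (bd_le_half _ (slice 0 S)) (by positivity)))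
      linarith
    · have := combine (2^n) (slice 1 S).card (slice 0 S).card _ _ (by positivity) (by positivity)
        (hle _) (by positivity) h (bd (slice 1 S)) ((slice 1 S \ slice 0 S).card) (ih _) (hsd _ _)
        (half_bd _ _) ((ih (slice 0 S)).trans
          (mul_le_mul_of_nonneg_left (bd_le_half _ (slice 1 S)) (by positivity)))
      linarith

end HC

namespace HC
open Finset

theorem iso {n : ℕ} (hn : 0 < n) (C : Finset (V n)) (hC : 4 * C.card ≤ 2^n) :
    (C.card : ℝ) ≤ 4 * (((N C).card : ℝ) - C.card) * Real.sqrt n := by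
  set o : Fin n := ⟨0, hn⟩
  set C' := C.image (fun x => x + e o) with hC'
  set B := C ∪ C' with hB
  set S := Bᶜ with hS
  set D := N C \ C' with hD
  have hC'c : C'.card = C.card := card_add_e o C
  have hsub : C' ⊆ N C := by
    intro y hy
    obtain ⟨x, hx, rfl⟩ := mem_image.1 hy
    exact mem_N.2 ⟨x, hx, mem_nb.2 ⟨_, rfl⟩⟩
  have hDc : (D.card : ℝ) = (N C).card - C.card := by
    rw [hD, card_sdiff_of_subset hsub, Nat.cast_sub (card_le_card hsub), hC'c]
  have hB1 : C.card ≤ B.card := card_le_card subset_union_left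
  have hB2 : B.card ≤ 2 * C.card := by
    have : B.card ≤ C.card + C'.card := card_union_le C C'
    omega
  have hSc : (S.card : ℝ) = 2^n - B.card := by
    rw [hS, card_compl, Nat.cast_sub (card_le_univ _)]
    simp [V, ZMod.card]
  have hbd : bd S ≤ 2 * D.card * Real.sqrt n := by
    have h1 : bd S ≤ ∑ x ∈ D ∪ D.image (fun x => x + e o), Real.sqrt n := by
      unfold bd
      have h2 : ∑ x ∈ S, Real.sqrt (hh S x) = ∑ x ∈ S.filter (fun x => hh S x ≠ 0), Real.sqrt (hh S x) := by
        rw [sum_filter]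
        apply sum_congr rfl
        intro x _
        by_cases h : hh S x = 0 <;> simp [h]
      rw [h2]
      refine (sum_le_sum (g := fun _ => Real.sqrt n) ?_).trans (sum_le_sum_of_subset_of_nonneg ?_ ?_)
      · intro x _
        apply Real.sqrt_le_sqrt
        have : hh S x ≤ n := by
          unfold hh
          refine (card_le_univ _).trans ?_
          simp
        exact_mod_cast this
      · intro x hx
        rw [mem_filter] at hx
        obtain ⟨hxS, hx0⟩ := hx
        have hxB : x ∉ B := by simpa [hS] using hxS
        rw [hB, mem_union, not_or] at hxB
        obtain ⟨i, hi⟩ := card_pos.1 (Nat.pos_of_ne_zero hx0)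
        have hi2 : x + e i ∈ B := by simpa [hS] using hi
        rw [hB, mem_union] at hi2
        rw [mem_union]
        rcases hi2 with h | h
        · left
          rw [hD, mem_sdiff]
          exact ⟨mem_N.2 ⟨_, h, mem_nb.2 ⟨i, add_e_e x i⟩⟩, hxB.2⟩
        · right
          obtain ⟨c, hc, hce⟩ := mem_image.1 h
          rw [mem_image]
          refine ⟨x + e o, ?_, add_e_e x o⟩
          rw [hD, mem_sdiff]
          constructor
          · refine mem_N.2 ⟨c, hc, mem_nb.2 ⟨i, ?_⟩⟩
            have : c = x + e i + e o := by rw [← hce, add_e_e]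
            rw [this, add_right_comm, add_e_e]
          · intro h3
            obtain ⟨c', hc', h4⟩ := mem_image.1 h3
            apply hxB.1
            have : c' = x := add_right_cancel h4
            rwa [← this]
      · intro _ _ _; exact Real.sqrt_nonneg _
    refine h1.trans ?_
    rw [sum_const, nsmul_eq_mul]
    have h5 : (D ∪ D.image (fun x => x + e o)).card ≤ 2 * D.card := by
      have := card_union_le D (D.image (fun x => x + e o))
      rw [card_add_e] at this
      omega
    have : ((D ∪ D.image (fun x => x + e o)).card : ℝ) ≤ 2 * D.card := by exact_mod_cast h5
    exact mul_le_mul_of_nonneg_right this (Real.sqrt_nonneg _)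
  have hT := talagrand n S
  rw [← hDc]
  have e1 : (2:ℝ)^n - S.card = B.card := by rw [hSc]; ring
  rw [e1] at hT
  have hCr : 4 * (C.card : ℝ) ≤ 2^n := by exact_mod_cast hC
  have hB1r : (C.card : ℝ) ≤ B.card := by exact_mod_cast hB1
  have hB2r : (B.card : ℝ) ≤ 2 * C.card := by exact_mod_cast hB2
  have hSl : (2:ℝ)^n / 2 ≤ S.card := by rw [hSc]; linarith
  have h6 : (2:ℝ)^n / 2 * C.card ≤ S.card * B.card := by
    apply mul_le_mul hSl hB1r (by positivity) (by positivity)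
  have h7 : (2:ℝ)^n * (C.card / 2) ≤ 2^n * bd S := by linarith
  have h8 := le_of_mul_le_mul_left h7 (by positivity)
  linarith

/-- second moment expansion bound -/
theorem small_exp {n : ℕ} (A : Finset (V n)) :
    n^2 * A.card ^ 2 ≤ (N A).card * (A.card * (n + 2 * (A.card - 1))) := by
  have h1 : ∑ y ∈ N A, (nb y ∩ A).card = n * A.card := by
    rw [← edge_swap]
    rw [sum_congr rfl (g := fun _ => n)]
    · simp [mul_comm]
    · intro x hx
      rw [inter_eq_left.2, card_nb]
      intro y hy; exact mem_N.2 ⟨x, hx, hy⟩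
  have h2 : ∑ y ∈ N A, (nb y ∩ A).card ^ 2 ≤ ∑ x ∈ A, ∑ x' ∈ A, (nb x ∩ nb x').card := by
    have : ∀ y, (nb y ∩ A).card ^ 2 = ∑ x ∈ A, ∑ x' ∈ A, if y ∈ nb x ∧ y ∈ nb x' then 1 else 0 := by
      intro y
      have h3 : (nb y ∩ A).card = ∑ x ∈ A, if y ∈ nb x then 1 else 0 := by
        rw [← card_filter]
        congr 1
        ext x
        rw [mem_inter, mem_filter, nb_symm, and_comm]
      rw [sq, h3, sum_mul_sum]
      apply sum_congr rfl; intro x _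
      apply sum_congr rfl; intro x' _
      by_cases ha : y ∈ nb x <;> by_cases hb : y ∈ nb x' <;> simp [ha, hb]
    simp only [this]
    rw [sum_comm]
    apply sum_le_sum; intro x _
    rw [sum_comm]
    apply sum_le_sum; intro x' _
    rw [← card_filter]
    apply card_le_card
    intro y hy
    rw [mem_filter] at hy
    exact mem_inter.2 hy.2
  have h3 : ∑ x ∈ A, ∑ x' ∈ A, (nb x ∩ nb x').card ≤ A.card * (n + 2 * (A.card - 1)) := by
    rw [← smul_eq_mul, ← sum_const]
    apply sum_le_sum
    intro x hx
    rw [← add_sum_erase _ _ hx]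
    apply add_le_add
    · rw [inter_self, card_nb]
    · rw [← card_erase_of_mem hx, mul_comm, ← smul_eq_mul, ← sum_const]
      apply sum_le_sum
      intro y hy
      exact card_common (ne_of_mem_erase hy).symm
  have h4 := sq_sum_le_card_mul_sum_sq (s := N A) (f := fun y => (nb y ∩ A).card)
  rw [h1] at h4
  calc n^2 * A.card^2 = (n * A.card)^2 := by ring
    _ ≤ _ := h4
    _ ≤ _ := Nat.mul_le_mul_left _ (h2.trans h3)

end HC

namespace HC
open Finset

/-- one step inside A of length at most k -/
def Rel {n : ℕ} (k : ℕ) (A : Finset (V n)) (x y : V n) : Prop :=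
  x ∈ A ∧ y ∈ A ∧ hammingDist x y ≤ k

/-- k-linked sets -/
def Linked {n : ℕ} (k : ℕ) (A : Finset (V n)) : Prop :=
  ∀ x ∈ A, ∀ y ∈ A, Relation.ReflTransGen (Rel k A) x y

lemma Rel.symm {n k : ℕ} {A : Finset (V n)} {x y : V n} (h : Rel k A x y) : Rel k A y x :=
  ⟨h.2.1, h.1, by rw [hammingDist_comm]; exact h.2.2⟩

lemma rtg_symm {n k : ℕ} {A : Finset (V n)} {x y : V n}
    (h : Relation.ReflTransGen (Rel k A) x y) : Relation.ReflTransGen (Rel k A) y x := by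
  induction h with
  | refl => exact .refl
  | tail _ h ih => exact .head h.symm ih

lemma rtg_mono {n k : ℕ} {A B : Finset (V n)} (hAB : A ⊆ B) {x y : V n}
    (h : Relation.ReflTransGen (Rel k A) x y) : Relation.ReflTransGen (Rel k B) x y := by
  induction h with
  | refl => exact .refl
  | tail _ h ih => exact .tail ih ⟨hAB h.1, hAB h.2.1, h.2.2⟩

lemma linked_of_near {n k : ℕ} {U T : Finset (V n)} (hU : Linked k U) (hUT : U ⊆ T)
    (h : ∀ x ∈ T, ∃ u ∈ U, hammingDist x u ≤ k) : Linked k T := by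
  intro x hx y hy
  obtain ⟨u, hu, hxu⟩ := h x hx
  obtain ⟨v, hv, hyv⟩ := h y hy
  refine .head ⟨hx, hUT hu, hxu⟩ (.trans (rtg_mono hUT (hU u hu v hv)) (.single ?_))
  exact ⟨hUT hv, hy, by rw [hammingDist_comm]; exact hyv⟩

lemma linked_thin {n : ℕ} {C U : Finset (V n)} (hC : Linked 2 C) (hUC : U ⊆ C)
    (h : ∀ x ∈ C, ∃ u ∈ U, hammingDist x u ≤ 2) : Linked 6 U := by
  intro u hu v hv
  have key : ∀ c, Relation.ReflTransGen (Rel 2 C) u c → ∀ w ∈ U, hammingDist c w ≤ 2 →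
      Relation.ReflTransGen (Rel 6 U) u w := by
    intro c hc
    induction hc with
    | refl =>
      intro w hw hd
      exact .single ⟨hu, hw, by omega⟩
    | @tail c d _ hcd ih =>
      intro w hw hd
      obtain ⟨z, hz, hcz⟩ := h c hcd.1
      refine .tail (ih z hz hcz) ⟨hz, hw, ?_⟩
      have h1 := hammingDist_triangle z c w
      have h2 := hammingDist_triangle c d w
      have h3 := hcd.2.2
      rw [hammingDist_comm] at hcz
      omega
  exact key v (hC u (hUC hu) v (hUC hv)) v hv (by simp)

/-- Hamming ball about 0 -/
def ball (n k : ℕ) : Finset (V n) := univ.filter (fun x => hammingNorm x ≤ k)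

lemma zz : ∀ c : ZMod 2, c ≠ 0 → c + 1 = 0 := by decide

lemma card_ball (n k : ℕ) : (ball n k).card ≤ (n+1)^k := by
  induction k with
  | zero =>
    have : ball n 0 = {0} := by
      ext x; simp [ball]
    rw [this]; simp
  | succ k ih =>
    have hsub : ball n (k+1) ⊆ ((ball n k) ×ˢ (univ : Finset (Option (Fin n)))).image
        (fun p => p.1 + (p.2.elim 0 e)) := by
      intro x hx
      have hx' : hammingNorm x ≤ k + 1 := by simpa [ball] using hx
      rw [mem_image]
      by_cases h : hammingNorm x ≤ k
      · exact ⟨(x, none), by simp [ball, h], by simp⟩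
      · have hpos : 0 < hammingNorm x := by omega
        obtain ⟨i, hi⟩ := card_pos.1 hpos
        have hi' : x i ≠ 0 := by simpa using hi
        refine ⟨(x + e i, some i), ?_, by simp [add_e_e]⟩
        simp only [mem_product, mem_univ, and_true, ball, mem_filter, true_and]
        have hlt : hammingNorm (x + e i) < hammingNorm x := by
          apply card_lt_card
          rw [ssubset_iff_of_subset]
          · refine ⟨i, hi, ?_⟩
            intro hm
            have hm2 := (mem_filter.1 hm).2
            simp only [Pi.add_apply, e, Pi.single_eq_same] at hm2
            exact hm2 (zz _ hi')
          · intro j hj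
            simp only [mem_filter, mem_univ, true_and, Pi.add_apply, e] at hj ⊢
            by_cases hji : j = i
            · rw [hji]; exact hi'
            · simpa [Pi.single_apply, hji] using hj
        omega
    calc _ ≤ _ := card_le_card hsub
      _ ≤ _ := card_image_le
      _ = (ball n k).card * (n+1) := by rw [card_product]; simp
      _ ≤ _ := by rw [pow_succ]; exact Nat.mul_le_mul_right _ ih

/-- (current vertex, visited set) after L steps -/
def reach (n k : ℕ) : ℕ → Finset (V n × Finset (V n))
  | 0 => univ.image (fun v => (v, {v}))
  | L+1 => (reach n k L ×ˢ ball n k).image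
      (fun p => (p.1.1 + p.2, insert (p.1.1 + p.2) p.1.2))

lemma card_reach (n k L : ℕ) : (reach n k L).card ≤ 2^n * ((n+1)^k)^L := by
  induction L with
  | zero =>
    refine card_image_le.trans ?_
    simp [V, ZMod.card]
  | succ L ih =>
    calc _ ≤ _ := card_image_le
      _ = _ := card_product _ _
      _ ≤ _ := by rw [pow_succ, ← mul_assoc]; exact Nat.mul_le_mul ih (card_ball n k)

lemma reach_succ {n k L : ℕ} {c c' : V n} {T : Finset (V n)} (h : (c, T) ∈ reach n k L)
    (hd : hammingDist c' c ≤ k) : (c', insert c' T) ∈ reach n k (L+1) := by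
  rw [reach, mem_image]
  refine ⟨((c, T), c' + c), ?_, ?_⟩
  · rw [mem_product]
    refine ⟨h, ?_⟩
    rw [ball, mem_filter]
    refine ⟨mem_univ _, ?_⟩
    rw [hammingDist_eq_hammingNorm] at hd
    have : -c' + c = c' + c := by
      rw [neg_eq_of_add_eq_zero_left (add_self' c')]
    rwa [this] at hd
  · have : c + (c' + c) = c' := by rw [add_comm c' c, ← add_assoc, add_self', zero_add]
    simp only [this]

lemma reach_list {n k : ℕ} : ∀ (L : ℕ) (c : V n) (l : List (V n)), l.length = L →
    List.IsChain (fun x y => hammingDist x y ≤ k) (c :: l) →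
    (c, (c :: l).toFinset) ∈ reach n k L := by
  intro L
  induction L with
  | zero =>
    intro c l hl _
    rw [List.length_eq_zero_iff] at hl
    subst hl
    simp [reach]
  | succ L ih =>
    intro c l hl hch
    match l, hl, hch with
    | d :: l', hl, hch =>
      rw [List.isChain_cons_cons] at hch
      have h1 := ih d l' (by simpa using hl) hch.2
      have := reach_succ h1 hch.1
      simpa using this

lemma reach_pad {n k L : ℕ} {c : V n} {T : Finset (V n)} (hc : c ∈ T) (h : (c, T) ∈ reach n k L)
    (j : ℕ) : (c, T) ∈ reach n k (L + j) := by
  induction j with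
  | zero => exact h
  | succ j ih =>
    have := reach_succ (c' := c) ih (by simp)
    rwa [insert_eq_of_mem hc] at this

lemma exists_cross {n k : ℕ} {T T' : Finset (V n)} (hT : Linked k T) (hsub : T' ⊆ T)
    (hne : T'.Nonempty) (hneq : T' ≠ T) : ∃ x ∈ T', ∃ u ∈ T, u ∉ T' ∧ hammingDist x u ≤ k := by
  by_contra hcon
  push Not at hcon
  apply hneq
  apply Subset.antisymm hsub
  obtain ⟨x, hx⟩ := hne
  intro y hy
  have h := hT x (hsub hx) y hy
  clear hy
  induction h with
  | refl => exact hx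
  | @tail c d _ hcd ih =>
    by_contra hd
    have := hcon c ih d hcd.2.1 hd
    have := hcd.2.2
    omega

lemma exists_walk {n k : ℕ} {T : Finset (V n)} (hT : Linked k T) (hne : T.Nonempty) :
    ∀ s, 1 ≤ s → s ≤ T.card → ∃ (c : V n) (l : List (V n)),
      List.IsChain (fun x y => hammingDist x y ≤ k) (c :: l) ∧ (c :: l).toFinset ⊆ T ∧
      (c :: l).toFinset.card = s ∧ l.length + 2 = 2 * s := by
  intro s hs
  induction s, hs using Nat.le_induction with
  | base =>
    intro _
    obtain ⟨x, hx⟩ := hne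
    exact ⟨x, [], by simp, by simpa using hx, by simp, by simp⟩
  | succ s hs ih =>
    intro hcard
    obtain ⟨c, l, hch, hsub, hsc, hlen⟩ := ih (by omega)
    obtain ⟨x, hx, u, huT, hu, hd⟩ := exists_cross hT hsub ⟨c, by simp⟩ (by
      intro h; rw [h] at hsc; omega)
    rw [List.mem_toFinset] at hx
    obtain ⟨l1, l2, hl⟩ := List.append_of_mem hx
    have hd' : hammingDist u x ≤ k := by rw [hammingDist_comm]; exact hd
    have hnew : List.IsChain (fun x y => hammingDist x y ≤ k) (l1 ++ x :: u :: x :: l2) := by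
      rw [hl] at hch
      rw [List.isChain_append] at hch ⊢
      refine ⟨hch.1, ?_, by simpa using hch.2.2⟩
      exact .cons_cons hd (.cons_cons hd' hch.2.1)
    have hfin : (l1 ++ x :: u :: x :: l2).toFinset = insert u (c :: l).toFinset := by
      rw [hl]; ext z; simp only [List.mem_toFinset, List.mem_append, List.mem_cons, mem_insert]; tauto
    have hlen2 : (l1 ++ x :: u :: x :: l2).length = (c :: l).length + 2 := by
      rw [hl]; simp only [List.length_append, List.length_cons]; omega
    obtain ⟨c', l', hcl⟩ : ∃ c' l', l1 ++ x :: u :: x :: l2 = c' :: l' := by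
      cases l1 with
      | nil => exact ⟨_, _, rfl⟩
      | cons a b => exact ⟨_, _, rfl⟩
    rw [hcl] at hnew hfin hlen2
    refine ⟨c', l', hnew, ?_, ?_, ?_⟩
    · rw [hfin]; exact insert_subset huT hsub
    · rw [hfin, card_insert_of_notMem hu, hsc]
    · simp at hlen2; omega

/-- candidates for linked sets of size at most M -/
def cand (n k M : ℕ) : Finset (Finset (V n)) := (reach n k (2 * M)).image Prod.snd

lemma card_cand (n k M : ℕ) : (cand n k M).card ≤ 2^n * ((n+1)^k)^(2*M) :=
  card_image_le.trans (card_reach n k (2*M))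

lemma mem_cand {n k M : ℕ} {T : Finset (V n)} (hT : Linked k T) (hne : T.Nonempty)
    (hM : T.card ≤ M) : T ∈ cand n k M := by
  obtain ⟨c, l, hch, hsub, hsc, hlen⟩ := exists_walk hT hne T.card (card_pos.2 hne) le_rfl
  have heq : (c :: l).toFinset = T := eq_of_subset_of_card_le hsub hsc.ge
  have h1 := reach_list l.length c l rfl hch
  rw [heq] at h1
  have hc : c ∈ T := by rw [← heq]; simp
  have h2 := reach_pad hc h1 (2 * M - l.length)
  rw [show l.length + (2 * M - l.length) = 2 * M by omega] at h2
  exact mem_image.2 ⟨_, h2, rfl⟩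

end HC

namespace HC
open Finset

lemma greedy {n : ℕ} (X Y : Finset (V n)) (ψ : ℕ) :
    ∃ U ⊆ X, U.card * ψ ≤ (N U ∩ Y).card ∧ ∀ x ∈ X, ((nb x ∩ Y) \ N U).card ≤ ψ := by
  have hne : (X.powerset.filter (fun U => U.card * ψ ≤ (N U ∩ Y).card)).Nonempty :=
    ⟨∅, by simp⟩
  obtain ⟨U, hU, hmax⟩ := exists_max_image _ card hne
  rw [mem_filter, mem_powerset] at hU
  refine ⟨U, hU.1, hU.2, ?_⟩
  intro x hx
  by_contra hcon
  push Not at hcon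
  have hxU : x ∉ U := by
    intro h
    have : (nb x ∩ Y) \ N U = ∅ := by
      rw [sdiff_eq_empty_iff_subset]
      intro y hy
      exact mem_N.2 ⟨x, h, (mem_inter.1 hy).1⟩
    rw [this] at hcon
    simp at hcon
  have h1 : (insert x U).card * ψ ≤ (N (insert x U) ∩ Y).card := by
    rw [card_insert_of_notMem hxU, add_mul, one_mul]
    have hsub : (N U ∩ Y) ∪ ((nb x ∩ Y) \ N U) ⊆ N (insert x U) ∩ Y := by
      intro y hy
      rw [mem_union, mem_inter, mem_sdiff, mem_inter] at hy
      rw [mem_inter]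
      rcases hy with h | h
      · exact ⟨N_mono (subset_insert _ _) h.1, h.2⟩
      · exact ⟨mem_N.2 ⟨x, mem_insert_self _ _, h.1.1⟩, h.1.2⟩
    have hdis : Disjoint (N U ∩ Y) ((nb x ∩ Y) \ N U) := by
      rw [disjoint_left]
      intro y hy hy2
      exact (mem_sdiff.1 hy2).2 (mem_inter.1 hy).1
    have := card_le_card hsub
    rw [card_union_of_disjoint hdis] at this
    omega
  have := hmax (insert x U) (by
    rw [mem_filter, mem_powerset]
    exact ⟨insert_subset hx hU.1, h1⟩)
  rw [card_insert_of_notMem hxU] at this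
  omega

def F0 {n : ℕ} (b : ZMod 2) (T : Finset (V n)) : Finset (V n) := N (T ∩ P n b)
def S0 {n : ℕ} (b : ZMod 2) (ψ : ℕ) (T : Finset (V n)) : Finset (V n) :=
  (P n b).filter (fun x => (nb x \ F0 b T).card ≤ ψ)
def SS {n : ℕ} (b : ZMod 2) (ψ : ℕ) (T : Finset (V n)) : Finset (V n) :=
  S0 b ψ T \ N (T ∩ P n (b+1))
def FF {n : ℕ} (b : ZMod 2) (ψ : ℕ) (T : Finset (V n)) : Finset (V n) :=
  F0 b T ∪ (P n (b+1)).filter (fun v => ψ < (nb v ∩ SS b ψ T).card)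

lemma linked_cl {n : ℕ} (hn : 0 < n) {b : ZMod 2} {A : Finset (V n)} (hA : A ⊆ P n b)
    (hL : Linked 2 A) : Linked 2 (cl b A) := by
  apply linked_of_near hL (sub_cl hA)
  intro x hx
  have hx2 : x + e ⟨0, hn⟩ ∈ nb x := mem_nb.2 ⟨_, rfl⟩
  obtain ⟨u, hu, hxu⟩ := mem_N.1 ((mem_cl.1 hx).2 hx2)
  exact ⟨u, hu, dist_share hx2 hxu⟩

lemma P_disj {n : ℕ} {b : ZMod 2} {x : V n} (h1 : x ∈ P n b) (h2 : x ∈ P n (b+1)) : False := by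
  rw [mem_P] at h1 h2
  exact bne b (h2.symm.trans h1)

theorem container {n : ℕ} (hn : 0 < n) {b : ZMod 2} {A : Finset (V n)} (hA : A ⊆ P n b)
    (hAne : A.Nonempty) (hL : Linked 2 A) (ψ t : ℕ) (hψ : 2 * ψ ≤ n)
    (ht : (N A).card = (cl b A).card + t) :
    ∃ T : Finset (V n), Linked 6 T ∧ T.Nonempty ∧ T.card * ψ ≤ (N A).card + 2 * t ∧
      cl b A ⊆ SS b ψ T ∧ FF b ψ T ⊆ N A ∧
      n * (SS b ψ T).card ≤ n * (FF b ψ T).card + 4 * ψ * t ∧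
      Linked 6 ((T ∩ P n b) ∪ (N A \ FF b ψ T)) := by
  set C := cl b A with hC
  set G := N A with hG
  have hNC : N C = G := N_cl hA
  have hGP : G ⊆ P n (b+1) := N_sub_P hA
  have hCP : C ⊆ P n b := cl_sub_P
  have hCG : ∀ x ∈ C, nb x ⊆ G := fun x hx => (mem_cl.1 hx).2
  have hCL : Linked 2 C := linked_cl hn hA hL
  obtain ⟨U, hUC, hUc, hU⟩ := greedy C univ ψ
  simp only [inter_univ] at hUc hU
  have hUP : U ⊆ P n b := hUC.trans hCP
  have hNUG : N U ⊆ G := by rw [← hNC]; exact N_mono hUC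
  set SU := (P n b).filter (fun x => (nb x \ N U).card ≤ ψ) with hSU
  obtain ⟨W, hWX, hWc, hW⟩ := greedy ((P n (b+1) \ G).filter (fun v => (nb v ∩ SU).Nonempty)) SU ψ
  have hWP : W ⊆ P n (b+1) := fun x hx => (mem_sdiff.1 (mem_filter.1 (hWX hx)).1).1
  have hWG : ∀ x ∈ W, x ∉ G := fun x hx => (mem_sdiff.1 (mem_filter.1 (hWX hx)).1).2
  have hT1 : (U ∪ W) ∩ P n b = U := by
    ext x
    rw [mem_inter, mem_union]
    constructor
    · rintro ⟨h | h, hx⟩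
      · exact h
      · exact (P_disj hx (hWP h)).elim
    · intro h; exact ⟨Or.inl h, hUP h⟩
  have hT2 : (U ∪ W) ∩ P n (b+1) = W := by
    ext x
    rw [mem_inter, mem_union]
    constructor
    · rintro ⟨h | h, hx⟩
      · exact (P_disj (hUP h) hx).elim
      · exact h
    · intro h; exact ⟨Or.inr h, hWP h⟩
  have eF0 : F0 b (U ∪ W) = N U := by rw [F0, hT1]
  have eS0 : S0 b ψ (U ∪ W) = SU := by rw [S0, eF0]
  have eSS : SS b ψ (U ∪ W) = SU \ N W := by rw [SS, eS0, hT2]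
  set S := SU \ N W with hS
  have eFF : FF b ψ (U ∪ W) = N U ∪ (P n (b+1)).filter (fun v => ψ < (nb v ∩ S).card) := by
    rw [FF, eF0, eSS]
  set F := N U ∪ (P n (b+1)).filter (fun v => ψ < (nb v ∩ S).card) with hF
  -- distance facts
  have near2 : ∀ x ∈ SU, ∃ u ∈ U, hammingDist x u ≤ 2 := by
    intro x hx
    have hx1 := (mem_filter.1 hx).2
    have : ¬ (nb x ⊆ nb x \ N U) := by
      intro h
      have := card_le_card h
      rw [card_nb] at this
      omega
    obtain ⟨y, hy, hy2⟩ := not_subset.1 this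
    have : y ∈ N U := by
      by_contra h; exact hy2 (mem_sdiff.2 ⟨hy, h⟩)
    obtain ⟨u, hu, hyu⟩ := mem_N.1 this
    exact ⟨u, hu, dist_share hy hyu⟩
  have hCSU : C ⊆ SU := fun x hx => mem_filter.2 ⟨hCP hx, hU x hx⟩
  have hUL : Linked 6 U := linked_thin hCL hUC (fun x hx => near2 x (hCSU hx))
  have hCne : C.Nonempty := hAne.mono (sub_cl hA)
  have hUne : U.Nonempty := by
    obtain ⟨x, hx⟩ := hCne
    obtain ⟨u, hu, _⟩ := near2 x (hCSU hx)
    exact ⟨u, hu⟩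
  have near3 : ∀ s ∈ SU, ∀ v ∈ nb s, ∃ u ∈ U, hammingDist v u ≤ 6 := by
    intro s hs v hv
    obtain ⟨u, hu, hd⟩ := near2 s hs
    have h1 := hammingDist_triangle v s u
    have h2 := dist_nb' hv
    exact ⟨u, hu, by omega⟩
  have hCS : C ⊆ S := by
    intro x hx
    rw [hS, mem_sdiff]
    refine ⟨hCSU hx, ?_⟩
    intro h
    obtain ⟨w, hw, hxw⟩ := mem_N.1 h
    exact hWG w hw (hCG x hx (nb_symm.1 hxw))
  have hnG : ∀ v ∈ P n (b+1), v ∉ G → (nb v ∩ S).card ≤ ψ := by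
    intro v hv hvG
    by_cases hne : (nb v ∩ SU).Nonempty
    · have := hW v (mem_filter.2 ⟨mem_sdiff.2 ⟨hv, hvG⟩, hne⟩)
      rwa [inter_sdiff_assoc] at this
    · rw [not_nonempty_iff_eq_empty] at hne
      have : nb v ∩ S = ∅ := by
        rw [← subset_empty, ← hne]
        exact inter_subset_inter_left sdiff_subset
      rw [this]; simp
  have hFG : F ⊆ G := by
    rw [hF]
    apply union_subset hNUG
    intro v hv
    rw [mem_filter] at hv
    by_contra h
    have := hnG v hv.1 h
    omega
  -- edge counts
  have hnat : ∑ x ∈ C, (nb x ∩ G).card = n * C.card := by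
    rw [sum_congr rfl (g := fun _ => n)]
    · simp [mul_comm]
    · intro x hx
      rw [inter_eq_left.2 (hCG x hx), card_nb]
  have hE : ∑ x ∈ SU \ C, (nb x ∩ G).card + n * C.card ≤ n * G.card := by
    rw [← hnat, edge_swap, edge_swap C G, ← sum_add_distrib, mul_comm, ← smul_eq_mul, ← sum_const]
    apply sum_le_sum
    intro y _
    rw [← card_union_of_disjoint]
    · conv_rhs => rw [← card_nb y]
      exact card_le_card (union_subset inter_subset_left inter_subset_left)
    · rw [disjoint_left]
      intro x hx hx2
      exact (mem_sdiff.1 (mem_inter.1 hx).2).2 (mem_inter.1 hx2).2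
  have hSC : (SU \ C).card ≤ 2 * t := by
    have h1 : ∑ x ∈ SU \ C, n ≤ ∑ x ∈ SU \ C, ((nb x ∩ G).card + ψ) := by
      apply sum_le_sum
      intro x hx
      have h2 := (mem_filter.1 (mem_sdiff.1 hx).1).2
      have h3 := card_inter_add_card_sdiff (nb x) (N U)
      rw [card_nb] at h3
      have h4 : (nb x ∩ N U).card ≤ (nb x ∩ G).card :=
        card_le_card (inter_subset_inter_left hNUG)
      omega
    rw [sum_add_distrib, sum_const, sum_const, smul_eq_mul, smul_eq_mul] at h1
    set q := (SU \ C).card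
    rw [ht] at hE
    have h5 : q * (2 * ψ) ≤ q * n := Nat.mul_le_mul_left _ hψ
    have h6 : n * q ≤ n * (2 * t) := by linarith
    exact Nat.le_of_mul_le_mul_left h6 hn
  have hGF : (G \ F).card ≤ 2 * t := by
    have h1 : ∑ y ∈ G, (nb y ∩ C).card ≤ (G \ F).card * ψ + (G ∩ F).card * n := by
      rw [← sum_sdiff (inter_subset_left : G ∩ F ⊆ G), sdiff_inter_self_left]
      apply add_le_add
      · rw [← smul_eq_mul, ← sum_const]
        apply sum_le_sum
        intro y hy
        rw [mem_sdiff] at hy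
        have h2 : ¬ (ψ < (nb y ∩ S).card) := by
          intro h
          exact hy.2 (mem_union_right _ (mem_filter.2 ⟨hGP hy.1, h⟩))
        exact (card_le_card (inter_subset_inter_left hCS)).trans (not_lt.1 h2)
      · rw [← smul_eq_mul, ← sum_const]
        apply sum_le_sum
        intro y _
        conv_rhs => rw [← card_nb y]
        exact card_le_card inter_subset_left
    rw [← edge_swap, hnat] at h1
    have h3 := card_inter_add_card_sdiff G F
    set q := (G \ F).card
    have h5 : q * (2 * ψ) ≤ q * n := Nat.mul_le_mul_left _ hψ
    have h7 : (G ∩ F).card * n + q * n = (C.card + t) * n := by rw [← add_mul, h3, ht]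
    have h6 : n * q ≤ n * (2 * t) := by linarith
    exact Nat.le_of_mul_le_mul_left h6 hn
  have hSF : n * S.card ≤ n * F.card + 4 * ψ * t := by
    have h0 : ∑ x ∈ S, (nb x ∩ F).card ≤ n * F.card := by
      rw [edge_swap, mul_comm, ← smul_eq_mul, ← sum_const]
      apply sum_le_sum
      intro y _
      conv_rhs => rw [← card_nb y]
      exact card_le_card inter_subset_left
    have h1 : ∑ x ∈ S, (nb x ∩ (G \ F)).card ≤ (G \ F).card * ψ := by
      rw [edge_swap, ← smul_eq_mul, ← sum_const]
      apply sum_le_sum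
      intro y hy
      rw [mem_sdiff] at hy
      by_contra h
      exact hy.2 (mem_union_right _ (mem_filter.2 ⟨hGP hy.1, not_le.1 h⟩))
    have h2 : ∑ x ∈ S, (nb x \ G).card ≤ (SU \ C).card * ψ := by
      have h3 : ∑ x ∈ S, (nb x \ G).card = ∑ x ∈ S \ C, (nb x \ G).card := by
        rw [← sum_sdiff hCS]
        rw [sum_eq_zero (s := C), add_zero]
        intro x hx
        rw [sdiff_eq_empty_iff_subset.2 (hCG x hx), card_empty]
      rw [h3]
      calc _ ≤ ∑ x ∈ S \ C, ψ := by
            apply sum_le_sum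
            intro x hx
            have hx2 := (mem_sdiff.1 (mem_sdiff.1 hx).1).1
            exact (card_le_card (sdiff_subset_sdiff Subset.rfl hNUG)).trans (mem_filter.1 hx2).2
        _ = (S \ C).card * ψ := by simp
        _ ≤ _ := Nat.mul_le_mul_right _ (card_le_card (sdiff_subset_sdiff sdiff_subset Subset.rfl))
    have h4 : n * S.card = ∑ x ∈ S, ((nb x ∩ F).card + (nb x ∩ (G \ F)).card + (nb x \ G).card) := by
      rw [sum_congr rfl (g := fun _ => n)]
      · simp [mul_comm]
      · intro x _
        have a1 := card_inter_add_card_sdiff (nb x) G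
        have a2 := card_inter_add_card_sdiff (nb x ∩ G) F
        rw [card_nb] at a1
        have a3 : nb x ∩ G ∩ F = nb x ∩ F := by
          rw [inter_assoc, inter_eq_right.2 hFG]
        rw [a3, inter_sdiff_assoc] at a2
        omega
    rw [sum_add_distrib, sum_add_distrib] at h4
    have h5 : (G \ F).card * ψ ≤ 2 * t * ψ := Nat.mul_le_mul_right _ hGF
    have h6 : (SU \ C).card * ψ ≤ 2 * t * ψ := Nat.mul_le_mul_right _ hSC
    linarith
  have hWc2 : W.card * ψ ≤ 2 * t := by
    refine hWc.trans (le_trans (card_le_card ?_) hSC)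
    intro x hx
    rw [mem_inter] at hx
    rw [mem_sdiff]
    refine ⟨hx.2, fun h => ?_⟩
    obtain ⟨w, hw, hxw⟩ := mem_N.1 hx.1
    exact hWG w hw (hCG x h (nb_symm.1 hxw))
  refine ⟨U ∪ W, ?_, hUne.mono subset_union_left, ?_, ?_, ?_, ?_, ?_⟩
  · apply linked_of_near hUL subset_union_left
    intro x hx
    rcases mem_union.1 hx with h | h
    · exact ⟨x, h, by simp⟩
    · obtain ⟨s, hs⟩ := (mem_filter.1 (hWX h)).2
      rw [mem_inter] at hs
      exact near3 s hs.2 x (nb_symm.1 hs.1)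
  · have h1 := Nat.mul_le_mul_right ψ (card_union_le U W)
    have h2 := card_le_card hNUG
    rw [add_mul] at h1
    omega
  · rw [eSS]; exact hCS
  · rw [eFF]; exact hFG
  · rw [eSS, eFF]; exact hSF
  · rw [eFF, hT1]
    apply linked_of_near hUL subset_union_left
    intro x hx
    rcases mem_union.1 hx with h | h
    · exact ⟨x, h, by simp⟩
    · rw [mem_sdiff] at h
      obtain ⟨c, hc, hxc⟩ := mem_N.1 (hNC.symm ▸ h.1 : x ∈ N C)
      exact near3 c (hCSU hc) x hxc

end HC

namespace HC
open Finset
open scoped Classical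

noncomputable def fam (n : ℕ) (b : ZMod 2) (a g : ℕ) : Finset (Finset (V n)) :=
  (P n b).powerset.filter (fun A => A.Nonempty ∧ Linked 2 A ∧ (cl b A).card = a ∧ (N A).card = g)

lemma card_cand' {n L : ℕ} (hL : n + 1 ≤ 2^L) (k M : ℕ) :
    (cand n k M).card ≤ 2^(n + 2 * k * L * M) := by
  refine (card_cand n k M).trans ?_
  rw [pow_add]
  apply Nat.mul_le_mul_left
  calc ((n+1)^k)^(2*M) ≤ ((2^L)^k)^(2*M) := by gcongr
    _ = _ := by rw [← pow_mul, ← pow_mul]; congr 1; ring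

lemma card_biUnion_powerset {n : ℕ} {ι : Type*} (I : Finset ι) (s : ι → Finset (V n)) (m : ℕ)
    (h : ∀ i ∈ I, (s i).card ≤ m) : (I.biUnion (fun i => (s i).powerset)).card ≤ I.card * 2^m := by
  apply card_biUnion_le_card_mul
  intro i hi
  rw [card_powerset]
  exact Nat.pow_le_pow_right (by norm_num) (h i hi)

lemma count_ag {n L : ℕ} (hn : 0 < n) (hL : n + 1 ≤ 2^L) (b : ZMod 2) (a t ψ δ M : ℕ)
    (hψ : 2 * ψ ≤ n) (hM : ∀ m, m * ψ ≤ a + t + 2 * t → m ≤ M) (hδ : 4 * ψ * t ≤ n * δ)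
    (hδg : δ ≤ a + t) (h1 : n + 12 * L * M + 5 * n ≤ δ)
    (h2 : 2 * n + 24 * L * M + 24 * L * δ + 5 * n ≤ t) :
    (fam n b a (a+t)).card * 2^(5*n) ≤ 2^(a+t+1) := by
  set I1 := (cand n 6 M).filter (fun T => (SS b ψ T).card ≤ a + t - δ) with hI1
  set cC : Finset (V n) × Finset (V n) → Finset (V n) := fun p =>
    (P n b).filter (fun x => nb x ⊆ FF b ψ p.1 ∪ (p.2 ∩ P n (b+1))) with hcC
  set I2 := (cand n 6 M ×ˢ cand n 6 (M + 2 * δ)).filter (fun p => (cC p).card ≤ a) with hI2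
  have hsub : fam n b a (a+t) ⊆ I1.biUnion (fun T => (SS b ψ T).powerset) ∪
      I2.biUnion (fun p => (cC p).powerset) := by
    intro A hA
    rw [fam, mem_filter, mem_powerset] at hA
    obtain ⟨hAP, hAne, hAL, hAa, hAg⟩ := hA
    obtain ⟨T, hTL, hTne, hTc, hCS, hFG, hSF, hT2L⟩ := container hn hAP hAne hAL ψ t hψ
      (by rw [hAa, hAg])
    rw [hAg] at hTc
    have hTM : T ∈ cand n 6 M := mem_cand hTL hTne (hM _ hTc)
    have hAC : A ⊆ cl b A := sub_cl hAP
    rw [mem_union, mem_biUnion, mem_biUnion]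
    by_cases hc : (N A \ FF b ψ T).card ≤ 2 * δ
    · right
      set T2 := (T ∩ P n b) ∪ (N A \ FF b ψ T) with hT2
      have hT2P : T2 ∩ P n (b+1) = N A \ FF b ψ T := by
        ext x
        rw [mem_inter, hT2, mem_union, mem_inter]
        constructor
        · rintro ⟨h | h, hx⟩
          · exact (P_disj h.2 hx).elim
          · exact h
        · intro h
          exact ⟨Or.inr h, N_sub_P hAP (mem_sdiff.1 h).1⟩
      have hcl : cC (T, T2) = cl b A := by
        simp only [hcC, hT2P, cl]
        rw [union_sdiff_of_subset hFG]
      refine ⟨(T, T2), ?_, ?_⟩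
      · rw [hI2, mem_filter, mem_product]
        refine ⟨⟨hTM, mem_cand hT2L ?_ ?_⟩, ?_⟩
        · have hNne : (N A).Nonempty := by
            rw [← card_pos]
            exact lt_of_lt_of_le (card_pos.2 hAne) (card_le_N hn A)
          by_contra hemp
          rw [not_nonempty_iff_eq_empty, union_eq_empty] at hemp
          obtain ⟨y, hy⟩ := hNne
          have hF0 : F0 b T = ∅ := by rw [F0, hemp.1]; simp [N]
          obtain ⟨x, hx⟩ := hAne
          have hx1 := (mem_filter.1 (mem_sdiff.1 (hCS (hAC hx))).1).2
          rw [hF0, sdiff_empty, card_nb] at hx1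
          omega
        · have h3 : (T ∩ P n b).card ≤ M := (card_le_card inter_subset_left).trans (hM _ hTc)
          show T2.card ≤ M + 2 * δ
          have h4 : T2.card ≤ (T ∩ P n b).card + (N A \ FF b ψ T).card := card_union_le _ _
          omega
        · rw [hcl, hAa]
      · rw [mem_powerset, hcl]; exact hAC
    · left
      refine ⟨T, ?_, mem_powerset.2 (hAC.trans hCS)⟩
      rw [hI1, mem_filter]
      refine ⟨hTM, ?_⟩
      have h3 := card_sdiff_add_card_eq_card hFG
      rw [hAg] at h3
      have h4 : n * (SS b ψ T).card ≤ n * ((FF b ψ T).card + δ) := by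
        rw [mul_add]; omega
      have h5 := Nat.le_of_mul_le_mul_left h4 hn
      omega
  have hc1 : (I1.biUnion (fun T => (SS b ψ T).powerset)).card ≤
      2^(n + 12 * L * M) * 2^(a + t - δ) := by
    refine (card_biUnion_powerset I1 _ (a + t - δ) (fun T hT => (mem_filter.1 hT).2)).trans ?_
    apply Nat.mul_le_mul_right
    exact (card_filter_le _ _).trans (card_cand' hL 6 M)
  have hc2 : (I2.biUnion (fun p => (cC p).powerset)).card ≤
      (2^(n + 12 * L * M) * 2^(n + 12 * L * (M + 2 * δ))) * 2^a := by
    refine (card_biUnion_powerset I2 _ a (fun T hT => (mem_filter.1 hT).2)).trans ?_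
    apply Nat.mul_le_mul_right
    refine (card_filter_le _ _).trans ?_
    rw [card_product]
    exact Nat.mul_le_mul (card_cand' hL 6 M) (card_cand' hL 6 _)
  have hc := (card_le_card hsub).trans ((card_union_le _ _).trans (add_le_add hc1 hc2))
  refine (Nat.mul_le_mul_right _ hc).trans ?_
  rw [add_mul, ← pow_add, ← pow_add, ← pow_add, ← pow_add, ← pow_add, pow_succ, mul_two]
  apply add_le_add
  · apply Nat.pow_le_pow_right (by norm_num)
    omega
  · apply Nat.pow_le_pow_right (by norm_num)
    have : 12 * L * (M + 2 * δ) = 12 * L * M + 24 * L * δ := by ring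
    have : 24 * L * M = 12 * L * M + 12 * L * M := by ring
    omega

set_option maxHeartbeats 2000000 in
/-- large regime, with parameters chosen -/
lemma large {n L : ℕ} (hL1 : 1 ≤ L) (hL : n + 1 ≤ 2^L) (hbig : (10:ℝ)^8 * L^3 ≤ Real.sqrt n)
    (b : ZMod 2) (a g : ℕ) (ha : 4 * a ≤ 2^n) (hg : n^2 < 48 * L * g) :
    (fam n b a g).card * 2^(5*n) ≤ 2^(g+1) := by
  by_cases hne : (fam n b a g) = ∅
  · rw [hne]; simp
  obtain ⟨A, hA⟩ := nonempty_iff_ne_empty.2 hne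
  rw [fam, mem_filter, mem_powerset] at hA
  obtain ⟨hAP, hAne, hAL, hAa, hAg⟩ := hA
  set s := Real.sqrt n with hs
  have hL1r : (1:ℝ) ≤ L := by exact_mod_cast hL1
  have hL3 : (1:ℝ) ≤ L^3 := one_le_pow₀ hL1r
  have hs1 : (10:ℝ)^8 ≤ s := by nlinarith
  have hss : s * s = n := Real.mul_self_sqrt (Nat.cast_nonneg n)
  have hn : 0 < n := by
    have : (0:ℝ) < n := by rw [← hss]; nlinarith
    exact_mod_cast this
  have hiso := iso hn (cl b A) (by rw [hAa]; exact ha)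
  rw [N_cl hAP, hAa, hAg] at hiso
  have hag : a ≤ g := by
    have := card_le_N hn (cl b A)
    rwa [N_cl hAP, hAa, hAg] at this
  obtain ⟨t, rfl⟩ := Nat.exists_eq_add_of_le hag
  push_cast at hiso
  have ht0 : (0:ℝ) ≤ t := Nat.cast_nonneg t
  have hgt : ((a + t : ℕ) : ℝ) ≤ 5 * s * t := by push_cast; nlinarith
  have hgr : (n:ℝ)^2 < 48 * L * ((a + t : ℕ) : ℝ) := by exact_mod_cast hg
  have hLpos : (0:ℝ) < L := by linarith
  -- t is large
  have ht : s^3 ≤ 240 * L * t := by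
    have h1 : s^3 * s < 240 * L * t * s := by
      calc s^3 * s = (n:ℝ)^2 := by rw [← hss]; ring
        _ < 48 * L * ((a + t : ℕ) : ℝ) := hgr
        _ ≤ 48 * L * (5 * s * t) := by gcongr
        _ = _ := by ring
    exact (lt_of_mul_lt_mul_right h1 (by linarith)).le
  have hLL2 : (L:ℝ) ≤ L^3 := by nlinarith [mul_self_nonneg ((L:ℝ)-1), mul_pos hLpos hLpos]
  have hLs : (10:ℝ)^8 * L ≤ s := by nlinarith
  set ψ := n / (384 * L) with hψ
  set δ := t / (48 * L) with hδ
  have hψ1 : ψ * (384 * L) ≤ n := Nat.div_mul_le_self _ _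
  have hψ2 : n < (ψ + 1) * (384 * L) := by
    have := Nat.lt_div_mul_add (a := n) (b := 384 * L) (by positivity)
    rw [← hψ] at this
    linarith
  have hδ1 : δ * (48 * L) ≤ t := Nat.div_mul_le_self _ _
  have hδ2 : t < (δ + 1) * (48 * L) := by
    have := Nat.lt_div_mul_add (a := t) (b := 48 * L) (by positivity)
    rw [← hδ] at this
    linarith
  have hψ2r : (n:ℝ) < (ψ + 1) * (384 * L) := by exact_mod_cast hψ2
  have hδ2r : (t:ℝ) < (δ + 1) * (48 * L) := by exact_mod_cast hδ2
  have hψ1r : (ψ:ℝ) * (384 * L) ≤ n := by exact_mod_cast hψ1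
  have hδ1r : (δ:ℝ) * (48 * L) ≤ t := by exact_mod_cast hδ1
  have hnL : (768:ℝ) * L ≤ n := by rw [← hss]; nlinarith
  have hψ3 : (n:ℝ) ≤ ψ * (768 * L) := by
    nlinarith
  have ht1 : (10:ℝ)^8 * s ^ 2 ≤ 240 * t := by
    have : (10:ℝ)^8 * s^2 * L ≤ 240 * t * L := by
      calc (10:ℝ)^8 * s^2 * L = s^2 * (10^8 * L) := by ring
        _ ≤ s^2 * s := by gcongr
        _ = s^3 := by ring
        _ ≤ _ := by linarith
    exact le_of_mul_le_mul_right this hLpos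
  have htL : (96:ℝ) * L ≤ t := by nlinarith
  have hδ3 : (t:ℝ) ≤ δ * (96 * L) := by nlinarith
  have hψpos : 0 < ψ := by
    rcases Nat.eq_zero_or_pos ψ with h | h
    · exfalso
      rw [h] at hψ3
      have : (0:ℝ) < n := by exact_mod_cast hn
      simp at hψ3
      omega
    · exact h
  have hψposr : (0:ℝ) < ψ := by exact_mod_cast hψpos
  set M := (a + t + 2 * t) / ψ with hM
  have hM1 : M * ψ ≤ a + t + 2 * t := Nat.div_mul_le_self _ _
  have hM1r : (M:ℝ) * ψ ≤ 3 * (5 * s * t) := by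
    have h3 : (M:ℝ) * ψ ≤ ((a + t : ℕ):ℝ) + 2 * t := by exact_mod_cast hM1
    have h4 : (t:ℝ) ≤ ((a + t : ℕ):ℝ) := by push_cast; linarith [(Nat.cast_nonneg a : (0:ℝ) ≤ a)]
    linarith
  -- M * s ≤ 11520 L t
  have hMs : (M:ℝ) * s ≤ 11520 * L * t := by
    have h5 : (M:ℝ) * s * s ≤ 11520 * L * t * s := by
      calc (M:ℝ) * s * s = M * n := by rw [mul_assoc, hss]
        _ ≤ M * (ψ * (768 * L)) := by gcongr
        _ = M * ψ * (768 * L) := by ring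
        _ ≤ 3 * (5 * s * t) * (768 * L) := by gcongr
        _ = _ := by ring
    exact le_of_mul_le_mul_right h5 (by linarith)
  -- L^2 M ≤ t / 5000
  have hLM : (L:ℝ)^2 * M * 8680 ≤ t := by
    have h6 : (L:ℝ)^2 * M * 8680 * (10^8 * L^3) ≤ t * (10^8 * L^3) := by
      calc (L:ℝ)^2 * M * 8680 * (10^8 * L^3) ≤ (L:ℝ)^2 * M * 8680 * s := by gcongr
        _ = 8680 * L^2 * (M * s) := by ring
        _ ≤ 8680 * L^2 * (11520 * L * t) := by gcongr
        _ = (8680 * 11520) * (t * L^3) := by ring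
        _ ≤ 10^8 * (t * L^3) := by
            apply mul_le_mul_of_nonneg_right (by norm_num) (by positivity)
        _ = _ := by ring
    exact le_of_mul_le_mul_right h6 (by positivity)
  -- L n ≤ t / 10^5
  have hLn : (L:ℝ) * n * 10000 ≤ t := by
    have h8 : (L:ℝ) * n * 10000 * L ≤ t * L := by
      have h9 : (10:ℝ)^8 * L^2 * s^2 ≤ s^3 := by
        have : (10:ℝ)^8 * L^2 ≤ s := by
          have h3 : (L:ℝ)^2 ≤ L^3 := pow_le_pow_right₀ hL1r (by norm_num)
          linarith
        calc (10:ℝ)^8 * L^2 * s^2 ≤ s * s^2 := by gcongr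
          _ = _ := by ring
      have h10 : (n:ℝ) = s^2 := by rw [← hss]; ring
      rw [h10]
      have h20 : (0:ℝ) ≤ L * t := by positivity
      have h21 : (0:ℝ) ≤ L^2 * s^2 := by positivity
      have h22 : (L:ℝ) * s^2 * 10000 * L = 10000 * (L^2 * s^2) := by ring
      rw [h22]
      linarith
    exact le_of_mul_le_mul_right h8 hLpos
  apply count_ag hn hL b a t ψ δ M
  · have : ψ * 2 ≤ ψ * (384 * L) := Nat.mul_le_mul_left _ (by omega)
    omega
  · intro m hm
    rw [hM, Nat.le_div_iff_mul_le hψpos]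
    exact hm
  · have : (4:ℝ) * ψ * t ≤ n * δ := by
      calc (4:ℝ) * ψ * t ≤ 4 * ψ * (δ * (96 * L)) := by gcongr
        _ = ψ * (384 * L) * δ := by ring
        _ ≤ n * δ := by gcongr
    exact_mod_cast this
  · exact (Nat.div_le_self _ _).trans (Nat.le_add_left _ _)
  · have : (n:ℝ) + 12 * L * M + 5 * n ≤ δ := by
      have h11 : ((n:ℝ) + 12 * L * M + 5 * n) * (96 * L) ≤ δ * (96 * L) := by
        refine le_trans ?_ hδ3
        have h20 : (0:ℝ) ≤ L * n := by positivity
        have h21 : (0:ℝ) ≤ L^2 * M := by positivity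
        have h22 : ((n:ℝ) + 12 * L * M + 5 * n) * (96 * L) = 576 * (L * n) + 1152 * (L^2 * M) := by
          ring
        rw [h22]
        linarith
      exact le_of_mul_le_mul_right h11 (by positivity)
    exact_mod_cast this
  · have : (2:ℝ) * n + 24 * L * M + 24 * L * δ + 5 * n ≤ t := by
      have h12 : (L:ℝ) * M ≤ L^2 * M := by
        apply mul_le_mul_of_nonneg_right _ (Nat.cast_nonneg M)
        nlinarith
      have h13 : (n:ℝ) ≤ L * n := by
        have : (0:ℝ) ≤ n := Nat.cast_nonneg n
        nlinarith
      have h20 : (0:ℝ) ≤ L * n := by positivity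
      have h21 : (0:ℝ) ≤ L^2 * M := by positivity
      linarith
    exact_mod_cast this

end HC

namespace HC
open Finset
open scoped Classical

noncomputable def Sset (n : ℕ) (b : ZMod 2) : Finset (Finset (V n)) :=
  (P n b).powerset.filter (fun A => Linked 2 A ∧ 2 ≤ A.card ∧ 4 * (cl b A).card ≤ 2^n)

noncomputable def wt {n : ℕ} (A : Finset (V n)) : ℝ := (1/2:ℝ)^(N A).card

lemma wt_nonneg {n : ℕ} (A : Finset (V n)) : 0 ≤ wt A := by unfold wt; positivity

lemma card_V_le {n : ℕ} (A : Finset (V n)) : A.card ≤ 2^n := by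
  refine (card_le_univ A).trans ?_
  simp [ZMod.card]

lemma small_N {n L : ℕ} (hL1 : 1 ≤ L) (hLn : 26 * L ≤ n) (A : Finset (V n)) (h2 : 2 ≤ A.card)
    (hs : 48 * L * A.card ≤ n^2) : n + 4 * L * A.card + 3 * L ≤ (N A).card := by
  have h := small_exp A
  obtain ⟨i, hi⟩ := Nat.exists_eq_add_of_le h2
  have e1 : A.card - 1 = i + 1 := by omega
  rw [e1] at h
  rw [hi] at h hs ⊢
  have hpos : 0 < (2 + i) * (n + 2 * (i + 1)) := by positivity
  apply Nat.le_of_mul_le_mul_right _ hpos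
  refine le_trans ?_ h
  have key : (n + 4 * L * (2 + i) + 3 * L) * (n + 2 * (i + 1)) ≤ n^2 * (2 + i) := by
    have a1 : 4 * L * (2 + i) + 3 * L ≤ 11 * L * (i + 1) := by nlinarith
    have a2 : 2 * n + 11 * L * n + 22 * L * (i+1) ≤ n^2 := by nlinarith
    calc (n + 4 * L * (2 + i) + 3 * L) * (n + 2 * (i + 1))
        ≤ (n + 11 * L * (i+1)) * (n + 2 * (i + 1)) := by
          apply Nat.mul_le_mul_right; omega
      _ = n^2 + (2 * n + 11 * L * n + 22 * L * (i+1)) * (i+1) := by ring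
      _ ≤ n^2 + n^2 * (i+1) := by gcongr
      _ = _ := by ring
  calc _ = (n + 4 * L * (2 + i) + 3 * L) * (n + 2 * (i + 1)) * (2 + i) := by ring
    _ ≤ n^2 * (2 + i) * (2 + i) := by gcongr
    _ = _ := by ring

lemma S_small {n L : ℕ} (hL1 : 1 ≤ L) (hL : n + 1 ≤ 2^L) (hLn : 26 * L ≤ n) (b : ZMod 2) :
    ∑ A ∈ (Sset n b).filter (fun A => 48 * L * A.card ≤ n^2), wt A ≤ (1/2:ℝ)^L := by
  set s := (Sset n b).filter (fun A => 48 * L * A.card ≤ n^2) with hs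
  have hmaps : ∀ A ∈ s, A.card ∈ range (n^2+1) := by
    intro A hA
    have := (mem_filter.1 hA).2
    rw [mem_range]
    nlinarith
  rw [← sum_fiberwise_of_maps_to hmaps]
  have hin : ∀ j ∈ range (n^2+1), ∑ A ∈ s with A.card = j, wt A ≤ (1/2:ℝ)^(3*L) := by
    intro j _
    have hw : ∀ A ∈ s.filter (fun A => A.card = j), wt A ≤ (1/2:ℝ)^(n + 4 * L * j + 3 * L) := by
      intro A hA
      obtain ⟨hA, hj⟩ := mem_filter.1 hA
      obtain ⟨hA, hsm⟩ := mem_filter.1 hA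
      obtain ⟨hA, hl, h2, _⟩ := mem_filter.1 hA
      have := small_N hL1 hLn A h2 hsm
      rw [hj] at this
      exact pow_le_pow_of_le_one (by norm_num) (by norm_num) this
    have hc : (s.filter (fun A => A.card = j)).card ≤ 2^(n + 4 * L * j) := by
      refine (card_le_card ?_).trans (card_cand' (k := 2) hL j)
      intro A hA
      obtain ⟨hA, hj⟩ := mem_filter.1 hA
      obtain ⟨hA, hsm⟩ := mem_filter.1 hA
      obtain ⟨hA, hl, h2, _⟩ := mem_filter.1 hA
      exact mem_cand hl (card_pos.1 (by omega)) hj.le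
    refine (sum_le_card_nsmul _ _ _ hw).trans ?_
    rw [nsmul_eq_mul]
    calc ((s.filter (fun A => A.card = j)).card : ℝ) * (1/2:ℝ)^(n + 4 * L * j + 3 * L)
        ≤ (2:ℝ)^(n + 4 * L * j) * (1/2:ℝ)^(n + 4 * L * j + 3 * L) := by
          gcongr
          exact_mod_cast hc
      _ = _ := by
          rw [pow_add (1/2:ℝ), ← mul_assoc, ← mul_pow]; norm_num
  refine (sum_le_card_nsmul _ _ _ hin).trans ?_
  rw [card_range, nsmul_eq_mul]
  have h1 : n^2 + 1 ≤ 2^(2*L) := by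
    calc n^2+1 ≤ (n+1)^2 := by nlinarith
      _ ≤ (2^L)^2 := by gcongr
      _ = _ := by rw [← pow_mul, mul_comm]
  calc ((n^2+1 : ℕ):ℝ) * (1/2)^(3*L) ≤ 2^(2*L) * (1/2)^(3*L) := by
        gcongr
        exact_mod_cast h1
    _ = _ := by
      rw [show 3 * L = 2 * L + L by ring, pow_add (1/2:ℝ), ← mul_assoc, ← mul_pow]; norm_num

lemma S_large {n L : ℕ} (hL1 : 1 ≤ L) (hL : n + 1 ≤ 2^L) (hbig : (10:ℝ)^8 * L^3 ≤ Real.sqrt n)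
    (hLn : 26 * L ≤ n) (b : ZMod 2) :
    ∑ A ∈ (Sset n b).filter (fun A => ¬ (48 * L * A.card ≤ n^2)), wt A ≤ (1/2:ℝ)^n := by
  set s := (Sset n b).filter (fun A => ¬ (48 * L * A.card ≤ n^2)) with hs
  have hn : 0 < n := by omega
  set K := range (2^n+1) ×ˢ range (2^n+1) with hK
  have hmaps : ∀ A ∈ s, (fun A => ((cl b A).card, (N A).card)) A ∈ K := by
    intro A hA
    rw [hK, mem_product, mem_range, mem_range]
    exact ⟨Nat.lt_succ_of_le (card_V_le _), Nat.lt_succ_of_le (card_V_le _)⟩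
  rw [← sum_fiberwise_of_maps_to hmaps]
  have hin : ∀ p ∈ K, ∑ A ∈ s with (fun A => ((cl b A).card, (N A).card)) A = p, wt A
      ≤ 2 * (1/2:ℝ)^(5*n) := by
    rintro ⟨a, g⟩ _
    set s' := s.filter (fun A => (fun A => ((cl b A).card, (N A).card)) A = (a, g)) with hs'
    have key : ∀ A ∈ s', (cl b A).card = a ∧ (N A).card = g ∧ A ∈ Sset n b ∧ n^2 < 48 * L * A.card := by
      intro A hA
      obtain ⟨hA, hj⟩ := mem_filter.1 hA
      obtain ⟨hA, hsm⟩ := mem_filter.1 hA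
      simp only [Prod.mk.injEq] at hj
      exact ⟨hj.1, hj.2, hA, not_le.1 hsm⟩
    by_cases hne : s' = ∅
    · rw [hne, sum_empty]; positivity
    obtain ⟨A0, hA0⟩ := nonempty_iff_ne_empty.2 hne
    obtain ⟨ha0, hg0, hS0, hl0⟩ := key A0 hA0
    have hS0' := (mem_filter.1 hS0).2.2.2
    rw [ha0] at hS0'
    have hg : n^2 < 48 * L * g := by
      have := card_le_N hn A0
      rw [hg0] at this
      exact lt_of_lt_of_le hl0 (Nat.mul_le_mul_left _ this)
    have hlarge := large hL1 hL hbig b a g hS0' hg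
    have hc : s'.card ≤ (fam n b a g).card := by
      apply card_le_card
      intro A hA
      obtain ⟨h1, h2, h3, h4⟩ := key A hA
      obtain ⟨h5, h6, h7, h8⟩ := mem_filter.1 h3
      rw [fam, mem_filter]
      exact ⟨h5, card_pos.1 (by omega), h6, h1, h2⟩
    have hw : ∀ A ∈ s', wt A ≤ (1/2:ℝ)^g := by
      intro A hA
      rw [wt, (key A hA).2.1]
    refine (sum_le_card_nsmul _ _ _ hw).trans ?_
    rw [nsmul_eq_mul]
    have hr : (s'.card:ℝ) * 2^(5*n) ≤ 2^(g+1) := by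
      exact_mod_cast (Nat.mul_le_mul_right _ hc).trans hlarge
    have h5 : (2:ℝ)^(5*n) * (1/2:ℝ)^(5*n) = 1 := by rw [← mul_pow]; norm_num
    have h6 : (2:ℝ)^g * (1/2:ℝ)^g = 1 := by rw [← mul_pow]; norm_num
    calc (s'.card:ℝ) * (1/2)^g = (s'.card:ℝ) * 2^(5*n) * ((1/2)^g * (1/2)^(5*n)) := by
          linear_combination (-(s'.card:ℝ) * (1/2)^g) * h5
      _ ≤ 2^(g+1) * ((1/2)^g * (1/2)^(5*n)) := by gcongr
      _ = _ := by rw [pow_succ]; linear_combination (2 * (1/2:ℝ)^(5*n)) * h6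
  refine (sum_le_card_nsmul _ _ _ hin).trans ?_
  rw [hK, card_product, card_range, nsmul_eq_mul]
  have h1 : (2^n+1) * (2^n+1) * 2 ≤ 2^(4*n) := by
    have : 2 ≤ 2^n := by
      calc 2 = 2^1 := rfl
        _ ≤ 2^n := Nat.pow_le_pow_right (by norm_num) hn
    have h4 : 2^26 ≤ 2^n := Nat.pow_le_pow_right (by norm_num) (by omega)
    rw [show 4 * n = n * 4 by ring, pow_mul]
    generalize 2^n = x at *
    calc (x+1)*(x+1)*2 ≤ (x+x)*(x+x)*2 := by gcongr <;> omega
      _ = 8 * x^2 := by ring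
      _ ≤ x^2 * x^2 := by gcongr; nlinarith
      _ = _ := by ring
  have h2 : (((2^n+1) * (2^n+1) : ℕ):ℝ) * 2 ≤ 2^(4*n) := by exact_mod_cast h1
  calc (((2^n+1) * (2^n+1) : ℕ):ℝ) * (2 * (1/2)^(5*n)) = (((2^n+1) * (2^n+1) : ℕ):ℝ) * 2 * (1/2)^(5*n) := by ring
    _ ≤ 2^(4*n) * (1/2)^(5*n) := by gcongr
    _ = _ := by
      rw [show 5 * n = 4 * n + n by ring, pow_add (1/2:ℝ), ← mul_assoc, ← mul_pow]; norm_num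

lemma S_bound {n L : ℕ} (hL1 : 1 ≤ L) (hL : n + 1 ≤ 2^L) (hbig : (10:ℝ)^8 * L^3 ≤ Real.sqrt n)
    (hLn : 26 * L ≤ n) (b : ZMod 2) :
    ∑ A ∈ Sset n b, wt A ≤ 2 / ((n:ℝ) + 1) := by
  rw [← sum_filter_add_sum_filter_not (Sset n b) (fun A => 48 * L * A.card ≤ n^2)]
  have h1 := S_small hL1 hL hLn b
  have h2 := S_large hL1 hL hbig hLn b
  have h3 : (1/2:ℝ)^n ≤ (1/2)^L := pow_le_pow_of_le_one (by norm_num) (by norm_num) (by omega)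
  have h4 : (1/2:ℝ)^L ≤ 1 / ((n:ℝ)+1) := by
    rw [div_pow, one_pow]
    apply one_div_le_one_div_of_le (by positivity)
    exact_mod_cast hL
  calc _ ≤ 1 / ((n:ℝ)+1) + 1 / ((n:ℝ)+1) := by linarith
    _ = _ := by ring

lemma asymp : ∀ᶠ n : ℕ in Filter.atTop, (10:ℝ)^8 * ((Nat.log 2 n + 1 : ℕ):ℝ)^3 ≤ Real.sqrt n := by
  have h := (Real.isLittleO_pow_log_id_atTop (n := 6)).def (c := 1 / (10^16 * 4^6)) (by positivity)
  have h' := (tendsto_natCast_atTop_atTop (R := ℝ)).eventually h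
  filter_upwards [h', Filter.eventually_ge_atTop 4] with n hn h4
  have hlog : ((Nat.log 2 n + 1 : ℕ):ℝ) ≤ 4 * Real.log n := by
    have h1 : ((Nat.log 2 n : ℕ):ℝ) ≤ Real.logb 2 n := by
      have := Real.natLog_le_logb n 2
      simpa using this
    have h2 : (0.6931471803 : ℝ) < Real.log 2 := Real.log_two_gt_d9
    have h3 : Real.log 2 ≤ Real.log n := Real.log_le_log (by norm_num) (by exact_mod_cast (by omega : 2 ≤ n))
    have h5 : Real.logb 2 n * Real.log 2 = Real.log n := by
      rw [Real.logb]; field_simp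
    push_cast
    have h6 : (0:ℝ) ≤ Nat.log 2 n := by positivity
    nlinarith
  apply Real.le_sqrt_of_sq_le
  simp only [id, Real.norm_eq_abs, Nat.abs_cast] at hn
  have h7 : Real.log n ^ 6 ≤ 1 / (10^16 * 4^6) * n := (le_abs_self _).trans hn
  calc ((10:ℝ)^8 * ((Nat.log 2 n + 1 : ℕ):ℝ)^3)^2 = 10^16 * ((Nat.log 2 n + 1 : ℕ):ℝ)^6 := by ring
    _ ≤ 10^16 * (4 * Real.log n)^6 := by gcongr
    _ = 10^16 * 4^6 * Real.log n ^6 := by ring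
    _ ≤ 10^16 * 4^6 * (1 / (10^16 * 4^6) * n) := by gcongr
    _ = n := by field_simp

lemma S_event : ∀ᶠ n : ℕ in Filter.atTop, ∀ b, ∑ A ∈ Sset n b, wt A ≤ 2 / ((n:ℝ) + 1) := by
  filter_upwards [asymp] with n hn b
  set L := Nat.log 2 n + 1 with hLd
  have hL1 : 1 ≤ L := by omega
  have hL : n + 1 ≤ 2^L := Nat.lt_pow_succ_log_self (by norm_num) n
  have hL1r : (1:ℝ) ≤ L := by exact_mod_cast hL1
  refine S_bound hL1 hL hn ?_ b
  have h1 : (L:ℝ) ≤ L^3 := by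
    simpa using pow_le_pow_right₀ hL1r (by norm_num : 1 ≤ 3)
  have h2 : (10:ℝ)^8 * L ≤ Real.sqrt n := by linarith
  have h3 := Real.mul_self_sqrt (Nat.cast_nonneg (α := ℝ) n)
  have h4 : (26:ℝ) * L ≤ n := by nlinarith
  exact_mod_cast h4

end HC

namespace HC
open Finset
open scoped Classical

noncomputable def Zset (n : ℕ) (b : ZMod 2) : Finset (Finset (V n)) :=
  (P n b).powerset.filter (fun A => 4 * (cl b A).card ≤ 2^n)

def Sgl {n : ℕ} (A : Finset (V n)) : Prop :=
  ∀ x ∈ A, ∀ y ∈ A, hammingDist x y ≤ 2 → x = y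

lemma sgl_N {n : ℕ} {A : Finset (V n)} (h : Sgl A) : (N A).card = n * A.card := by
  rw [N, card_biUnion]
  · simp only [card_nb]
    rw [sum_const, smul_eq_mul, mul_comm]
  · intro x hx y hy hxy
    rw [Function.onFun, disjoint_left]
    intro z hz hz'
    exact hxy (h x hx y hy (dist_share hz hz'))

lemma sgl_sum {n : ℕ} (hn : 0 < n) (b : ZMod 2) (m : ℕ) :
    ∑ A ∈ (P n b).powerset.filter (fun A => Sgl A ∧ m ≤ A.card), wt A ≤ 2 * (1/2:ℝ)^m := by
  set s := (P n b).powerset.filter (fun A => Sgl A ∧ m ≤ A.card) with hs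
  have hmaps : ∀ A ∈ s, A.card ∈ Ico m (2^n+1) := by
    intro A hA
    rw [mem_Ico]
    exact ⟨(mem_filter.1 hA).2.2, Nat.lt_succ_of_le (card_V_le _)⟩
  rw [← sum_fiberwise_of_maps_to hmaps]
  have hin : ∀ j ∈ Ico m (2^n+1), ∑ A ∈ s with A.card = j, wt A ≤ (1/2:ℝ)^j := by
    intro j _
    have hw : ∀ A ∈ s.filter (fun A => A.card = j), wt A ≤ (1/2:ℝ)^(n*j) := by
      intro A hA
      obtain ⟨hA, hj⟩ := mem_filter.1 hA
      rw [wt, sgl_N (mem_filter.1 hA).2.1, hj]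
    have hc : (s.filter (fun A => A.card = j)).card ≤ (2^(n-1))^j := by
      refine le_trans (card_le_card (t := (P n b).powersetCard j) ?_) ?_
      · intro A hA
        obtain ⟨hA, hj⟩ := mem_filter.1 hA
        rw [mem_powersetCard]
        exact ⟨mem_powerset.1 (mem_filter.1 hA).1, hj⟩
      · rw [card_powersetCard, card_P hn]
        exact Nat.choose_le_pow _ _
    refine (sum_le_card_nsmul _ _ _ hw).trans ?_
    rw [nsmul_eq_mul]
    calc ((s.filter (fun A => A.card = j)).card : ℝ) * (1/2:ℝ)^(n*j)
        ≤ ((2:ℝ)^(n-1))^j * (1/2:ℝ)^(n*j) := by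
          gcongr
          exact_mod_cast hc
      _ = _ := by
          obtain ⟨m, rfl⟩ : ∃ m, n = m + 1 := ⟨n-1, by omega⟩
          rw [pow_mul, ← mul_pow]
          congr 1
          rw [Nat.add_sub_cancel, pow_succ, ← mul_assoc, ← mul_pow]; norm_num
  refine (sum_le_sum hin).trans ?_
  refine (geom_sum_Ico_le_of_lt_one (by norm_num) (by norm_num)).trans ?_
  apply le_of_eq
  ring

/-- splitting off a 2-linked component -/
lemma split {n : ℕ} {b : ZMod 2} {A : Finset (V n)} (hA : A ∈ Zset n b) (hs : ¬ Sgl A) :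
    ∃ p : Finset (V n) × Finset (V n), p ∈ Sset n b ×ˢ Zset n b ∧ p.1 ∪ p.2 = A ∧
      wt A = wt p.1 * wt p.2 := by
  obtain ⟨hAP, hAc⟩ := mem_filter.1 hA
  rw [mem_powerset] at hAP
  unfold Sgl at hs
  push Not at hs
  obtain ⟨x, hx, y, hy, hd, hxy⟩ := hs
  set γ := A.filter (fun z => Relation.ReflTransGen (Rel 2 A) x z) with hγ
  have hγA : γ ⊆ A := filter_subset _ _
  have hxγ : x ∈ γ := mem_filter.2 ⟨hx, .refl⟩
  have hyγ : y ∈ γ := mem_filter.2 ⟨hy, .single ⟨hx, hy, hd⟩⟩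
  have hpath : ∀ z, Relation.ReflTransGen (Rel 2 A) x z → Relation.ReflTransGen (Rel 2 γ) x z := by
    intro z hz
    induction hz with
    | refl => exact .refl
    | tail h1 h2 ih =>
      refine ih.tail ⟨mem_filter.2 ⟨h2.1, h1⟩, mem_filter.2 ⟨h2.2.1, h1.tail h2⟩, h2.2.2⟩
  have hlink : Linked 2 γ := by
    intro u hu v hv
    have h1 := hpath u (mem_filter.1 hu).2
    have h2 := hpath v (mem_filter.1 hv).2
    exact (rtg_symm h1).trans h2
  have h2 : 2 ≤ γ.card := by
    have : 1 < γ.card := one_lt_card.2 ⟨x, hxγ, y, hyγ, hxy⟩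
    omega
  have hcl : ∀ B ⊆ A, 4 * (cl b B).card ≤ 2^n := fun B hB =>
    (Nat.mul_le_mul_left 4 (card_le_card (cl_mono hB))).trans hAc
  refine ⟨(γ, A \ γ), ?_, ?_, ?_⟩
  · rw [mem_product]
    refine ⟨mem_filter.2 ⟨mem_powerset.2 (hγA.trans hAP), hlink, h2, hcl _ hγA⟩,
      mem_filter.2 ⟨mem_powerset.2 (sdiff_subset.trans hAP), hcl _ sdiff_subset⟩⟩
  · exact union_sdiff_of_subset hγA
  · have hN : N A = N γ ∪ N (A \ γ) := by
      conv_lhs => rw [← union_sdiff_of_subset hγA]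
      ext z
      simp only [mem_N, mem_union]
      constructor
      · rintro ⟨u, hu | hu, h⟩
        · exact Or.inl ⟨u, hu, h⟩
        · exact Or.inr ⟨u, hu, h⟩
      · rintro (⟨u, hu, h⟩ | ⟨u, hu, h⟩)
        · exact ⟨u, Or.inl hu, h⟩
        · exact ⟨u, Or.inr hu, h⟩
    have hdis : Disjoint (N γ) (N (A \ γ)) := by
      rw [disjoint_left]
      intro z hz hz'
      obtain ⟨u, hu, h⟩ := mem_N.1 hz
      obtain ⟨v, hv, h'⟩ := mem_N.1 hz'
      obtain ⟨hv1, hv2⟩ := mem_sdiff.1 hv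
      apply hv2
      refine mem_filter.2 ⟨hv1, (mem_filter.1 hu).2.tail ⟨hγA hu, hv1, dist_share h h'⟩⟩
    simp only [wt]
    rw [hN, card_union_of_disjoint hdis, pow_add]

lemma nonsgl_sum {n : ℕ} (b : ZMod 2) :
    ∑ A ∈ (Zset n b).filter (fun A => ¬ Sgl A), wt A ≤
      (∑ A ∈ Sset n b, wt A) * (∑ A ∈ Zset n b, wt A) := by
  have h : ∀ A : Finset (V n), ∃ p : Finset (V n) × Finset (V n),
      A ∈ (Zset n b).filter (fun A => ¬ Sgl A) → p ∈ Sset n b ×ˢ Zset n b ∧ p.1 ∪ p.2 = A ∧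
      wt A = wt p.1 * wt p.2 := by
    intro A
    by_cases hA : A ∈ (Zset n b).filter (fun A => ¬ Sgl A)
    · obtain ⟨p, hp⟩ := split (mem_filter.1 hA).1 (mem_filter.1 hA).2
      exact ⟨p, fun _ => hp⟩
    · exact ⟨(∅, ∅), fun h => (hA h).elim⟩
  choose f hf using h
  set s := (Zset n b).filter (fun A => ¬ Sgl A) with hs
  have hinj : Set.InjOn f s := by
    intro A hA B hB hAB
    have h1 := (hf A hA).2.1
    have h2 := (hf B hB).2.1
    rw [← h1, ← h2, hAB]
  calc ∑ A ∈ s, wt A = ∑ A ∈ s, wt (f A).1 * wt (f A).2 :=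
        sum_congr rfl (fun A hA => (hf A hA).2.2)
    _ = ∑ p ∈ s.image f, wt p.1 * wt p.2 := by
        rw [sum_image hinj]
    _ ≤ ∑ p ∈ Sset n b ×ˢ Zset n b, wt p.1 * wt p.2 := by
        apply sum_le_sum_of_subset_of_nonneg
        · intro p hp
          obtain ⟨A, hA, rfl⟩ := mem_image.1 hp
          exact (hf A hA).1
        · intro p _ _
          exact mul_nonneg (wt_nonneg _) (wt_nonneg _)
    _ = _ := by rw [sum_product, sum_mul_sum]

lemma Z_bound {n : ℕ} (hn : 0 < n) (b : ZMod 2) (m : ℕ) (hS : ∑ A ∈ Sset n b, wt A ≤ 1/2) :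
    ∑ A ∈ (Zset n b).filter (fun A => m ≤ A.card), wt A ≤
      2 * (1/2:ℝ)^m + 4 * ∑ A ∈ Sset n b, wt A := by
  have gen : ∀ m, ∑ A ∈ (Zset n b).filter (fun A => m ≤ A.card), wt A ≤
      2 * (1/2:ℝ)^m + (∑ A ∈ Sset n b, wt A) * (∑ A ∈ Zset n b, wt A) := by
    intro m
    rw [← sum_filter_add_sum_filter_not _ (fun A => Sgl A)]
    apply add_le_add
    · refine le_trans (sum_le_sum_of_subset_of_nonneg ?_ (fun _ _ _ => wt_nonneg _)) (sgl_sum hn b m)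
      intro A hA
      obtain ⟨hA, h1⟩ := mem_filter.1 hA
      obtain ⟨hA, h2⟩ := mem_filter.1 hA
      exact mem_filter.2 ⟨(mem_filter.1 hA).1, h1, h2⟩
    · refine le_trans (sum_le_sum_of_subset_of_nonneg ?_ (fun _ _ _ => wt_nonneg _)) (nonsgl_sum b)
      intro A hA
      obtain ⟨hA, h1⟩ := mem_filter.1 hA
      obtain ⟨hA, h2⟩ := mem_filter.1 hA
      exact mem_filter.2 ⟨hA, h1⟩
  have h0 := gen 0
  have hm := gen m
  rw [filter_true_of_mem (fun _ _ => Nat.zero_le _)] at h0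
  have hZ0 : 0 ≤ ∑ A ∈ Zset n b, wt A := sum_nonneg (fun _ _ => wt_nonneg _)
  have hS0 : 0 ≤ ∑ A ∈ Sset n b, wt A := sum_nonneg (fun _ _ => wt_nonneg _)
  set Z := ∑ A ∈ Zset n b, wt A
  set S := ∑ A ∈ Sset n b, wt A
  have hZ : Z ≤ 4 := by
    rw [pow_zero] at h0
    nlinarith
  nlinarith

noncomputable def G (n : ℕ) (k : ℕ) (b : ZMod 2) : Finset (Finset (V n)) :=
  univ.filter (fun I => (∀ x ∈ I, ∀ y ∈ I, ¬ (Q n).Adj x y) ∧ k < (I ∩ P n b).card ∧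
    4 * (cl b (I ∩ P n b)).card ≤ 2^n)

lemma adj_of_nb {n : ℕ} {x y : V n} (h : y ∈ nb x) : (Q n).Adj x y := by
  have hd : hammingDist x y = 1 := dist_nb h
  rw [Q, SimpleGraph.fromRel_adj]
  refine ⟨?_, Or.inl hd⟩
  rintro rfl
  simp at hd

lemma indep_sub {n : ℕ} {I : Finset (V n)} (hI : ∀ x ∈ I, ∀ y ∈ I, ¬ (Q n).Adj x y) (b c : ZMod 2) :
    ∀ y ∈ I ∩ P n c, y ∉ N (I ∩ P n b) := by
  intro y hy hyN
  obtain ⟨x, hx, h⟩ := mem_N.1 hyN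
  exact hI x (mem_inter.1 hx).1 y (mem_inter.1 hy).1 (adj_of_nb h)

lemma card_G {n : ℕ} (hn : 0 < n) (k : ℕ) (b : ZMod 2) :
    ((G n k b).card : ℝ) ≤ 2^2^(n-1) * ∑ A ∈ (Zset n b).filter (fun A => k + 1 ≤ A.card), wt A := by
  have hmaps : ∀ I ∈ G n k b, (fun I => I ∩ P n b) I ∈ (Zset n b).filter (fun A => k + 1 ≤ A.card) := by
    intro I hI
    obtain ⟨_, _, h2, h3⟩ := mem_filter.1 hI
    exact mem_filter.2 ⟨mem_filter.2 ⟨mem_powerset.2 inter_subset_right, h3⟩, h2⟩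
  rw [card_eq_sum_card_fiberwise hmaps]
  push_cast
  rw [mul_sum]
  apply sum_le_sum
  intro A hA
  have hAP : A ⊆ P n b := mem_powerset.1 (mem_filter.1 (mem_filter.1 hA).1).1
  have hNP := N_sub_P hAP
  have hc : ((G n k b).filter (fun I => (fun I => I ∩ P n b) I = A)).card ≤
      ((P n (b+1) \ N A).powerset).card := by
    apply card_le_card_of_injOn (fun I => I ∩ P n (b+1))
    · intro I hI
      obtain ⟨hI, hIA⟩ := mem_filter.1 hI
      obtain ⟨_, h1, _⟩ := mem_filter.1 hI
      have hIA : I ∩ P n b = A := hIA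
      simp only [coe_powerset, Set.mem_preimage, Set.mem_powerset_iff, coe_subset]
      intro y hy
      have := indep_sub h1 b (b+1) y hy
      rw [hIA] at this
      exact mem_sdiff.2 ⟨(mem_inter.1 hy).2, this⟩
    · intro I hI J hJ hIJ
      have h1 : I ∩ P n b = A := (mem_filter.1 hI).2
      have h2 : J ∩ P n b = A := (mem_filter.1 hJ).2
      have hIJ : I ∩ P n (b+1) = J ∩ P n (b+1) := hIJ
      have hu : ∀ K : Finset (V n), K = (K ∩ P n b) ∪ (K ∩ P n (b+1)) := by
        intro K
        ext z
        rw [mem_union, mem_inter, mem_inter, mem_P, mem_P]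
        have := bcase b (par z)
        tauto
      rw [hu I, hu J, h1, h2, hIJ]
  rw [card_powerset, card_sdiff_of_subset hNP, card_P hn] at hc
  have hle : (N A).card ≤ 2^(n-1) := by
    have := card_le_card hNP
    rwa [card_P hn] at this
  calc (((G n k b).filter (fun I => (fun I => I ∩ P n b) I = A)).card : ℝ)
      ≤ 2^(2^(n-1) - (N A).card) := by exact_mod_cast hc
    _ = 2^2^(n-1) * wt A := by
      rw [wt]
      obtain ⟨m, hm⟩ := Nat.exists_eq_add_of_le hle
      rw [hm, Nat.add_sub_cancel_left, pow_add, mul_assoc, mul_comm ((2:ℝ)^m), ← mul_assoc, ← mul_pow]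
      norm_num

lemma cover {n k : ℕ} (hn : 2 ≤ n) (I : Finset (V n)) (hI : ∀ x ∈ I, ∀ y ∈ I, ¬ (Q n).Adj x y)
    (hk : k < min (I ∩ evens n).card (I ∩ odds n).card) : I ∈ G n k 0 ∪ G n k 1 := by
  rw [evens_eq, odds_eq, lt_min_iff] at hk
  rw [mem_union, G, G, mem_filter, mem_filter]
  by_cases h : 4 * (cl 0 (I ∩ P n 0)).card ≤ 2^n
  · exact Or.inl ⟨mem_univ _, hI, hk.1, h⟩
  · right
    refine ⟨mem_univ _, hI, hk.2, ?_⟩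
    have h1 : (cl 0 (I ∩ P n 0)).card ≤ (N (I ∩ P n 0)).card := by
      have := card_le_N (by omega : 0 < n) (cl 0 (I ∩ P n 0))
      rwa [N_cl inter_subset_right] at this
    have hNP : N (I ∩ P n 0) ⊆ P n 1 := by
      have := N_sub_P (inter_subset_right : I ∩ P n 0 ⊆ P n 0)
      simpa using this
    have hdis : Disjoint (cl 1 (I ∩ P n 1)) (N (I ∩ P n 0)) := by
      rw [disjoint_left]
      intro y hy hyN
      obtain ⟨x, hx, hxy⟩ := mem_N.1 hyN
      have hx2 : x ∈ N (I ∩ P n 1) := (mem_cl.1 hy).2 (nb_symm.1 hxy)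
      exact indep_sub hI 1 0 x hx hx2
    have h2 := card_le_card (union_subset (cl_sub_P : cl 1 (I ∩ P n 1) ⊆ P n 1) hNP)
    rw [card_union_of_disjoint hdis, card_P (by omega)] at h2
    have h3 : 2^n = 2 * 2^(n-1) := by
      rw [← pow_succ']; congr 1; omega
    omega

end HC

/-- If `k(n) → ∞`, the number of independent sets `I` in `Qₙ` with
`min{|I ∩ ℰ|, |I ∩ 𝒪|} > k(n)` is `o(2^(2^(n−1)))`. -/
theorem count_balanced_indep_sets
    (k : ℕ → ℕ) (hk : Filter.Tendsto k Filter.atTop Filter.atTop) :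
    ∀ ε : ℝ, 0 < ε → ∃ n₀ : ℕ, ∀ n : ℕ, n₀ ≤ n →
      ({I : Finset (V n) | (∀ x ∈ I, ∀ y ∈ I, ¬ (Q n).Adj x y) ∧
          k n < min (I ∩ evens n).card (I ∩ odds n).card}.ncard : ℝ) ≤
        ε * 2 ^ 2 ^ (n - 1) := by
  intro ε hε
  have t1 : Filter.Tendsto (fun n => (1/2:ℝ)^(k n)) Filter.atTop (nhds 0) :=
    (tendsto_pow_atTop_nhds_zero_of_lt_one (by norm_num) (by norm_num)).comp hk
  have t2 : Filter.Tendsto (fun n : ℕ => 1 / ((n:ℝ)+1)) Filter.atTop (nhds 0) :=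
    tendsto_one_div_add_atTop_nhds_zero_nat
  have e1 := t1.eventually (gt_mem_nhds (by positivity : 0 < ε/4))
  have e2 := t2.eventually (gt_mem_nhds (by positivity : 0 < ε/32))
  have ev : ∀ᶠ n : ℕ in Filter.atTop,
      ({I : Finset (V n) | (∀ x ∈ I, ∀ y ∈ I, ¬ (Q n).Adj x y) ∧
          k n < min (I ∩ evens n).card (I ∩ odds n).card}.ncard : ℝ) ≤
        ε * 2 ^ 2 ^ (n - 1) := by
    filter_upwards [e1, e2, HC.S_event, Filter.eventually_ge_atTop 4] with n h1 h2 h3 h4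
    have hb : ∀ b, ((HC.G n (k n) b).card : ℝ) ≤ 2^2^(n-1) * (ε/2) := by
      intro b
      refine (HC.card_G (by omega) (k n) b).trans ?_
      apply mul_le_mul_of_nonneg_left _ (by positivity)
      have hS : ∑ A ∈ HC.Sset n b, HC.wt A ≤ 1/2 := by
        refine (h3 b).trans ?_
        have : (4:ℝ) ≤ n := by exact_mod_cast h4
        rw [div_le_div_iff₀ (by linarith) (by norm_num)]
        linarith
      refine (HC.Z_bound (by omega) b (k n + 1) hS).trans ?_
      have h5 := h3 b
      have h6 : 2 / ((n:ℝ)+1) = 2 * (1 / ((n:ℝ)+1)) := by ring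
      rw [pow_succ]
      linarith
    have hsub : {I : Finset (V n) | (∀ x ∈ I, ∀ y ∈ I, ¬ (Q n).Adj x y) ∧
          k n < min (I ∩ evens n).card (I ∩ odds n).card} ⊆
        ((HC.G n (k n) 0 ∪ HC.G n (k n) 1 : Finset (Finset (V n))) : Set (Finset (V n))) := by
      rintro I ⟨hI, hkI⟩
      exact Finset.mem_coe.2 (HC.cover (by omega) I hI hkI)
    have hc := Set.ncard_le_ncard hsub (Finset.finite_toSet _)
    rw [Set.ncard_coe_finset] at hc
    have hc2 := hc.trans (Finset.card_union_le _ _)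
    have hc3 : ({I : Finset (V n) | (∀ x ∈ I, ∀ y ∈ I, ¬ (Q n).Adj x y) ∧
          k n < min (I ∩ evens n).card (I ∩ odds n).card}.ncard : ℝ) ≤
        (HC.G n (k n) 0).card + (HC.G n (k n) 1).card := by exact_mod_cast hc2
    have hb0 := hb 0
    have hb1 := hb 1
    linarith
  exact Filter.eventually_atTop.1 ev
end

section
/- For every constant β > 0 there exist c > 0 and n₀ such that for all n ≥ n₀, the number of independent sets I in the hypercube graph Qₙ with min{|I ∩ ℰ|, |I ∩ 𝒪|} > β·2ⁿ is at most 2^(2^(n−1) − 2^(n/2 − c·√n)). -/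
open Finset in
theorem vb_count_le {α : Type*} [Fintype α] [DecidableEq α] (G : SimpleGraph α) [DecidableRel G.Adj] :
    ∀ (k : ℕ) (C : Finset α), C.card ≤ k → ∃ W ⊆ C, ∃ ν : ℕ, W.card = 2 * ν ∧
      (∀ x ∈ C \ W, ∀ y ∈ C \ W, ¬ G.Adj x y) ∧
      (C.powerset.filter (fun I => ∀ x ∈ I, ∀ y ∈ I, ¬ G.Adj x y)).card ≤
        3 ^ ν * 2 ^ (C \ W).card := by
  intro k
  induction k with
  | zero =>
    intro C hC
    have : C = ∅ := by simpa using hC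
    subst this
    refine ⟨∅, by simp, 0, by simp, by simp, ?_⟩
    refine (card_filter_le _ _).trans (by simp)
  | succ k ih =>
    intro C hC
    by_cases h : ∃ x ∈ C, ∃ y ∈ C, G.Adj x y
    · obtain ⟨u, hu, v, hv, huv⟩ := h
      have hne : u ≠ v := huv.ne
      have hsub : ({u, v} : Finset α) ⊆ C := by
        intro z hz; simp at hz; rcases hz with rfl | rfl <;> assumption
      have hc2 : ({u, v} : Finset α).card = 2 := card_pair hne
      have hcs := card_sdiff_add_card_eq_card hsub
      obtain ⟨W, hW, ν, hν, hind, hcount⟩ := ih (C \ {u, v}) (by omega)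
      have hset : C \ (W ∪ {u, v}) = (C \ {u, v}) \ W := by
        ext z; simp only [mem_sdiff, mem_union]; tauto
      have hdis : Disjoint W {u, v} := by
        rw [Finset.disjoint_left]; intro z hz hz'
        exact (mem_sdiff.1 (hW hz)).2 hz'
      refine ⟨W ∪ {u, v}, union_subset (hW.trans sdiff_subset) hsub, ν + 1, ?_, ?_, ?_⟩
      · rw [card_union_of_disjoint hdis, hν, hc2]; ring
      · rw [hset]; exact hind
      · rw [hset]
        have h3 : (C.powerset.filter (fun I => ∀ x ∈ I, ∀ y ∈ I, ¬ G.Adj x y)).card ≤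
            3 * ((C \ {u, v}).powerset.filter
              (fun I => ∀ x ∈ I, ∀ y ∈ I, ¬ G.Adj x y)).card := by
          have hinj : (C.powerset.filter (fun I => ∀ x ∈ I, ∀ y ∈ I, ¬ G.Adj x y)).card ≤
            (({∅, {u}, {v}} : Finset (Finset α)) ×ˢ ((C \ {u, v}).powerset.filter
              (fun I => ∀ x ∈ I, ∀ y ∈ I, ¬ G.Adj x y))).card := by
            refine card_le_card_of_injOn (fun I => (I ∩ {u, v}, I \ {u, v})) ?_ ?_
            · intro I hI
              simp only [coe_filter, mem_powerset, Set.mem_ofPred_eq] at hI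
              obtain ⟨hIC, hI⟩ := hI
              simp only [coe_product, Set.mem_prod, mem_coe, mem_filter, mem_powerset]
              refine ⟨?_, sdiff_subset_sdiff hIC subset_rfl, ?_⟩
              · by_cases h1 : u ∈ I
                · have h2 : v ∉ I := fun h2 => hI u h1 v h2 huv
                  have : I ∩ {u, v} = {u} := by
                    ext z; simp only [mem_inter, mem_insert, mem_singleton]
                    constructor
                    · rintro ⟨hz, rfl | rfl⟩
                      · rfl
                      · exact absurd hz h2
                    · rintro rfl; exact ⟨h1, Or.inl rfl⟩
                  simp [this]
                · by_cases h2 : v ∈ I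
                  · have : I ∩ {u, v} = {v} := by
                      ext z; simp only [mem_inter, mem_insert, mem_singleton]
                      constructor
                      · rintro ⟨hz, rfl | rfl⟩
                        · exact absurd hz h1
                        · rfl
                      · rintro rfl; exact ⟨h2, Or.inr rfl⟩
                    simp [this]
                  · have : I ∩ {u, v} = ∅ := by
                      ext z; simp only [mem_inter, mem_insert, mem_singleton, notMem_empty, iff_false]
                      rintro ⟨hz, rfl | rfl⟩
                      · exact h1 hz
                      · exact h2 hz
                    simp [this]
              · intro x hx y hy
                exact hI x (mem_sdiff.1 hx).1 y (mem_sdiff.1 hy).1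
            · intro I _ J _ hIJ
              simp only [Prod.mk.injEq] at hIJ
              rw [← sdiff_union_inter I {u, v}, ← sdiff_union_inter J {u, v}, hIJ.1, hIJ.2]
          refine hinj.trans ?_
          rw [card_product]
          exact Nat.mul_le_mul_right _ card_le_three
        calc _ ≤ _ := h3
          _ ≤ 3 * (3 ^ ν * 2 ^ ((C \ {u, v}) \ W).card) := Nat.mul_le_mul_left _ hcount
          _ = _ := by ring
    · push Not at h
      refine ⟨∅, by simp, 0, by simp, by simpa using h, ?_⟩
      refine (card_filter_le _ _).trans (by simp)

open Finset in
theorem vb_fingerprint {α : Type*} [Fintype α] [DecidableEq α] (G : SimpleGraph α)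
    [DecidableRel G.Adj] (ψ : ℕ) (hψ : 0 < ψ) (I : Finset α) :
    ∃ T ⊆ I, T.card * ψ ≤ Fintype.card α ∧
      ∀ v ∈ I, (G.neighborFinset v \ T.biUnion (fun v => G.neighborFinset v)).card < ψ := by
  obtain ⟨T, hT, hmax⟩ := exists_max_image
    (I.powerset.filter (fun T => T.card * ψ ≤ (T.biUnion (fun v => G.neighborFinset v)).card)) card
    ⟨∅, by simp⟩
  simp only [mem_filter, mem_powerset] at hT hmax
  refine ⟨T, hT.1, hT.2.trans (card_le_univ _), ?_⟩
  intro v hv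
  by_contra hcon
  push Not at hcon
  have hvT : v ∉ T := by
    intro hvT
    have : G.neighborFinset v \ T.biUnion (fun v => G.neighborFinset v) = ∅ := by
      rw [sdiff_eq_empty_iff_subset]
      exact subset_biUnion_of_mem (fun v => G.neighborFinset v) hvT
    rw [this] at hcon; simp at hcon; omega
  have := hmax (insert v T) ⟨insert_subset hv hT.1, by
    rw [card_insert_of_notMem hvT, biUnion_insert, ← sdiff_union_self_eq_union,
      card_union_of_disjoint sdiff_disjoint]
    nlinarith [hT.2]⟩
  rw [card_insert_of_notMem hvT] at this
  omega

open Finset in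
theorem vb_swap {α : Type*} [Fintype α] [DecidableEq α] (G : SimpleGraph α)
    [DecidableRel G.Adj] (X Y : Finset α) :
    ∑ y ∈ X, (G.neighborFinset y ∩ Y).card = ∑ x ∈ Y, (G.neighborFinset x ∩ X).card := by
  have := sum_card_bipartiteAbove_eq_sum_card_bipartiteBelow (s := X) (t := Y) G.Adj
  convert this using 2
  · congr 1; ext z; simp [bipartiteAbove, and_comm]
  · congr 1; ext z; simp [bipartiteBelow, and_comm, G.adj_comm]

open Finset in
theorem vb_size {α : Type*} [Fintype α] [DecidableEq α] (G : SimpleGraph α)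
    [DecidableRel G.Adj] (d N ψ : ℕ) (E O : Finset α) (hE : E.card = N)
    (hreg : ∀ x, (G.neighborFinset x).card = d)
    (hEO : Disjoint E O) (hun : ∀ x, x ∈ E ∨ x ∈ O)
    (hbip : ∀ x ∈ O, G.neighborFinset x ⊆ E) 
    (C W : Finset α) (hdeg : ∀ x ∈ C, (G.neighborFinset x ∩ C).card ≤ ψ) (hWC : W ⊆ C)
    (hW : ∀ x ∈ C \ W, ∀ y ∈ C \ W, ¬ G.Adj x y) :
    d * C.card ≤ d * N + W.card * ψ := by
  have hC : C.card = (C ∩ E).card + (C ∩ O).card := by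
    rw [← card_union_of_disjoint (hEO.mono inter_subset_right inter_subset_right),
      ← inter_union_distrib_left]
    congr 1; ext x; simp; intro _; exact hun x
  have hW' : W.card = (W ∩ E).card + (W ∩ O).card := by
    rw [← card_union_of_disjoint (hEO.mono inter_subset_right inter_subset_right),
      ← inter_union_distrib_left]
    congr 1; ext x; simp; intro _; exact hun x
  have hEc : (E \ C).card + (C ∩ E).card = N := by
    rw [← hE, inter_comm]; exact card_sdiff_add_card_inter E C
  have h1 : d * (C ∩ O).card = ∑ y ∈ C ∩ O, ((G.neighborFinset y ∩ (C ∩ E)).card +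
      (G.neighborFinset y ∩ (E \ C)).card) := by
    rw [mul_comm, ← smul_eq_mul, ← sum_const]
    refine sum_congr rfl fun y hy => ?_
    rw [← hreg y, ← card_union_of_disjoint]
    · congr 1; ext z
      have := @hbip y (mem_inter.1 hy).2 z
      simp only [mem_union, mem_inter, mem_sdiff]
      tauto
    · rw [Finset.disjoint_left]; intro z; simp; tauto
  have h2 : ∑ y ∈ C ∩ O, (G.neighborFinset y ∩ (E \ C)).card ≤ d * (E \ C).card := by
    rw [vb_swap, mul_comm]
    refine sum_le_card_nsmul _ _ _ fun x _ => ?_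
    rw [← hreg x]; exact card_le_card inter_subset_left
  have h3 : ∑ y ∈ C ∩ O, (G.neighborFinset y ∩ (C ∩ E)).card ≤ W.card * ψ := by
    have h4 : ∀ y ∈ C ∩ O, (G.neighborFinset y ∩ (C ∩ E)).card ≤
        (if y ∈ W then ψ else 0) + (G.neighborFinset y ∩ (W ∩ E)).card := by
      intro y hy
      split_ifs with hyW
      · refine le_add_right (le_trans (card_le_card ?_) (hdeg y (mem_inter.1 hy).1))
        intro z; simp; tauto
      · rw [zero_add]
        refine card_le_card ?_
        intro z; simp only [mem_inter]
        rintro ⟨hz, hzC, hzE⟩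
        refine ⟨hz, ?_, hzE⟩
        by_contra hzW
        exact hW y (mem_sdiff.2 ⟨(mem_inter.1 hy).1, hyW⟩) z (mem_sdiff.2 ⟨hzC, hzW⟩)
          ((G.mem_neighborFinset _ _).1 hz)
    refine (sum_le_sum h4).trans ?_
    rw [sum_add_distrib, vb_swap, hW', add_mul, add_comm]
    refine add_le_add ?_ ?_
    · refine sum_le_card_nsmul _ _ _ fun x hx => ?_
      refine le_trans (card_le_card ?_) (hdeg x (hWC (mem_inter.1 hx).1))
      intro z; simp; tauto
    · rw [← sum_filter, sum_const, smul_eq_mul]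
      refine Nat.mul_le_mul_right _ (card_le_card ?_)
      intro z; simp; tauto
  rw [sum_add_distrib] at h1
  rw [hC, mul_add]
  have : d * N = d * (E \ C).card + d * (C ∩ E).card := by rw [← mul_add, hEc]
  omega

open Finset in
theorem vb_numT {α : Type*} [Fintype α] [DecidableEq α] (ψ : ℕ) (hψ : 0 < ψ) :
    ((univ.filter (fun T : Finset α => T.card * ψ ≤ Fintype.card α)).card : ℝ) ≤
      Real.exp ((Fintype.card α / ψ : ℝ) * (Real.log ψ + 1)) := by
  have hψ' : (0 : ℝ) < ψ := by exact_mod_cast hψ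
  have hψ1 : (1 : ℝ) ≤ ψ := by exact_mod_cast hψ
  set a : ℝ := Fintype.card α / ψ with ha
  have hlog : 0 ≤ Real.log ψ := Real.log_nonneg hψ1
  have h1 : ∀ T ∈ univ.filter (fun T : Finset α => T.card * ψ ≤ Fintype.card α),
      (1 : ℝ) ≤ Real.exp (a * Real.log ψ) * (1 / ψ : ℝ) ^ T.card := by
    intro T hT
    simp only [mem_filter, mem_univ, true_and] at hT
    have hT' : (T.card : ℝ) ≤ a := by
      rw [ha, le_div_iff₀ hψ']; exact_mod_cast hT
    have : (1 / ψ : ℝ) ^ T.card = Real.exp (- (T.card * Real.log ψ)) := by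
      rw [Real.exp_neg, Real.exp_nat_mul, Real.exp_log hψ', one_div, inv_pow]
    rw [this, ← Real.exp_add]
    apply Real.one_le_exp
    nlinarith
  have h2 : ∑ T : Finset α, (1 / ψ : ℝ) ^ T.card = (1 + 1 / ψ : ℝ) ^ Fintype.card α := by
    have := Finset.sum_pow_mul_eq_add_pow (1 / ψ : ℝ) 1 (univ : Finset α)
    simp only [one_pow, mul_one, powerset_univ, card_univ] at this
    rw [this, add_comm]
  calc ((univ.filter (fun T : Finset α => T.card * ψ ≤ Fintype.card α)).card : ℝ)
      = ∑ T ∈ univ.filter (fun T : Finset α => T.card * ψ ≤ Fintype.card α), (1 : ℝ) := by simp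
    _ ≤ ∑ T ∈ univ.filter (fun T : Finset α => T.card * ψ ≤ Fintype.card α),
        Real.exp (a * Real.log ψ) * (1 / ψ : ℝ) ^ T.card := sum_le_sum h1
    _ ≤ ∑ T : Finset α, Real.exp (a * Real.log ψ) * (1 / ψ : ℝ) ^ T.card :=
        sum_le_sum_of_subset_of_nonneg (subset_univ _) (fun _ _ _ => by positivity)
    _ = Real.exp (a * Real.log ψ) * (1 + 1 / ψ : ℝ) ^ Fintype.card α := by
        rw [← mul_sum, h2]
    _ ≤ Real.exp (a * Real.log ψ) * Real.exp (1 / ψ) ^ Fintype.card α := by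
        gcongr
        rw [add_comm]; exact Real.add_one_le_exp _
    _ = _ := by
        rw [← Real.exp_nat_mul, ← Real.exp_add, ha]
        congr 1; field_simp

def vbFlip {n : ℕ} (x : V n) (i : Fin n) : V n := x + Pi.single i 1

theorem vb_zmod2 (a : ZMod 2) : a = 0 ∨ a = 1 := by
  revert a; decide

theorem vb_adj {n : ℕ} (x y : V n) : (Q n).Adj x y ↔ ∃ i, y = vbFlip x i := by
  unfold Q
  rw [SimpleGraph.fromRel_adj, hammingDist_comm y x, or_self]
  constructor
  · rintro ⟨_, h⟩
    unfold hammingDist at h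
    rw [Finset.card_eq_one] at h
    obtain ⟨i, hi⟩ := h
    refine ⟨i, ?_⟩
    funext j
    have hj : x j ≠ y j ↔ j = i := by
      have : j ∈ ({i | x i ≠ y i} : Finset (Fin n)) ↔ j ∈ ({i} : Finset (Fin n)) := by rw [hi]
      simpa using this
    unfold vbFlip
    by_cases hji : j = i
    · subst hji
      have := hj.2 rfl
      simp only [Pi.add_apply, Pi.single_eq_same]
      rcases vb_zmod2 (x j) with h1 | h1 <;> rcases vb_zmod2 (y j) with h2 | h2 <;>
        first | exact absurd (h1.trans h2.symm) this | (rw [h1, h2]; rfl)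
    · have : x j = y j := by by_contra h; exact hji (hj.1 h)
      simp [hji, this]
  · rintro ⟨i, rfl⟩
    have h : ∀ j, x j ≠ vbFlip x i j ↔ j = i := by
      intro j
      unfold vbFlip
      by_cases hji : j = i
      · subst hji; simp
      · simp [hji]
    refine ⟨fun hx => (h i).2 rfl (congrFun hx i), ?_⟩
    unfold hammingDist
    rw [Finset.card_eq_one]
    exact ⟨i, by ext j; simpa using h j⟩

theorem vb_flip_inj {n : ℕ} (x : V n) : Function.Injective (vbFlip x) := by
  intro i j h
  unfold vbFlip at h
  have := congrFun (add_left_cancel h) i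
  by_contra hij
  simp [hij] at this

theorem vb_nbr {n : ℕ} [DecidableRel (Q n).Adj] (x : V n) :
    (Q n).neighborFinset x = Finset.univ.image (vbFlip x) := by
  ext y
  rw [SimpleGraph.mem_neighborFinset, vb_adj]
  simp [eq_comm]

theorem vb_reg {n : ℕ} [DecidableRel (Q n).Adj] (x : V n) :
    ((Q n).neighborFinset x).card = n := by
  rw [vb_nbr, Finset.card_image_of_injective _ (vb_flip_inj x)]; simp

theorem vb_norm {n : ℕ} (x : V n) : ((hammingNorm x : ℕ) : ZMod 2) = ∑ i, x i := by
  unfold hammingNorm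
  rw [Finset.card_filter, Nat.cast_sum]
  refine Finset.sum_congr rfl fun i _ => ?_
  rcases vb_zmod2 (x i) with h | h <;> simp [h]

theorem vb_mem_evens {n : ℕ} (x : V n) : x ∈ evens n ↔ ∑ i, x i = 0 := by
  simp only [evens, Finset.mem_filter, Finset.mem_univ, true_and]
  rw [← vb_norm, ZMod.natCast_eq_zero_iff_even]

theorem vb_mem_odds {n : ℕ} (x : V n) : x ∈ odds n ↔ ∑ i, x i = 1 := by
  simp only [odds, Finset.mem_filter, Finset.mem_univ, true_and]
  rw [← vb_norm, ZMod.natCast_eq_one_iff_odd]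

theorem vb_sum_flip {n : ℕ} (x : V n) (i : Fin n) : ∑ j, vbFlip x i j = ∑ j, x j + 1 := by
  unfold vbFlip
  simp [Finset.sum_add_distrib]

theorem vb_odds_nbr {n : ℕ} [DecidableRel (Q n).Adj] (x : V n) (hx : x ∈ odds n) :
    (Q n).neighborFinset x ⊆ evens n := by
  intro y hy
  rw [SimpleGraph.mem_neighborFinset, vb_adj] at hy
  obtain ⟨i, rfl⟩ := hy
  rw [vb_mem_evens, vb_sum_flip, (vb_mem_odds x).1 hx]; rfl

theorem vb_disj (n : ℕ) : Disjoint (evens n) (odds n) := by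
  rw [Finset.disjoint_left]
  intro x h1 h2
  rw [vb_mem_evens] at h1
  rw [vb_mem_odds, h1] at h2
  exact absurd h2 (by decide)

theorem vb_un {n : ℕ} (x : V n) : x ∈ evens n ∨ x ∈ odds n := by
  rw [vb_mem_evens, vb_mem_odds]; exact vb_zmod2 _

theorem vb_card_V (n : ℕ) : Fintype.card (V n) = 2 ^ n := by
  simp [V, ZMod.card]

/-- vectors of equal tail and equal parity agree -/
theorem vb_ext {m : ℕ} (x y : V (m + 1)) (h : Fin.tail x = Fin.tail y)
    (hs : ∑ i, x i = ∑ i, y i) : x = y := by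
  have ht : ∀ i : Fin m, x i.succ = y i.succ := fun i => congrFun h i
  rw [Fin.sum_univ_succ, Fin.sum_univ_succ, Finset.sum_congr rfl (fun i _ => ht i)] at hs
  have h0 := add_right_cancel hs
  funext i
  refine Fin.cases h0 ht i

theorem vb_card_evens (m : ℕ) : (evens (m + 1)).card = 2 ^ m := by
  rw [← vb_card_V m, ← Finset.card_univ]
  refine Finset.card_bij (fun x _ => Fin.tail x) (by simp) ?_ ?_
  · intro x hx y hy h
    refine vb_ext x y h ?_
    rw [(vb_mem_evens x).1 hx, (vb_mem_evens y).1 hy]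
  · intro v _
    refine ⟨Fin.cons (- ∑ i, v i) v, ?_, by simp⟩
    rw [vb_mem_evens, Fin.sum_univ_succ]; simp [CharTwo.add_self_eq_zero]

/-- number of neighbours outside `S` -/
def vbH {n : ℕ} (S : Finset (V n)) (x : V n) : ℕ :=
  (Finset.univ.filter (fun i => vbFlip x i ∉ S)).card

theorem vb_flip_cons_zero {m : ℕ} (a : ZMod 2) (v : V m) :
    vbFlip (Fin.cons a v : V (m + 1)) 0 = Fin.cons (a + 1) v := by
  funext i
  refine Fin.cases ?_ (fun j => ?_) i
  · simp [vbFlip]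
  · simp [vbFlip]

theorem vb_flip_cons_succ {m : ℕ} (a : ZMod 2) (v : V m) (i : Fin m) :
    vbFlip (Fin.cons a v : V (m + 1)) i.succ = Fin.cons a (vbFlip v i) := by
  funext j
  refine Fin.cases ?_ (fun j => ?_) j
  · simp [vbFlip]
  · by_cases h : j = i
    · subst h; simp [vbFlip]
    · simp [vbFlip, h]

def vbSlice {m : ℕ} (S : Finset (V (m + 1))) (a : ZMod 2) : Finset (V m) :=
  Finset.univ.filter (fun v => (Fin.cons a v : V (m + 1)) ∈ S)

theorem vb_H_slice {m : ℕ} (S : Finset (V (m + 1))) (a : ZMod 2) (v : V m) :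
    vbH S (Fin.cons a v) = vbH (vbSlice S a) v + (if v ∈ vbSlice S (a + 1) then 0 else 1) := by
  unfold vbH
  rw [Fin.univ_succ, Finset.filter_cons]
  have h : (Finset.filter (fun i => vbFlip (Fin.cons a v : V (m + 1)) i ∉ S)
      (Finset.univ.map ⟨Fin.succ, Fin.succ_injective m⟩)).card =
      (Finset.univ.filter (fun i => vbFlip v i ∉ vbSlice S a)).card := by
    rw [Finset.filter_map, Finset.card_map]
    congr 1
    ext i
    simp [vb_flip_cons_succ, vbSlice]
  by_cases hv : v ∈ vbSlice S (a + 1)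
  · have : vbFlip (Fin.cons a v : V (m + 1)) 0 ∈ S := by
      rw [vb_flip_cons_zero]; simpa [vbSlice] using hv
    simp only [this, hv, not_true_eq_false, if_false, if_true]
    simpa using h
  · have : vbFlip (Fin.cons a v : V (m + 1)) 0 ∉ S := by
      rw [vb_flip_cons_zero]; simpa [vbSlice] using hv
    simp only [this, hv, not_false_eq_true, if_false, if_true]
    rw [Finset.card_cons]
    simpa using h

theorem vb_sum_slice {m : ℕ} (S : Finset (V (m + 1))) (f : V (m + 1) → ℝ) :
    ∑ x ∈ S, f x = ∑ v ∈ vbSlice S 0, f (Fin.cons 0 v) + ∑ v ∈ vbSlice S 1, f (Fin.cons 1 v) := by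
  have h : ∀ g : V (m + 1) → ℝ, ∑ x, g x = ∑ v, g (Fin.cons 0 v) + ∑ v, g (Fin.cons 1 v) := by
    intro g
    rw [← (Fin.consEquiv (fun _ : Fin (m + 1) => ZMod 2)).sum_comp, Fintype.sum_prod_type]
    exact Fin.sum_univ_two (fun a : Fin 2 => ∑ v : V m, g (Fin.cons (a : ZMod 2) v))
  have h2 := h (fun x => if x ∈ S then f x else 0)
  rw [← Finset.sum_filter, ← Finset.sum_filter, ← Finset.sum_filter] at h2
  simpa [vbSlice] using h2

theorem vb_sqrt_aux (h D : ℝ) (hh : 0 ≤ h) (hD0 : 0 ≤ D) (hD1 : D ≤ 1) :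
    (1 - D ^ 2) * √h + D ≤ √(h + 1) := by
  apply Real.le_sqrt_of_sq_le
  have h1 := Real.sq_sqrt hh
  have h0 := Real.sqrt_nonneg h
  set s := √h
  rw [← h1]
  nlinarith [sq_nonneg (D * s - (1 - D ^ 2)), mul_nonneg (sq_nonneg D) (by nlinarith : 0 ≤ 1 - D ^ 2), mul_nonneg (mul_nonneg (sq_nonneg D) (by nlinarith : 0 ≤ 1 - D ^ 2)) (sq_nonneg s)]

theorem vb_key {m : ℕ} (S0 S1 : Finset (V m)) (D : ℝ) (hD0 : 0 ≤ D) (hD1 : D ≤ 1) :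
    (1 - D ^ 2) * ∑ x ∈ S0, √(vbH S0 x : ℝ) + D * ((S0.card : ℝ) - S1.card) ≤
      ∑ x ∈ S0, √((vbH S0 x + (if x ∈ S1 then 0 else 1) : ℕ) : ℝ) := by
  have h1 : ∀ x ∈ S0, (1 - D ^ 2) * √(vbH S0 x : ℝ) + D * (if x ∈ S1 then 0 else 1) ≤
      √((vbH S0 x + (if x ∈ S1 then 0 else 1) : ℕ) : ℝ) := by
    intro x _
    split_ifs with h
    · have := Real.sqrt_nonneg (vbH S0 x : ℝ)
      simp only [mul_zero, add_zero]
      nlinarith [mul_nonneg (sq_nonneg D) this]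
    · push_cast
      rw [mul_one]
      exact vb_sqrt_aux _ D (by positivity) hD0 hD1
  refine le_trans ?_ (Finset.sum_le_sum h1)
  rw [Finset.sum_add_distrib, ← Finset.mul_sum, ← Finset.mul_sum]
  gcongr
  have h2 : ∑ x ∈ S0, (if x ∈ S1 then (0 : ℝ) else 1) = ((S0 \ S1).card : ℝ) := by
    rw [← Finset.sum_filter_not_add_sum_filter _ (fun x => x ∈ S1)]
    rw [Finset.sum_congr rfl (g := fun _ => (1 : ℝ)) (by intro x hx; simp [(Finset.mem_filter.1 hx).2]),
      Finset.sum_congr (s₁ := S0.filter (fun x => x ∈ S1)) rfl (g := fun _ => (0 : ℝ)) (by intro x hx; simp [(Finset.mem_filter.1 hx).2])]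
    simp [Finset.filter_notMem_eq_sdiff]
  rw [h2]
  have := Finset.le_card_sdiff S1 S0
  have h3 : S0.card ≤ (S0 \ S1).card + S1.card := by omega
  have h4 : (S0.card : ℝ) ≤ (S0 \ S1).card + S1.card := by exact_mod_cast h3
  linarith

theorem vb_num (M a b P0 P1 R0 R1 : ℝ) (hM : 0 < M) (ha : a ≤ M) (hb : 0 ≤ b) (hab : b ≤ a)
    (h0 : a * (1 - a / M) ≤ P0) (h1 : b * (1 - b / M) ≤ P1)
    (hR0 : (1 - ((a - b) / M) ^ 2) * P0 + (a - b) / M * (a - b) ≤ R0) (hR1 : P1 ≤ R1) :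
    (a + b) * (1 - (a + b) / (M * 2)) ≤ R0 + R1 := by
  obtain ⟨u, rfl⟩ : ∃ u, a = u * M := ⟨a / M, by field_simp⟩
  obtain ⟨v, rfl⟩ : ∃ v, b = v * M := ⟨b / M, by field_simp⟩
  have e1 : u * M / M = u := by field_simp
  have e2 : v * M / M = v := by field_simp
  have e3 : (u * M - v * M) / M = u - v := by field_simp
  have e4 : (u * M + v * M) / (M * 2) = (u + v) / 2 := by field_simp
  rw [e1] at h0; rw [e2] at h1; rw [e3] at hR0; rw [e4]
  have hu : u ≤ 1 := by nlinarith
  have hv : 0 ≤ v := by nlinarith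
  have huv : v ≤ u := by nlinarith
  have hD : 0 ≤ 1 - (u - v) ^ 2 := by nlinarith
  have h5 := mul_le_mul_of_nonneg_left h0 hD
  have h6 : 0 ≤ M * ((u - v) ^ 2 * ((u - 1/2) ^ 2 + 1/4)) := by positivity
  nlinarith

theorem vb_talagrand : ∀ (m : ℕ) (S : Finset (V m)),
    (S.card : ℝ) * (1 - S.card / 2 ^ m) ≤ ∑ x ∈ S, √(vbH S x : ℝ) := by
  intro m
  induction m with
  | zero =>
    intro S
    have h : S.card ≤ 1 := by
      have := Finset.card_le_univ S
      rwa [vb_card_V] at this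
    refine le_trans ?_ (Finset.sum_nonneg fun _ _ => Real.sqrt_nonneg _)
    interval_cases S.card <;> simp
  | succ m ih =>
    intro S
    rw [vb_sum_slice]
    simp only [vb_H_slice]
    have hcard : (S.card : ℝ) = (vbSlice S 0).card + (vbSlice S 1).card := by
      have := vb_sum_slice S (fun _ => 1)
      simpa using this
    have hle : ∀ a, ((vbSlice S a).card : ℝ) ≤ 2 ^ m := by
      intro a
      have := Finset.card_le_univ (vbSlice S a)
      rw [vb_card_V] at this
      exact_mod_cast this
    have hmono : ∀ S0 S1 : Finset (V m), ∑ x ∈ S0, √(vbH S0 x : ℝ) ≤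
        ∑ x ∈ S0, √((vbH S0 x + (if x ∈ S1 then 0 else 1) : ℕ) : ℝ) := by
      intro S0 S1
      refine Finset.sum_le_sum fun x _ => Real.sqrt_le_sqrt ?_
      push_cast
      split_ifs <;> simp
    have e01 : (0 : ZMod 2) + 1 = 1 := rfl
    have e11 : (1 : ZMod 2) + 1 = 0 := rfl
    rw [hcard, pow_succ, e01, e11]
    have hM : (0 : ℝ) < 2 ^ m := by positivity
    have hD : ∀ a b : ℝ, b ≤ a → 0 ≤ b → a ≤ 2 ^ m → 0 ≤ (a - b) / 2 ^ m ∧ (a - b) / 2 ^ m ≤ 1 := by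
      intro a b h1 h2 h3
      exact ⟨div_nonneg (by linarith) hM.le, by rw [div_le_one hM]; linarith⟩
    rcases le_total ((vbSlice S 1).card : ℝ) (vbSlice S 0).card with h | h
    · obtain ⟨d0, d1⟩ := hD _ _ h (by positivity) (hle 0)
      exact vb_num _ _ _ _ _ _ _ hM (hle 0) (by positivity) h (ih _) (ih _)
        (vb_key _ _ _ d0 d1) (hmono _ _)
    · obtain ⟨d0, d1⟩ := hD _ _ h (by positivity) (hle 1)
      rw [add_comm ((vbSlice S 0).card : ℝ), add_comm (∑ x ∈ vbSlice S 0, _)]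
      exact vb_num _ _ _ _ _ _ _ hM (hle 1) (by positivity) h (ih _) (ih _)
        (vb_key _ _ _ d0 d1) (hmono _ _)

theorem vb_iso {m : ℕ} (D : Finset (V (m + 1)))
    (hD : ∀ x ∈ D, ∀ y ∈ D, ¬ (Q (m + 1)).Adj x y) :
    ((D ∩ evens (m + 1)).card : ℝ) * (D ∩ odds (m + 1)).card / 2 ^ m ≤
      (2 ^ m - ((D ∩ evens (m + 1)).card : ℝ) - (D ∩ odds (m + 1)).card) * √m := by
  set A : Finset (V m) := (D ∩ evens (m + 1)).image Fin.tail with hA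
  set B : Finset (V m) := (D ∩ odds (m + 1)).image Fin.tail with hB
  have hAc : A.card = (D ∩ evens (m + 1)).card := by
    refine Finset.card_image_of_injOn ?_
    intro x hx y hy h
    refine vb_ext x y h ?_
    rw [(vb_mem_evens x).1 (Finset.mem_inter.1 hx).2, (vb_mem_evens y).1 (Finset.mem_inter.1 hy).2]
  have hBc : B.card = (D ∩ odds (m + 1)).card := by
    refine Finset.card_image_of_injOn ?_
    intro x hx y hy h
    refine vb_ext x y h ?_
    rw [(vb_mem_odds x).1 (Finset.mem_inter.1 hx).2, (vb_mem_odds y).1 (Finset.mem_inter.1 hy).2]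
  have hlift : ∀ x ∈ D ∩ evens (m + 1), ∀ y ∈ D ∩ odds (m + 1), ∀ j,
      Fin.tail y ≠ Fin.tail (vbFlip x j) := by
    intro x hx y hy j h
    rw [Finset.mem_inter, vb_mem_evens] at hx
    rw [Finset.mem_inter, vb_mem_odds] at hy
    refine hD x hx.1 y hy.1 ((vb_adj x y).2 ⟨j, ?_⟩)
    refine vb_ext _ _ h ?_
    rw [vb_sum_flip, hx.2, hy.2]; rfl
  have htail0 : ∀ x : V (m + 1), Fin.tail (vbFlip x 0) = Fin.tail x := by
    intro x
    conv_lhs => rw [← Fin.cons_self_tail x, vb_flip_cons_zero]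
    simp
  have htails : ∀ (x : V (m + 1)) (i : Fin m), Fin.tail (vbFlip x i.succ) = vbFlip (Fin.tail x) i := by
    intro x i
    conv_lhs => rw [← Fin.cons_self_tail x, vb_flip_cons_succ]
    simp
  have hdis : Disjoint A B := by
    rw [Finset.disjoint_left]
    intro z hz hz'
    obtain ⟨x, hx, rfl⟩ := Finset.mem_image.1 hz
    obtain ⟨y, hy, h⟩ := Finset.mem_image.1 hz'
    exact hlift x hx y hy 0 (by rw [htail0, h])
  have hnon : ∀ b ∈ B, ∀ i, vbFlip b i ∉ A := by
    intro b hb i hA'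
    obtain ⟨y, hy, rfl⟩ := Finset.mem_image.1 hb
    obtain ⟨x, hx, h⟩ := Finset.mem_image.1 hA'
    refine hlift x hx y hy i.succ ?_
    rw [htails, h]
    unfold vbFlip
    rw [add_assoc, ← Pi.single_add, show (1 : ZMod 2) + 1 = 0 from rfl]
    simp
  rw [← hAc, ← hBc]
  have hT := vb_talagrand m Aᶜ
  have hcc : ((Aᶜ.card : ℕ) : ℝ) = 2 ^ m - A.card := by
    have : Aᶜ.card + A.card = 2 ^ m := by
      rw [← vb_card_V m]; exact Finset.card_compl_add_card A
    have : ((Aᶜ.card : ℕ) : ℝ) + A.card = 2 ^ m := by exact_mod_cast this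
    linarith
  have hcb : (((Aᶜ \ B).card : ℕ) : ℝ) = 2 ^ m - A.card - B.card := by
    have hsub : B ⊆ Aᶜ := by
      intro z hz; rw [Finset.mem_compl]; exact fun h => Finset.disjoint_left.1 hdis h hz
    have := Finset.card_sdiff_add_card_eq_card hsub
    have : (((Aᶜ \ B).card : ℕ) : ℝ) + B.card = Aᶜ.card := by exact_mod_cast this
    linarith
  have hup : ∑ x ∈ Aᶜ, √(vbH Aᶜ x : ℝ) ≤ ((Aᶜ \ B).card : ℝ) * √m := by
    rw [← nsmul_eq_mul, ← Finset.sum_const]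
    rw [← Finset.sum_subset (Finset.sdiff_subset : Aᶜ \ B ⊆ Aᶜ)]
    · refine Finset.sum_le_sum fun x _ => Real.sqrt_le_sqrt ?_
      have : vbH Aᶜ x ≤ m := by
        unfold vbH
        exact (Finset.card_le_univ _).trans (by simp)
      exact_mod_cast this
    · intro x hx hx'
      have hxB : x ∈ B := by
        by_contra h; exact hx' (Finset.mem_sdiff.2 ⟨hx, h⟩)
      have : vbH Aᶜ x = 0 := by
        unfold vbH
        rw [Finset.card_eq_zero, Finset.filter_eq_empty_iff]
        intro i _
        simpa using hnon x hxB i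
      simp [this]
  have hBle : (B.card : ℝ) ≤ 2 ^ m - A.card := by
    have : (0 : ℝ) ≤ ((Aᶜ \ B).card : ℕ) := by positivity
    linarith
  rw [← hcb]
  refine le_trans ?_ (hT.trans hup)
  rw [hcc]
  have hM : (0 : ℝ) < 2 ^ m := by positivity
  have : (2 ^ m - (A.card : ℝ)) * (1 - (2 ^ m - A.card) / 2 ^ m) = (2 ^ m - A.card) * A.card / 2 ^ m := by
    field_simp; ring
  rw [this, mul_comm (A.card : ℝ)]
  gcongr

theorem vb_container {m : ℕ} [DecidableRel (Q (m + 1)).Adj] (β : ℝ) (hβ : 0 < β) (ψ : ℕ)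
    (hψ : 20 * ψ ≤ m + 1) (C : Finset (V (m + 1)))
    (hdeg : ∀ x ∈ C, ((Q (m + 1)).neighborFinset x ∩ C).card ≤ ψ)
    (hE : β * 2 ^ (m + 1) < ((C ∩ evens (m + 1)).card : ℝ))
    (hO : β * 2 ^ (m + 1) < ((C ∩ odds (m + 1)).card : ℝ)) :
    ((C.powerset.filter (fun I => ∀ x ∈ I, ∀ y ∈ I, ¬ (Q (m + 1)).Adj x y)).card : ℝ) ≤
      2 ^ ((2 : ℝ) ^ m - 7 / 100 * (2 ^ m * β ^ 2 / √((m : ℝ) + 1))) := by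
  obtain ⟨W, hWC, ν, hWν, hind, hcount⟩ := vb_count_le (Q (m + 1)) _ C le_rfl
  have hsize := vb_size (Q (m + 1)) (m + 1) (2 ^ m) ψ (evens (m + 1)) (odds (m + 1))
    (vb_card_evens m) vb_reg (vb_disj _) vb_un vb_odds_nbr C W hdeg hWC hind
  set M' : ℝ := 2 ^ m * β ^ 2 / √((m : ℝ) + 1) with hM'
  have hM : (0 : ℝ) < 2 ^ m := by positivity
  have hm1 : (0 : ℝ) < (m : ℝ) + 1 := by positivity
  have hs1 : 1 ≤ √((m : ℝ) + 1) := by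
    rw [Real.one_le_sqrt]; linarith [(Nat.cast_nonneg m : (0 : ℝ) ≤ m)]
  have hβ1 : β ≤ 1 := by
    have h1 : (C ∩ evens (m + 1)).card ≤ 2 ^ m := by
      rw [← vb_card_evens m]; exact Finset.card_le_card Finset.inter_subset_right
    have h2 : ((C ∩ evens (m + 1)).card : ℝ) ≤ 2 ^ m := by exact_mod_cast h1
    rw [pow_succ] at hE
    nlinarith
  have hM'0 : 0 ≤ M' := by positivity
  have hM'1 : M' ≤ 2 ^ m * β := by
    rw [hM', div_le_iff₀ (by linarith)]
    nlinarith [mul_pos hM hβ]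
  have hCD : (C \ W).card + 2 * ν = C.card := by
    rw [← hWν]; exact Finset.card_sdiff_add_card_eq_card hWC
  have hCDr : ((C \ W).card : ℝ) + 2 * ν = C.card := by exact_mod_cast hCD
  have hsz : (C.card : ℝ) ≤ 2 ^ m + ν / 10 := by
    have h1 : ((m : ℝ) + 1) * C.card ≤ (m + 1) * 2 ^ m + 2 * ν * ψ := by
      rw [hWν] at hsize; exact_mod_cast hsize
    have h2 : (20 : ℝ) * ψ ≤ m + 1 := by exact_mod_cast hψ
    have h3 : (2 : ℝ) * ν * ψ ≤ (m + 1) * (ν / 10) := by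
      nlinarith [(Nat.cast_nonneg ν : (0 : ℝ) ≤ ν)]
    have : ((m : ℝ) + 1) * C.card ≤ (m + 1) * (2 ^ m + ν / 10) := by linarith
    exact le_of_mul_le_mul_left this hm1
  have h35 : (3 : ℝ) ≤ 2 ^ (8 / 5 : ℝ) := by
    have : (3 : ℝ) ^ (5 : ℝ) ≤ (2 ^ (8 / 5 : ℝ)) ^ (5 : ℝ) := by
      rw [← Real.rpow_mul (by norm_num)]
      norm_num
    exact (Real.rpow_le_rpow_iff (by norm_num) (by positivity) (by norm_num)).1 this
  have hc : ((C.powerset.filter (fun I => ∀ x ∈ I, ∀ y ∈ I, ¬ (Q (m + 1)).Adj x y)).card : ℝ) ≤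
      2 ^ (8 / 5 * (ν : ℝ) + ((C \ W).card : ℝ)) := by
    calc _ ≤ ((3 ^ ν * 2 ^ (C \ W).card : ℕ) : ℝ) := by exact_mod_cast hcount
      _ = (3 : ℝ) ^ ν * 2 ^ (C \ W).card := by push_cast; ring
      _ ≤ (2 ^ (8 / 5 : ℝ)) ^ ν * 2 ^ (C \ W).card := by gcongr
      _ = _ := by
        rw [Real.rpow_add (by norm_num), Real.rpow_mul (by norm_num), Real.rpow_natCast,
          Real.rpow_natCast]
  refine hc.trans (Real.rpow_le_rpow_of_exponent_le (by norm_num) ?_)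
  by_cases hν : M' / 4 ≤ ν
  · linarith
  · push Not at hν
    have hpart : ∀ P : Finset (V (m + 1)), β * 2 ^ (m + 1) < ((C ∩ P).card : ℝ) →
        β * 2 ^ m ≤ (((C \ W) ∩ P).card : ℝ) := by
      intro P hP
      have h1 : (C ∩ P).card ≤ ((C \ W) ∩ P).card + W.card := by
        refine le_trans (Finset.card_le_card ?_) (Finset.card_union_le _ _)
        intro z; simp only [Finset.mem_inter, Finset.mem_union, Finset.mem_sdiff]; tauto
      rw [hWν] at h1
      have h2 : ((C ∩ P).card : ℝ) ≤ ((C \ W) ∩ P).card + 2 * ν := by exact_mod_cast h1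
      rw [pow_succ] at hP
      linarith
    have a1 := hpart _ hE
    have a2 := hpart _ hO
    have hiso := vb_iso (C \ W) hind
    have hsum : (((C \ W) ∩ evens (m + 1)).card : ℝ) + ((C \ W) ∩ odds (m + 1)).card =
        (C \ W).card := by
      have : ((C \ W) ∩ evens (m + 1)).card + ((C \ W) ∩ odds (m + 1)).card = (C \ W).card := by
        rw [← Finset.card_union_of_disjoint ((vb_disj (m + 1)).mono Finset.inter_subset_right
          Finset.inter_subset_right), ← Finset.inter_union_distrib_left]
        congr 1; ext x
        have := vb_un x
        simp only [Finset.mem_inter, Finset.mem_union]; tauto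
      exact_mod_cast this
    set a : ℝ := (((C \ W) ∩ evens (m + 1)).card : ℝ)
    set b : ℝ := (((C \ W) ∩ odds (m + 1)).card : ℝ)
    have hβm : 0 < β * 2 ^ m := by positivity
    have hab : 2 ^ m * β ^ 2 ≤ a * b / 2 ^ m := by
      rw [le_div_iff₀ hM]
      have := mul_le_mul a1 a2 hβm.le (hβm.le.trans a1)
      nlinarith
    have hpos : 0 < (2 ^ m - a - b) * √m := by
      refine lt_of_lt_of_le ?_ (hab.trans hiso); positivity
    have hpos' : 0 < 2 ^ m - a - b := pos_of_mul_pos_left hpos (Real.sqrt_nonneg _)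
    have hfin : M' ≤ 2 ^ m - a - b := by
      rw [hM', div_le_iff₀ (by linarith)]
      refine (hab.trans hiso).trans ?_
      gcongr
      linarith
    linarith

theorem vb_total {m : ℕ} (β : ℝ) (hβ : 0 < β) (ψ : ℕ) (hψ0 : 0 < ψ)
    (hψ : 20 * ψ ≤ m + 1) :
    ({I : Finset (V (m + 1)) | (∀ x ∈ I, ∀ y ∈ I, ¬ (Q (m + 1)).Adj x y) ∧
          β * 2 ^ (m + 1) < (min (I ∩ evens (m + 1)).card (I ∩ odds (m + 1)).card : ℝ)}.ncard : ℝ) ≤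
      Real.exp ((2 ^ (m + 1) / ψ : ℝ) * (Real.log ψ + 1)) *
      2 ^ ((2 : ℝ) ^ m - 7 / 100 * (2 ^ m * β ^ 2 / √((m : ℝ) + 1))) := by
  classical
  set G := Q (m + 1) with hG
  set NT : Finset (V (m + 1)) → Finset (V (m + 1)) :=
    fun T => T.biUnion (fun v => G.neighborFinset v) with hNT
  set Cn : Finset (V (m + 1)) → Finset (V (m + 1)) := fun T =>
    Finset.univ.filter (fun v => v ∉ NT T ∧ (G.neighborFinset v \ NT T).card < ψ) with hCn
  set good : Finset (V (m + 1)) → Prop := fun I => (∀ x ∈ I, ∀ y ∈ I, ¬ G.Adj x y) ∧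
    β * 2 ^ (m + 1) < (min (I ∩ evens (m + 1)).card (I ∩ odds (m + 1)).card : ℝ) with hgood
  set Fs := Finset.univ.filter
    (fun T : Finset (V (m + 1)) => T.card * ψ ≤ Fintype.card (V (m + 1))) with hFs
  have hcov : {I : Finset (V (m + 1)) | good I} ⊆
      ((Fs.biUnion (fun T => (Cn T).powerset.filter good) : Finset (Finset (V (m + 1)))) :
        Set (Finset (V (m + 1)))) := by
    intro I hI
    have hI' : good I := hI
    obtain ⟨T, hTI, hTc, hTd⟩ := vb_fingerprint G ψ hψ0 I
    rw [Finset.mem_coe, Finset.mem_biUnion]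
    refine ⟨T, by rw [hFs, Finset.mem_filter]; exact ⟨Finset.mem_univ _, hTc⟩, ?_⟩
    rw [Finset.mem_filter, Finset.mem_powerset]
    refine ⟨?_, hI'⟩
    intro v hv
    simp only [hCn, Finset.mem_filter, Finset.mem_univ, true_and]
    refine ⟨?_, hTd v hv⟩
    simp only [hNT, Finset.mem_biUnion, SimpleGraph.mem_neighborFinset, not_exists, not_and]
    intro t ht
    exact hI'.1 t (hTI ht) v hv
  have hone : ∀ T ∈ Fs, (((Cn T).powerset.filter good).card : ℝ) ≤
      2 ^ ((2 : ℝ) ^ m - 7 / 100 * (2 ^ m * β ^ 2 / √((m : ℝ) + 1))) := by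
    intro T _
    by_cases hne : ((Cn T).powerset.filter good).Nonempty
    · obtain ⟨I, hI⟩ := hne
      rw [Finset.mem_filter, Finset.mem_powerset] at hI
      obtain ⟨hIC, _, hIb⟩ := hI
      rw [lt_min_iff] at hIb
      refine le_trans ?_ (vb_container β hβ ψ hψ (Cn T) ?_ ?_ ?_)
      · have : ((Cn T).powerset.filter good) ⊆
            (Cn T).powerset.filter (fun I => ∀ x ∈ I, ∀ y ∈ I, ¬ (Q (m + 1)).Adj x y) := by
          intro J hJ
          rw [Finset.mem_filter] at hJ ⊢
          exact ⟨hJ.1, hJ.2.1⟩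
        exact_mod_cast Finset.card_le_card this
      · intro x hx
        have hx2 := (Finset.mem_filter.1 hx).2.2
        refine le_trans (Finset.card_le_card ?_) hx2.le
        intro z hz
        rw [Finset.mem_inter] at hz
        exact Finset.mem_sdiff.2 ⟨hz.1, (Finset.mem_filter.1 hz.2).2.1⟩
      · refine hIb.1.trans_le ?_
        exact_mod_cast Finset.card_le_card (Finset.inter_subset_inter_right hIC)
      · refine hIb.2.trans_le ?_
        exact_mod_cast Finset.card_le_card (Finset.inter_subset_inter_right hIC)
    · rw [Finset.not_nonempty_iff_eq_empty.1 hne]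
      simp only [Finset.card_empty, Nat.cast_zero]
      positivity
  have h1 : {I : Finset (V (m + 1)) | good I}.ncard ≤
      ∑ T ∈ Fs, ((Cn T).powerset.filter good).card := by
    refine (Set.ncard_le_ncard hcov (Finset.finite_toSet _)).trans ?_
    rw [Set.ncard_coe_finset]
    exact Finset.card_biUnion_le
  have h2 : ({I : Finset (V (m + 1)) | good I}.ncard : ℝ) ≤
      ∑ T ∈ Fs, (((Cn T).powerset.filter good).card : ℝ) := by exact_mod_cast h1
  refine h2.trans ((Finset.sum_le_sum hone).trans ?_)
  rw [Finset.sum_const, nsmul_eq_mul]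
  have h3 := vb_numT (α := V (m + 1)) ψ hψ0
  have h4 : ((Fintype.card (V (m + 1)) : ℕ) : ℝ) = 2 ^ (m + 1) := by
    rw [vb_card_V]; push_cast; ring
  rw [h4] at h3
  gcongr

theorem vb_asymp (ε : ℝ) (hε : 0 < ε) :
    ∃ n₀ : ℕ, ∀ n : ℕ, n₀ ≤ n → 40 * Real.log n + 44 ≤ ε * √n := by
  have h1 : (fun x : ℝ => 40 * Real.log x + 44) =o[Filter.atTop] (fun x : ℝ => x ^ (1 / 2 : ℝ)) := by
    refine Asymptotics.IsLittleO.add ?_ ?_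
    · exact (isLittleO_log_rpow_atTop (by norm_num)).const_mul_left _
    · refine Asymptotics.isLittleO_const_left.2 (Or.inr ?_)
      exact tendsto_norm_atTop_atTop.comp (tendsto_rpow_atTop (by norm_num))
  have h2 := (h1.def hε).natCast_atTop
  obtain ⟨n₀, hn⟩ := Filter.eventually_atTop.1 h2
  refine ⟨n₀, fun n h => ?_⟩
  have := hn n h
  rw [Real.norm_eq_abs, Real.norm_eq_abs, ← Real.sqrt_eq_rpow, abs_of_nonneg (Real.sqrt_nonneg _)] at this
  exact (le_abs_self _).trans this

/-- For every `β > 0` there are `c > 0` and `n₀` such that for `n ≥ n₀` the number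
of independent sets `I` in `Qₙ` with `min{|I ∩ ℰ|, |I ∩ 𝒪|} > β·2ⁿ` is at most
`2^(2^(n−1) − 2^(n/2 − c·√n))`. -/
theorem count_very_balanced_indep_sets (β : ℝ) (hβ : 0 < β) :
    ∃ c : ℝ, 0 < c ∧ ∃ n₀ : ℕ, ∀ n : ℕ, n₀ ≤ n →
      ({I : Finset (V n) | (∀ x ∈ I, ∀ y ∈ I, ¬ (Q n).Adj x y) ∧
          β * 2 ^ n < (min (I ∩ evens n).card (I ∩ odds n).card : ℝ)}.ncard : ℝ) ≤
        2 ^ (((2 ^ (n - 1) : ℕ) : ℝ) - (2 : ℝ) ^ ((n : ℝ) / 2 - c * Real.sqrt n)) := by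
  obtain ⟨n₁, hn₁⟩ := vb_asymp (24 / 1000 * β ^ 2) (by positivity)
  refine ⟨1, one_pos, max n₁ 40, ?_⟩
  intro n hn
  have hn1 : n₁ ≤ n := (le_max_left _ _).trans hn
  have hn40 : 40 ≤ n := (le_max_right _ _).trans hn
  obtain ⟨m, rfl⟩ : ∃ m, n = m + 1 := ⟨n - 1, by omega⟩
  obtain ⟨ψ, hψ⟩ : ∃ ψ, ψ = (m + 1) / 20 := ⟨_, rfl⟩
  have hψ0 : 0 < ψ := by omega
  have hψ1 : 20 * ψ ≤ m + 1 := by omega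
  have hψ2 : m + 1 ≤ 40 * ψ := by omega
  refine (vb_total β hβ ψ hψ0 hψ1).trans ?_
  have hasy := hn₁ (m + 1) hn1
  rw [Nat.add_sub_cancel]
  set x : ℝ := ((m + 1 : ℕ) : ℝ) with hx
  have hx' : (m : ℝ) + 1 = x := by rw [hx]; push_cast; ring
  rw [hx']
  have hx40 : (40 : ℝ) ≤ x := by rw [hx]; exact_mod_cast hn40
  have hx0 : 0 < x := by linarith
  have hψr : (0 : ℝ) < ψ := by exact_mod_cast hψ0
  have hψr2 : x ≤ 40 * ψ := by rw [hx]; exact_mod_cast hψ2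
  have hψr1 : (ψ : ℝ) ≤ x := by
    have : ψ ≤ m + 1 := by omega
    rw [hx]; exact_mod_cast this
  have hlog2 : 0 < Real.log 2 := Real.log_pos (by norm_num)
  have hl1 : (0.69 : ℝ) < Real.log 2 := by have := Real.log_two_gt_d9; linarith
  have hl2 : Real.log 2 < 0.7 := by have := Real.log_two_lt_d9; linarith
  have hsx : 0 < √x := Real.sqrt_pos.2 hx0
  have hsxx : √x * √x = x := Real.mul_self_sqrt hx0.le
  have hlogx : 0 ≤ Real.log x := Real.log_nonneg (by linarith)
  have hlogψ : Real.log ψ ≤ Real.log x := Real.log_le_log hψr hψr1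
  have hM : (0 : ℝ) < 2 ^ m := by positivity
  -- first term
  have t1 : (2 ^ (m + 1) / ψ : ℝ) * (Real.log ψ + 1) ≤ 2 ^ m * (2 * (40 * (Real.log x + 1) / x)) := by
    have : (1 : ℝ) / ψ ≤ 40 / x := by
      rw [div_le_div_iff₀ hψr hx0]; linarith
    have h2 : (1 / ψ : ℝ) * (Real.log ψ + 1) ≤ 40 / x * (Real.log x + 1) := by
      refine (mul_le_mul_of_nonneg_left (by linarith : Real.log ψ + 1 ≤ Real.log x + 1) (by positivity)).trans ?_
      exact mul_le_mul_of_nonneg_right this (by linarith)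
    calc (2 ^ (m + 1) / ψ : ℝ) * (Real.log ψ + 1)
        = 2 ^ m * (2 * ((1 / ψ : ℝ) * (Real.log ψ + 1))) := by rw [pow_succ]; ring
      _ ≤ 2 ^ m * (2 * (40 / x * (Real.log x + 1))) := by gcongr
      _ = _ := by ring
  -- second term
  have t2 : (2 : ℝ) ^ (x / 2 - 1 * √x) ≤ 2 ^ m * (2 * (4 / x)) := by
    have h1 : (2 : ℝ) ^ (x / 2 - 1 * √x) ≤ 2 ^ (x / 2) :=
      Real.rpow_le_rpow_of_exponent_le (by norm_num) (by linarith)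
    have h2 : (2 : ℝ) ^ (x / 2) * 2 ^ (x / 2) = 2 ^ m * 2 := by
      rw [← Real.rpow_add (by norm_num), add_halves, hx, Real.rpow_natCast, pow_succ]
    have h3 : x / 4 ≤ (2 : ℝ) ^ (x / 2) := by
      rw [Real.rpow_def_of_pos (by norm_num)]
      have := Real.add_one_le_exp (Real.log 2 * (x / 2))
      nlinarith
    refine h1.trans ?_
    set p := (2 : ℝ) ^ (x / 2)
    have hp : 0 < p := by positivity
    have : p * (x / 4) ≤ 2 ^ m * 2 := by rw [← h2]; exact mul_le_mul_of_nonneg_left h3 hp.le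
    have e : (2 : ℝ) ^ m * (2 * (4 / x)) = 2 ^ m * 2 / (x / 4) := by field_simp
    rw [e, le_div_iff₀ (by positivity)]
    exact this
  have t3 : 2 * (40 * (Real.log x + 1) / x) + 2 * (4 / x) * Real.log 2 ≤
      7 / 100 * (β ^ 2 / √x) * Real.log 2 := by
    have h1 : 2 * (40 * (Real.log x + 1) / x) + 2 * (4 / x) * Real.log 2 ≤
        2 * ((40 * Real.log x + 44) / x) := by
      have : 4 / x * Real.log 2 ≤ 4 / x * 1 := by gcongr; linarith
      have e : 2 * ((40 * Real.log x + 44) / x) = 2 * (40 * (Real.log x + 1) / x) + 2 * (4 / x * 1) := by ring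
      rw [e]; linarith
    have h2 : (40 * Real.log x + 44) / x ≤ 24 / 1000 * (β ^ 2 / √x) := by
      rw [div_le_iff₀ hx0]
      refine hasy.trans (le_of_eq ?_)
      have : β ^ 2 / √x * x = β ^ 2 * √x := by
        field_simp
        nlinarith
      rw [mul_assoc (24 / 1000 : ℝ) (β ^ 2 / √x), this]; ring
    have hq : 0 ≤ β ^ 2 / √x := by positivity
    nlinarith
  have t4 := mul_le_mul_of_nonneg_left t3 hM.le
  rw [Real.rpow_def_of_pos (by norm_num : (0 : ℝ) < 2), ← Real.exp_add,
    Real.rpow_def_of_pos (by norm_num : (0 : ℝ) < 2) (_ - _)]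
  apply Real.exp_le_exp.2
  push_cast
  have t5 := mul_le_mul_of_nonneg_right t2 hlog2.le
  have e5 : (2 : ℝ) ^ m * β ^ 2 / √x = 2 ^ m * (β ^ 2 / √x) := by ring
  rw [e5]
  nlinarith
end
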